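/- arXiv:1308.5074 — 3 statements merged into one kernel-verified Lean document; each statement's English description precedes it below -/
import Mathlib

section
/- Let k > n be positive integers, let p > k, and let Ω ⊆ ℝ^k be open. Let f : Ω → ℝ^{2n+1} be continuous, locally integrable, and admit a weak derivative Df : Ω → L(ℝ^k, ℝ^{2n+1}) with |Df| locally p-integrable (i.e. for every smooth compactly supported φ : Ω → ℝ and every i ∈ {1,…,k}, ∫_Ω f(x) ∂φ/∂x_i(x) dx = −∫_Ω Df(x)(e_i) φ(x) dx, and ∫_C |Df|^p < ∞ for every compact C ⊆ Ω). Assume that for Lebesgue-almost every x ∈ Ω the image of Df(x) is contained in ker α(f(x)). Then f(Ω) has k-dimensional Hausdorff measure zero with respect to d_K. -/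
open MeasureTheory Metric Set
open scoped ENNReal NNReal

noncomputable section

abbrev Heis (n : ℕ) := EuclideanSpace ℝ (Fin (2*n+1))
abbrev Horiz (n : ℕ) := EuclideanSpace ℝ (Fin (2*n))

def xIdx (n : ℕ) (j : Fin n) : Fin (2*n+1) := ⟨2*j.1, by have := j.2; omega⟩
def yIdx (n : ℕ) (j : Fin n) : Fin (2*n+1) := ⟨2*j.1+1, by have := j.2; omega⟩
def tIdx (n : ℕ) : Fin (2*n+1) := ⟨2*n, by omega⟩
def xIdx2 (n : ℕ) (j : Fin n) : Fin (2*n) := ⟨2*j.1, by have := j.2; omega⟩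
def yIdx2 (n : ℕ) (j : Fin n) : Fin (2*n) := ⟨2*j.1+1, by have := j.2; omega⟩

/-- The Korányi distance on the Heisenberg group `ℍ^n = ℝ^{2n+1}`. -/
def dK (n : ℕ) (p q : Heis n) : ℝ :=
  ((∑ j : Fin n, ((p (xIdx n j) - q (xIdx n j))^2 + (p (yIdx n j) - q (yIdx n j))^2))^2
    + (p (tIdx n) - q (tIdx n)
        + 2 * ∑ j : Fin n, (q (xIdx n j) * p (yIdx n j) - p (xIdx n j) * q (yIdx n j)))^2)
    ^ ((1:ℝ)/4)

/-- The kernel of the standard contact form `α = dt + 2∑ (x_j dy_j − y_j dx_j)` at `p`. -/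
def kerAlpha (n : ℕ) (p : Heis n) : Set (Heis n) :=
  {v | v (tIdx n)
    + 2 * ∑ j : Fin n, (p (xIdx n j) * v (yIdx n j) - p (yIdx n j) * v (xIdx n j)) = 0}

/-- The standard symplectic form on `ℝ^{2n}`. -/
def omegaF (n : ℕ) (v w : Horiz n) : ℝ :=
  ∑ j : Fin n, (v (xIdx2 n j) * w (yIdx2 n j) - v (yIdx2 n j) * w (xIdx2 n j))

/-- The projection `π : ℝ^{2n+1} → ℝ^{2n}` forgetting the `t`-coordinate. -/
def piH (n : ℕ) (p : Heis n) : Horiz n :=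
  (EuclideanSpace.equiv (Fin (2*n)) ℝ).symm (fun i => p ⟨i.1, by have := i.2; omega⟩)

/-- Diameter of a set with respect to the Korányi distance, as an extended real. -/
def kDiam (n : ℕ) (U : Set (Heis n)) : ℝ≥0∞ :=
  ⨆ p ∈ U, ⨆ q ∈ U, ENNReal.ofReal (dK n p q)

/-- `S` is null for the `k`-dimensional Hausdorff measure built from the Korányi
distance: its `k`-dimensional Hausdorff content is arbitrarily small. -/
def IsHausdorffNullK (n k : ℕ) (S : Set (Heis n)) : Prop :=
  ∀ ε : ℝ≥0∞, 0 < ε → ∃ U : ℕ → Set (Heis n),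
    (S ⊆ ⋃ i, U i) ∧ ∑' i, (kDiam n (U i)) ^ k < ε

/-- `f` is Lipschitz on `E` as a map into `(ℝ^{2n+1}, d_K)`. -/
def LipschitzOnK (n : ℕ) {k : ℕ} (f : EuclideanSpace ℝ (Fin k) → Heis n)
    (E : Set (EuclideanSpace ℝ (Fin k))) : Prop :=
  ∃ L : ℝ, 0 ≤ L ∧ ∀ x ∈ E, ∀ y ∈ E, dK n (f x) (f y) ≤ L * dist x y

end
/-- `Df` is the weak (distributional) derivative of `f` on `Ω`: integration by parts
against smooth compactly supported test functions holds in every coordinate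
direction. -/
def IsWeakFDerivOn {k m : ℕ} (Ω : Set (EuclideanSpace ℝ (Fin k)))
    (f : EuclideanSpace ℝ (Fin k) → EuclideanSpace ℝ (Fin m))
    (Df : EuclideanSpace ℝ (Fin k) → (EuclideanSpace ℝ (Fin k) →L[ℝ] EuclideanSpace ℝ (Fin m))) :
    Prop :=
  ∀ φ : EuclideanSpace ℝ (Fin k) → ℝ, ContDiff ℝ (⊤ : ℕ∞) φ → HasCompactSupport φ →
    tsupport φ ⊆ Ω → ∀ i : Fin k,
      ∫ x in Ω, fderiv ℝ φ x (EuclideanSpace.single i (1:ℝ)) • f x =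
        - ∫ x in Ω, φ x • Df x (EuclideanSpace.single i (1:ℝ))

/-! Since `p > k`, Morrey's inequality bounds the oscillation of a `W^{1,p}` function on a ball of
radius `r` by `r` times the `L^p` mean of its derivative. Hence `f` is differentiable at every
`L^p`-Lebesgue point `x₀` of `Df`, with derivative `L = Df x₀`.

The weak contact equation bootstraps this in the vertical direction. To first order in `L^p` mean,
the derivative of `y ↦ α_{f(x₀)} (f y - f x₀)` is the linear map `y ↦ -2 L*ω (y - x₀, ·)`. As an
approximate Hessian, `L*ω` is symmetric; being antisymmetric, it vanishes. Applying Morrey's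
inequality once more gives `α_{f(x₀)} (f y - f x₀) = o(r²)`. Moreover `π ∘ L` has isotropic image,
hence rank at most `n`, and since `k > n` it kills a direction. A ball of radius `r` about `x₀` can
therefore be cut along that direction into about `N ^ (k - 1)` pieces whose images have Korányi
diameter `≲ r / N`, for every `N` once `r` is small, so its image has content `≲ r ^ k / N`. By the
Besicovitch covering theorem the images of the Lebesgue points have content zero. On the remaining
null set the crude bound `content (f '' B) ≲ ∫_B (1 + |Df|^p)` suffices. -/

open Filter Module
open scoped Topology ProbabilityTheory

section ContractedKernel

variable {E : Type*} [NormedAddCommGroup E] [NormedSpace ℝ E] {ψ : E → ℝ} {x y c : E} {r t : ℝ}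

/-- The kernel `ψ` contracted towards `x` by the factor `t`, normalized so as to keep its
integral. -/
noncomputable def contractKernel (ψ : E → ℝ) (x : E) (t : ℝ) (y : E) : ℝ :=
  t ^ finrank ℝ E * ψ (x + t • (y - x))

lemma contractKernel_one : contractKernel ψ x 1 = ψ := by
  ext y; simp [contractKernel]

lemma contractKernel_nonneg (hψ : ∀ z, 0 ≤ ψ z) (ht : 0 ≤ t) (y : E) :
    0 ≤ contractKernel ψ x t y :=
  mul_nonneg (pow_nonneg ht _) (hψ _)

lemma contDiff_contractKernel (hψ : ContDiff ℝ (⊤ : ℕ∞) ψ) (x : E) (t : ℝ) :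
    ContDiff ℝ (⊤ : ℕ∞) (contractKernel ψ x t) :=
  contDiff_const.mul (hψ.comp (by fun_prop))

lemma norm_sub_le_of_contractKernel_ne_zero (hψ : Function.support ψ ⊆ closedBall x r)
    (ht : 0 < t) (hy : contractKernel ψ x t y ≠ 0) : ‖y - x‖ ≤ r / t := by
  have hmem := hψ (right_ne_zero_of_mul hy)
  rw [mem_closedBall_iff_norm, add_sub_cancel_left, norm_smul, Real.norm_of_nonneg ht.le] at hmem
  rwa [le_div_iff₀' ht]

lemma enorm_contractKernel_smul_apply_sub_le {F : Type*} [NormedAddCommGroup F]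
    [NormedSpace ℝ F] (L : E →L[ℝ] F) (hψ0 : ∀ y, 0 ≤ ψ y)
    (hsupp : Function.support ψ ⊆ closedBall x r) (ht : 0 < t) :
    ‖contractKernel ψ x t y • L (y - x)‖ₑ ≤
      ENNReal.ofReal (r / t) * (ENNReal.ofReal (contractKernel ψ x t y) * ‖L‖ₑ) := by
  by_cases hy : contractKernel ψ x t y = 0
  · simp [hy]
  rw [enorm_smul, Real.enorm_of_nonneg (contractKernel_nonneg hψ0 ht.le y), mul_left_comm]
  gcongr
  refine (L.le_opENorm _).trans ?_
  rw [mul_comm, ← ofReal_norm (y - x)]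
  gcongr
  exact norm_sub_le_of_contractKernel_ne_zero hsupp ht hy

lemma support_contractKernel_subset (hψ : Function.support ψ ⊆ closedBall c r)
    (hx : x ∈ closedBall c r) (ht : 1 ≤ t) :
    Function.support (contractKernel ψ x t) ⊆ closedBall c r := by
  intro y hy
  have hconv := (convex_closedBall c r).add_smul_sub_mem hx (hψ (right_ne_zero_of_mul hy))
    (t := t⁻¹) ⟨by positivity, inv_le_one_of_one_le₀ ht⟩
  rwa [add_sub_cancel_left, inv_smul_smul₀ (by positivity), add_sub_cancel] at hconv

lemma tsupport_contractKernel_subset (hψ : Function.support ψ ⊆ closedBall c r)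
    (hx : x ∈ closedBall c r) (ht : 1 ≤ t) : tsupport (contractKernel ψ x t) ⊆ closedBall c r :=
  closure_minimal (support_contractKernel_subset hψ hx ht) isClosed_closedBall

lemma fderiv_contractKernel (hψ : Differentiable ℝ ψ) (x y : E) (t : ℝ) :
    fderiv ℝ (contractKernel ψ x t) y =
      t ^ (finrank ℝ E + 1) • fderiv ℝ ψ (x + t • (y - x)) := by
  have haff : HasFDerivAt (fun y => x + t • (y - x)) (t • ContinuousLinearMap.id ℝ E) y :=
    (((hasFDerivAt_id y).sub_const x).const_smul t).const_add x
  have hcomp := ((hψ _).hasFDerivAt.comp y haff).const_mul (t ^ finrank ℝ E)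
  refine hcomp.fderiv.trans ?_
  ext v
  simp [pow_succ, mul_assoc]

lemma hasDerivAt_contractKernel (hψ : Differentiable ℝ ψ) (ht : t ≠ 0) :
    HasDerivAt (fun s => contractKernel ψ x s y)
      (t⁻¹ * (finrank ℝ E * contractKernel ψ x t y +
        fderiv ℝ (contractKernel ψ x t) y (y - x))) t := by
  have haff : HasDerivAt (fun s : ℝ => x + s • (y - x)) (y - x) t := by
    simpa using ((hasDerivAt_id t).smul_const (y - x)).const_add x
  have hprod := (hasDerivAt_pow (finrank ℝ E) t).mul ((hψ _).hasFDerivAt.comp_hasDerivAt t haff)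
  refine hprod.congr_deriv ?_
  rw [fderiv_contractKernel hψ]
  rcases Nat.eq_zero_or_pos (finrank ℝ E) with hd | hd
  · simp [hd, ht]
  · obtain ⟨m, hm⟩ := Nat.exists_eq_add_of_lt hd
    simp only [contractKernel, hm, smul_apply, smul_eq_mul, zero_add,
      Nat.add_sub_cancel, Function.comp_apply]
    field_simp
    ring

lemma integral_contractKernel [FiniteDimensional ℝ E] [MeasurableSpace E] [BorelSpace E]
    (μ : Measure E) [μ.IsAddHaarMeasure] (ψ : E → ℝ) (x : E) (ht : 0 < t) :
    ∫ y, contractKernel ψ x t y ∂μ = ∫ y, ψ y ∂μ := by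
  unfold contractKernel
  rw [integral_const_mul, integral_sub_right_eq_self (fun y => ψ (x + t • y)) x,
    Measure.integral_comp_smul μ (fun y => ψ (x + y)) t, integral_add_left_eq_self ψ x,
    abs_of_pos (by positivity), smul_eq_mul, mul_inv_cancel_left₀ (by positivity)]

end ContractedKernel

section ParametricIntegral

variable {α F : Type*} [TopologicalSpace α] [T2Space α] [MeasurableSpace α] [BorelSpace α]
  {μ : Measure α} [NormedAddCommGroup F] [NormedSpace ℝ F]
  {Q : Set α}

lemma hasDerivAt_setIntegral_smul [IsFiniteMeasureOnCompacts μ] (hQ : IsCompact Q)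
    {K K' : ℝ → α → ℝ} {u : α → F} (hu : ContinuousOn u Q) {U : Set ℝ} (hU : IsOpen U)
    (hK : ∀ t ∈ U, ContinuousOn (K t) Q)
    (hK' : ContinuousOn (Function.uncurry K') (U ×ˢ Q))
    (hderiv : ∀ t ∈ U, ∀ y ∈ Q, HasDerivAt (fun t => K t y) (K' t y) t) {t₀ : ℝ} (ht₀ : t₀ ∈ U) :
    HasDerivAt (fun t => ∫ y in Q, K t y • u y ∂μ) (∫ y in Q, K' t₀ y • u y ∂μ) t₀ := by
  obtain ⟨J, hJ, hJU, hJc⟩ := local_compact_nhds (hU.mem_nhds ht₀)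
  obtain ⟨B, hB⟩ := (hJc.prod hQ).exists_bound_of_continuousOn (hK'.mono (prod_mono_left hJU))
  obtain ⟨D, hD⟩ := hQ.exists_bound_of_continuousOn hu
  have hint : ∀ {g : α → ℝ}, ContinuousOn g Q → IntegrableOn (fun y => g y • u y) Q μ :=
    fun hg => (hg.smul hu).integrableOn_compact hQ
  have hK't₀ : ContinuousOn (K' t₀) Q :=
    hK'.comp (by fun_prop : ContinuousOn (fun y => (t₀, y)) Q) fun y hy => ⟨ht₀, hy⟩
  refine (hasDerivAt_integral_of_dominated_loc_of_deriv_le (F := fun t y => K t y • u y)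
    (F' := fun t y => K' t y • u y) (bound := fun _ => B * D) hJ ?_ (hint (hK t₀ ht₀))
    (hint hK't₀).aestronglyMeasurable ?_ ?_ ?_).2
  · filter_upwards [hU.mem_nhds ht₀] with t ht using (hint (hK t ht)).aestronglyMeasurable
  · filter_upwards [ae_restrict_mem hQ.measurableSet] with y hy t ht
    rw [norm_smul]
    gcongr
    · exact (norm_nonneg _).trans (hB (t, y) ⟨ht, hy⟩)
    · exact hB (t, y) ⟨ht, hy⟩
    · exact hD y hy
  · exact integrableOn_const hQ.measure_lt_top.ne
  · filter_upwards [ae_restrict_mem hQ.measurableSet] with y hy t ht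
    exact (hderiv t (hJU ht) y hy).smul_const (u y)

lemma integrable_smul_of_support_subset (hQ : IsCompact Q) {g : α → ℝ} {u : α → F}
    (hg : Continuous g) (hu : IntegrableOn u Q μ) (hs : Function.support g ⊆ Q) :
    Integrable (fun y => g y • u y) μ :=
  (integrableOn_iff_integrable_of_support_subset
    ((Function.support_smul_subset_left g u).trans hs)).1 (hu.continuousOn_smul hg.continuousOn hQ)

end ParametricIntegral

section JensenMean

variable {α F : Type*} [MeasurableSpace α] [NormedAddCommGroup F] {κ ν : Measure α} {p M : ℝ≥0∞}

lemma lintegral_enorm_le_rpow_mul_eLpNorm_of_le_smul [IsProbabilityMeasure κ] (hκ : κ ≤ M • ν)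
    {G : α → F} (hG : AEStronglyMeasurable G ν) (hp : 1 ≤ p) :
    ∫⁻ y, ‖G y‖ₑ ∂κ ≤ M ^ (1 / p).toReal * eLpNorm G p ν :=
  calc ∫⁻ y, ‖G y‖ₑ ∂κ = eLpNorm G 1 κ := eLpNorm_one_eq_lintegral_enorm.symm
    _ ≤ eLpNorm G p κ :=
      eLpNorm_le_eLpNorm_of_exponent_le hp ((hG.smul_measure M).mono_measure hκ)
    _ ≤ eLpNorm G p (M • ν) := eLpNorm_mono_measure G hκ
    _ ≤ M ^ (1 / p).toReal * eLpNorm G p ν := eLpNorm_smul_measure_le M G p ν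

end JensenMean

section TestFunction

variable {E : Type*} [NormedAddCommGroup E] [NormedSpace ℝ E] {φ : E → ℝ}

lemma support_fderiv_apply_subset_tsupport (φ : E → ℝ) (v : E) :
    Function.support (fun x => fderiv ℝ φ x v) ⊆ tsupport φ :=
  fun x hx => support_fderiv_subset ℝ fun h => hx (by simp [h])

lemma continuous_fderiv_apply (hφ : ContDiff ℝ (⊤ : ℕ∞) φ) (v : E) :
    Continuous fun x => fderiv ℝ φ x v :=
  (hφ.continuous_fderiv (by simp)).clm_apply continuous_const

lemma fderiv_coord_sub_mul_apply (hφ : ContDiff ℝ (⊤ : ℕ∞) φ) (c : E →L[ℝ] ℝ) (x y v : E) :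
    fderiv ℝ (fun y => c (y - x) * φ y) y v = c (y - x) * fderiv ℝ φ y v + c v * φ y := by
  have hc : HasFDerivAt (fun y => c (y - x)) c y :=
    c.hasFDerivAt.comp y ((hasFDerivAt_id y).sub_const x)
  rw [(hc.fun_mul (hφ.differentiable (by simp) y).hasFDerivAt).fderiv]
  simp [mul_comm]

end TestFunction

section WeakDerivative

variable {E : Type*} [NormedAddCommGroup E] [NormedSpace ℝ E] [MeasurableSpace E]
  {F : Type*} [NormedAddCommGroup F] [NormedSpace ℝ F]
  {F' : Type*} [NormedAddCommGroup F'] [NormedSpace ℝ F']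
  {u : E → F} {G : E → E →L[ℝ] F} {s Q : Set E} {μ : Measure E} {p : ℝ≥0∞}

/-- `G` is a weak derivative of `u` on `s`: integration by parts holds for all test functions
supported in `s`. The integrals run over the whole space, the test functions cutting them down
to `s`. -/
def HasWeakFDerivOn (u : E → F) (G : E → E →L[ℝ] F) (s : Set E) (μ : Measure E) : Prop :=
  ∀ φ : E → ℝ, ContDiff ℝ (⊤ : ℕ∞) φ → HasCompactSupport φ → tsupport φ ⊆ s → ∀ v : E,
    ∫ x, fderiv ℝ φ x v • u x ∂μ = -∫ x, φ x • G x v ∂μ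

/-- `u` is a continuous representative of class `W^{1,p}` on `s`, with weak derivative `G`. -/
structure ContinuousSobolevOn (p : ℝ≥0∞) (u : E → F) (G : E → E →L[ℝ] F) (s : Set E)
    (μ : Measure E) : Prop where
  continuousOn : ContinuousOn u s
  memLp : MemLp G p (μ.restrict s)
  hasWeakFDerivOn : HasWeakFDerivOn u G s μ

lemma HasWeakFDerivOn.mono (h : HasWeakFDerivOn u G s μ) (hQ : Q ⊆ s) :
    HasWeakFDerivOn u G Q μ :=
  fun φ hφ hc hs => h φ hφ hc (hs.trans hQ)

lemma ContinuousSobolevOn.mono (h : ContinuousSobolevOn p u G s μ) (hQ : Q ⊆ s) :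
    ContinuousSobolevOn p u G Q μ :=
  ⟨h.continuousOn.mono hQ, h.memLp.mono_measure (Measure.restrict_mono_set μ hQ),
    h.hasWeakFDerivOn.mono hQ⟩

lemma ContinuousSobolevOn.integrableOn [IsFiniteMeasureOnCompacts μ]
    (h : ContinuousSobolevOn p u G s μ) (hp : 1 ≤ p) (hQ : IsCompact Q) (hQs : Q ⊆ s) :
    IntegrableOn G Q μ := by
  have : IsFiniteMeasure (μ.restrict Q) := ⟨by simpa using hQ.measure_lt_top⟩
  exact (h.mono hQs).memLp.integrable hp

variable [BorelSpace E] {φ : E → ℝ}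

lemma HasWeakFDerivOn.integral_radial [FiniteDimensional ℝ E] [IsFiniteMeasureOnCompacts μ]
    (h : HasWeakFDerivOn u G Q μ) (hQ : IsCompact Q)
    (hu : ContinuousOn u Q) (hG : IntegrableOn G Q μ) (hφ : ContDiff ℝ (⊤ : ℕ∞) φ)
    (hs : tsupport φ ⊆ Q) (x : E) :
    ∫ y, (finrank ℝ E * φ y + fderiv ℝ φ y (y - x)) • u y ∂μ =
      -∫ y, φ y • G y (y - x) ∂μ := by
  let b := finBasis ℝ E
  let c i : E →L[ℝ] ℝ := LinearMap.toContinuousLinearMap (b.coord i)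
  let X i y : ℝ := c i (y - x) * φ y
  have hX i : ContDiff ℝ (⊤ : ℕ∞) (X i) := ContDiff.mul (by fun_prop) hφ
  have hXs i : tsupport (X i) ⊆ Q :=
    (tsupport_mul_subset_right (f := fun y => c i (y - x))).trans hs
  have hrepr (v : E) : ∑ i, c i v • b i = v := b.sum_repr v
  have hdiv y : (finrank ℝ E * φ y + fderiv ℝ φ y (y - x)) • u y =
      ∑ i, fderiv ℝ (X i) y (b i) • u y := by
    have hD : fderiv ℝ φ y (y - x) = ∑ i, c i (y - x) * fderiv ℝ φ y (b i) := by
      conv_lhs => rw [← hrepr (y - x)]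
      simp [map_sum]
    have hcb i : c i (b i) = 1 := by simp [c]
    rw [← Finset.sum_smul, hD]
    simp only [X, fderiv_coord_sub_mul_apply hφ, hcb, one_mul, Finset.sum_add_distrib,
      Finset.sum_const, Finset.card_univ, Fintype.card_fin, nsmul_eq_mul, add_comm]
  have hfield y : φ y • G y (y - x) = ∑ i, X i y • G y (b i) := by
    conv_lhs => rw [← hrepr (y - x)]
    simp [X, map_sum, Finset.smul_sum, smul_smul, mul_comm]
  simp_rw [hdiv, hfield]
  rw [integral_finsetSum, integral_finsetSum, ← Finset.sum_neg_distrib]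
  · exact Finset.sum_congr rfl fun i _ =>
      h (X i) (hX i) (hQ.of_isClosed_subset (isClosed_tsupport _) (hXs i)) (hXs i) (b i)
  · exact fun i _ => integrable_smul_of_support_subset hQ (hX i).continuous
      (hG.apply_continuousLinearMap (b i)) ((subset_tsupport _).trans (hXs i))
  · exact fun i _ => integrable_smul_of_support_subset hQ
      (continuous_fderiv_apply (hX i) (b i)) (hu.integrableOn_compact hQ)
      ((support_fderiv_apply_subset_tsupport _ _).trans (hXs i))

lemma hasWeakFDerivOn_of_contDiff [FiniteDimensional ℝ E] [μ.IsAddHaarMeasure]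
    (hu : ContDiff ℝ 1 u) : HasWeakFDerivOn u (fderiv ℝ u) s μ := by
  intro φ hφ hc _ v
  rw [integral_smul_fderiv_eq_neg_fderiv_smul_of_integrable
    (((continuous_fderiv_apply hφ v).smul hu.continuous).integrable_of_hasCompactSupport
      (hc.fderiv_apply ℝ v).smul_right)
    ((hφ.continuous.smul ((hu.continuous_fderiv (by simp)).clm_apply
      continuous_const)).integrable_of_hasCompactSupport hc.smul_right)
    ((hφ.continuous.smul hu.continuous).integrable_of_hasCompactSupport hc.smul_right)
    (fun x _ => hφ.differentiable (by simp) x) (fun x _ => hu.differentiable (by simp) x), neg_neg]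

lemma integrable_fderiv_apply_smul [IsFiniteMeasureOnCompacts μ] (hu : ContinuousOn u s)
    (hφ : ContDiff ℝ (⊤ : ℕ∞) φ) (hc : HasCompactSupport φ) (hs : tsupport φ ⊆ s) (v : E) :
    Integrable (fun x => fderiv ℝ φ x v • u x) μ :=
  integrable_smul_of_support_subset hc (continuous_fderiv_apply hφ v)
    ((hu.mono hs).integrableOn_compact hc) (support_fderiv_apply_subset_tsupport φ v)

namespace ContinuousSobolevOn

lemma integrable_smul_apply [IsFiniteMeasureOnCompacts μ] (h : ContinuousSobolevOn p u G s μ)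
    (hp : 1 ≤ p) (hφ : Continuous φ) (hc : HasCompactSupport φ) (hs : tsupport φ ⊆ s) (v : E) :
    Integrable (fun x => φ x • G x v) μ :=
  integrable_smul_of_support_subset hc hφ
    ((h.integrableOn hp hc hs).apply_continuousLinearMap v) (subset_tsupport φ)

lemma clm_comp [IsFiniteMeasureOnCompacts μ] [CompleteSpace F] [CompleteSpace F']
    (h : ContinuousSobolevOn p u G s μ) (hp : 1 ≤ p) (ℓ : F →L[ℝ] F') :
    ContinuousSobolevOn p (fun x => ℓ (u x)) (fun x => ℓ.comp (G x)) s μ where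
  continuousOn := ℓ.continuous.comp_continuousOn h.continuousOn
  memLp := (ContinuousLinearMap.compL ℝ E F F' ℓ).comp_memLp' h.memLp
  hasWeakFDerivOn φ hφ hc hs v := by
    simp only [← ℓ.map_smul, ContinuousLinearMap.comp_apply]
    rw [ℓ.integral_comp_comm (integrable_fderiv_apply_smul h.continuousOn hφ hc hs v),
      ℓ.integral_comp_comm (h.integrable_smul_apply hp hφ.continuous hc hs v),
      h.hasWeakFDerivOn φ hφ hc hs v, map_neg]

lemma sub_clm [FiniteDimensional ℝ E] [μ.IsAddHaarMeasure] (h : ContinuousSobolevOn p u G s μ)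
    (hp : 1 ≤ p) (hs : μ s ≠ ∞) (M : E →L[ℝ] F) :
    ContinuousSobolevOn p (fun x => u x - M x) (fun x => G x - M) s μ where
  continuousOn := h.continuousOn.sub M.continuous.continuousOn
  memLp := by
    have : IsFiniteMeasure (μ.restrict s) := ⟨by simpa using hs.lt_top⟩
    exact h.memLp.sub (memLp_const M)
  hasWeakFDerivOn φ hφ hc hφs v := by
    have hM : Integrable (fun x => fderiv ℝ φ x v • M x) μ :=
      ((continuous_fderiv_apply hφ v).smul M.continuous).integrable_of_hasCompactSupport
        (hc.fderiv_apply ℝ v).smul_right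
    have hM' : Integrable (fun x => φ x • M v) μ :=
      (hφ.continuous.integrable_of_hasCompactSupport hc).smul_const (M v)
    simp only [smul_sub, sub_apply]
    rw [integral_sub (integrable_fderiv_apply_smul h.continuousOn hφ hc hφs v) hM,
      integral_sub (h.integrable_smul_apply hp hφ.continuous hc hφs v) hM',
      h.hasWeakFDerivOn φ hφ hc hφs v, hasWeakFDerivOn_of_contDiff M.contDiff φ hφ hc hφs v]
    simp only [M.fderiv]
    abel

end ContinuousSobolevOn

end WeakDerivative

lemma norm_sub_le_div_of_norm_deriv_le_rpow {F : Type*} [NormedAddCommGroup F] [NormedSpace ℝ F]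
    {A A' : ℝ → F} {C β : ℝ} (hβ : 0 < β) (hA : ∀ s, 1 ≤ s → HasDerivAt A (A' s) s)
    (hA' : ∀ s, 1 ≤ s → ‖A' s‖ ≤ C * s ^ (-β - 1)) {t : ℝ} (ht : 1 ≤ t) :
    ‖A t - A 1‖ ≤ C / β := by
  have hC : 0 ≤ C := by simpa using (norm_nonneg _).trans (hA' 1 le_rfl)
  have hB : ∀ s, 1 ≤ s → HasDerivAt (fun s => C / β * (1 - s ^ (-β))) (C * s ^ (-β - 1)) s := by
    intro s hs
    have hs0 : s ≠ 0 := by positivity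
    refine (((Real.hasDerivAt_rpow_const (Or.inl hs0)).const_sub 1).const_mul
      (C / β)).congr_deriv ?_
    field_simp
  have hle : ‖A t - A 1‖ ≤ C / β * (1 - t ^ (-β)) :=
    image_norm_le_of_norm_deriv_right_le_deriv_boundary' (f := fun s => A s - A 1)
      (fun s hs => ((hA s hs.1).sub_const _).continuousAt.continuousWithinAt)
      (fun s hs => ((hA s hs.1).sub_const _).hasDerivWithinAt) (by simp)
      (fun s hs => (hB s hs.1).continuousAt.continuousWithinAt)
      (fun s hs => (hB s hs.1).hasDerivWithinAt) (fun s hs => hA' s hs.1) ⟨ht, le_rfl⟩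
  refine hle.trans (mul_le_of_le_one_right (by positivity) (sub_le_self _ (by positivity)))

lemma withDensity_ofReal_le_smul_cond {α : Type*} [MeasurableSpace α] {μ : Measure α} {s : Set α}
    (hs : MeasurableSet s) (hμs : 0 < μ.real s) {K : α → ℝ} (hKs : Function.support K ⊆ s) {M : ℝ}
    (hKM : ∀ y, K y ≤ M / μ.real s) :
    μ.withDensity (fun y => ENNReal.ofReal (K y)) ≤ ENNReal.ofReal M • μ[|s] := by
  have hle : (fun y => ENNReal.ofReal (K y)) ≤ s.indicator fun _ => ENNReal.ofReal M * (μ s)⁻¹ := by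
    intro y
    by_cases hy : y ∈ s
    · rw [indicator_of_mem hy, ← div_eq_mul_inv]
      refine (ENNReal.ofReal_le_ofReal (hKM y)).trans_eq ?_
      rw [ENNReal.ofReal_div_of_pos hμs, Measure.real, ENNReal.ofReal_toReal]
      exact fun h => by simp [Measure.real, h] at hμs
    · simp [Function.notMem_support.1 fun h => hy (hKs h)]
  refine (withDensity_mono (Eventually.of_forall hle)).trans_eq ?_
  rw [withDensity_indicator hs, withDensity_const, ProbabilityTheory.cond, smul_smul]

section Morrey

variable {E : Type*} [NormedAddCommGroup E] [NormedSpace ℝ E] [FiniteDimensional ℝ E]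
  [MeasurableSpace E] [BorelSpace E] {μ : Measure E} [μ.IsAddHaarMeasure]
  {F : Type*} [NormedAddCommGroup F] [NormedSpace ℝ F]
  {u : E → F} {G : E → E →L[ℝ] F} {ψ : E → ℝ} {x y c : E} {r t M : ℝ} {p : ℝ≥0∞}

lemma integrable_contractKernel (hψ : ContDiff ℝ (⊤ : ℕ∞) ψ)
    (hsupp : Function.support ψ ⊆ closedBall c r) (hx : x ∈ closedBall c r) (ht : 1 ≤ t) :
    Integrable (contractKernel ψ x t) μ :=
  (contDiff_contractKernel hψ x t).continuous.integrable_of_hasCompactSupport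
    (.of_support_subset_isCompact (isCompact_closedBall c r)
      (support_contractKernel_subset hsupp hx ht))

lemma ContinuousSobolevOn.hasDerivAt_setIntegral_contractKernel_smul
    (h : ContinuousSobolevOn p u G (closedBall c r) μ) (hp : 1 ≤ p)
    (hψ : ContDiff ℝ (⊤ : ℕ∞) ψ) (hsupp : Function.support ψ ⊆ closedBall c r)
    (hx : x ∈ closedBall c r) (ht : 1 ≤ t) :
    HasDerivAt (fun t => ∫ y in closedBall c r, contractKernel ψ x t y • u y ∂μ)
      (-(t⁻¹ • ∫ y, contractKernel ψ x t y • G y (y - x) ∂μ)) t := by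
  have hψd : Differentiable ℝ ψ := hψ.differentiable (by simp)
  have hQ := isCompact_closedBall c r
  have hts := tsupport_contractKernel_subset hsupp hx ht
  have hcont : ContinuousOn (Function.uncurry fun t y => t⁻¹ *
      (finrank ℝ E * contractKernel ψ x t y + fderiv ℝ (contractKernel ψ x t) y (y - x)))
      (Ioi 0 ×ˢ closedBall c r) := by
    have hψc := hψ.continuous
    have hψ'c := hψ.continuous_fderiv (by simp)
    simp only [fderiv_contractKernel hψd, contractKernel, Function.uncurry_def]
    refine (continuousOn_fst.inv₀ fun z hz => hz.1.ne').mul (Continuous.continuousOn ?_)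
    fun_prop
  refine (hasDerivAt_setIntegral_smul hQ h.continuousOn isOpen_Ioi
    (fun t _ => (contDiff_contractKernel hψ x t).continuous.continuousOn) hcont
    (fun s hs y _ => hasDerivAt_contractKernel hψd hs.ne') (zero_lt_one.trans_le ht)).congr_deriv ?_
  simp_rw [mul_smul]
  rw [integral_smul, setIntegral_eq_integral_of_forall_compl_eq_zero,
    h.hasWeakFDerivOn.integral_radial hQ h.continuousOn (h.integrableOn hp hQ subset_rfl)
      (contDiff_contractKernel hψ x t) hts, smul_neg]
  intro y hy
  rw [image_eq_zero_of_notMem_tsupport fun h => hy (hts h),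
    image_eq_zero_of_notMem_tsupport fun h => hy (hts (tsupport_fderiv_subset ℝ h))]
  simp

lemma withDensity_contractKernel_le (hsupp : Function.support ψ ⊆ closedBall c r)
    (hψM : ∀ y, ψ y ≤ M / μ.real (closedBall c r)) (hr : 0 < r) (hx : x ∈ closedBall c r)
    (ht : 1 ≤ t) :
    μ.withDensity (fun y => ENNReal.ofReal (contractKernel ψ x t y)) ≤
      ENNReal.ofReal (t ^ finrank ℝ E * M) • μ[|closedBall c r] := by
  refine withDensity_ofReal_le_smul_cond measurableSet_closedBall
    (ENNReal.toReal_pos (measure_closedBall_pos μ c hr).ne' measure_closedBall_lt_top.ne)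
    (support_contractKernel_subset hsupp hx ht) fun y => ?_
  rw [mul_div_assoc]
  exact mul_le_mul_of_nonneg_left (hψM _) (by positivity)

lemma isProbabilityMeasure_withDensity_contractKernel (hψ : ContDiff ℝ (⊤ : ℕ∞) ψ)
    (hψ0 : ∀ y, 0 ≤ ψ y) (hsupp : Function.support ψ ⊆ closedBall c r)
    (hψ1 : ∫ y, ψ y ∂μ = 1) (hx : x ∈ closedBall c r) (ht : 1 ≤ t) :
    IsProbabilityMeasure (μ.withDensity fun y => ENNReal.ofReal (contractKernel ψ x t y)) := by
  have ht0 : 0 < t := by positivity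
  constructor
  rw [withDensity_apply _ .univ, Measure.restrict_univ, ← ofReal_integral_eq_lintegral_ofReal
    (integrable_contractKernel hψ hsupp hx ht)
    (Eventually.of_forall (contractKernel_nonneg hψ0 ht0.le)),
    integral_contractKernel μ ψ x ht0, hψ1, ENNReal.ofReal_one]

lemma norm_integral_contractKernel_smul_le (hψ : ContDiff ℝ (⊤ : ℕ∞) ψ) (hψ0 : ∀ y, 0 ≤ ψ y)
    (hsupp : Function.support ψ ⊆ closedBall c r) (hψ1 : ∫ y, ψ y ∂μ = 1) (hr : 0 < r)
    (hM : 0 ≤ M) (hψM : ∀ y, ψ y ≤ M / μ.real (closedBall c r)) (hp : 1 ≤ p)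
    (hG : MemLp G p μ[|closedBall c r]) (hx : x ∈ closedBall c r) (ht : 1 ≤ t) :
    ‖∫ y, contractKernel ψ x t y • G y (y - x) ∂μ‖ ≤ 2 * r / t *
      ((t ^ finrank ℝ E * M) ^ (1 / p).toReal * (eLpNorm G p μ[|closedBall c r]).toReal) := by
  have ht0 : 0 < t := by positivity
  have hψx : Function.support ψ ⊆ closedBall x (2 * r) :=
    hsupp.trans (closedBall_subset_closedBall'
      (by rw [two_mul]; gcongr; exact mem_closedBall'.1 hx))
  have := isProbabilityMeasure_withDensity_contractKernel hψ hψ0 hsupp hψ1 hx ht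
  have hle : ‖∫ y, contractKernel ψ x t y • G y (y - x) ∂μ‖ₑ ≤ ENNReal.ofReal (2 * r / t) *
      (ENNReal.ofReal (t ^ finrank ℝ E * M) ^ (1 / p).toReal * eLpNorm G p μ[|closedBall c r]) :=
    calc ‖∫ y, contractKernel ψ x t y • G y (y - x) ∂μ‖ₑ
      _ ≤ ∫⁻ y, ‖contractKernel ψ x t y • G y (y - x)‖ₑ ∂μ := enorm_integral_le_lintegral_enorm _
      _ ≤ ∫⁻ y, ENNReal.ofReal (2 * r / t) *
          (ENNReal.ofReal (contractKernel ψ x t y) * ‖G y‖ₑ) ∂μ :=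
        lintegral_mono fun y => enorm_contractKernel_smul_apply_sub_le (G y) hψ0 hψx ht0
      _ = ENNReal.ofReal (2 * r / t) *
          ∫⁻ y, ‖G y‖ₑ ∂μ.withDensity fun y => ENNReal.ofReal (contractKernel ψ x t y) := by
        rw [lintegral_const_mul' _ _ ENNReal.ofReal_ne_top,
          lintegral_withDensity_eq_lintegral_mul_non_measurable μ
            (contDiff_contractKernel hψ x t).continuous.measurable.ennreal_ofReal (by simp)]
        rfl
      _ ≤ _ := by
        gcongr
        exact lintegral_enorm_le_rpow_mul_eLpNorm_of_le_smul
          (withDensity_contractKernel_le hsupp hψM hr hx ht) hG.1 hp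
  have hfin := ENNReal.mul_ne_top (ENNReal.ofReal_ne_top (r := 2 * r / t)) (ENNReal.mul_ne_top
    (ENNReal.rpow_ne_top_of_nonneg (ENNReal.toReal_nonneg (a := 1 / p))
      (ENNReal.ofReal_ne_top (r := t ^ finrank ℝ E * M))) hG.2.ne)
  have hreal := ENNReal.toReal_mono hfin hle
  rwa [toReal_enorm, ENNReal.toReal_mul, ENNReal.toReal_mul, ← ENNReal.toReal_rpow,
    ENNReal.toReal_ofReal (by positivity), ENNReal.toReal_ofReal (by positivity)] at hreal

lemma tendsto_setIntegral_contractKernel_smul {u : E → F} [CompleteSpace F]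
    (hu : ContinuousOn u (closedBall c r))
    (hψ : ContDiff ℝ (⊤ : ℕ∞) ψ) (hψ0 : ∀ y, 0 ≤ ψ y) (hsupp : Function.support ψ ⊆ closedBall c r)
    (hψ1 : ∫ y, ψ y ∂μ = 1) (hx : x ∈ closedBall c r) :
    Tendsto (fun t => ∫ y in closedBall c r, contractKernel ψ x t y • u y ∂μ) atTop (𝓝 (u x)) := by
  have hψx : Function.support ψ ⊆ closedBall x (2 * r) :=
    hsupp.trans (closedBall_subset_closedBall'
      (by rw [two_mul]; gcongr; exact mem_closedBall'.1 hx))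
  have hQ := isCompact_closedBall c r
  refine tendsto_setIntegral_peak_smul_of_integrableOn_of_tendsto (t := closedBall c r)
    measurableSet_closedBall measurableSet_closedBall subset_rfl self_mem_nhdsWithin
    hQ.measure_lt_top.ne ?_ ?_ ?_ ?_ (hu.integrableOn_compact hQ) (hu x hx)
  · filter_upwards [eventually_ge_atTop 0] with t ht y _ using contractKernel_nonneg hψ0 ht y
  · intro U hU hxU
    obtain ⟨δ, hδ, hball⟩ := Metric.isOpen_iff.1 hU x hxU
    have hlim : ∀ᶠ t in atTop, 2 * r / t < δ :=
      (tendsto_const_nhds.div_atTop tendsto_id).eventually (gt_mem_nhds hδ)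
    refine Metric.tendstoUniformlyOn_iff.2 fun ε hε => ?_
    filter_upwards [hlim, eventually_gt_atTop 0] with t htδ ht y hy
    have hzero : contractKernel ψ x t y = 0 := by
      by_contra hne
      have hyx := norm_sub_le_of_contractKernel_ne_zero hψx ht hne
      exact hy.2 (hball (mem_ball_iff_norm.2 (hyx.trans_lt htδ)))
    simpa [hzero] using hε
  · refine tendsto_const_nhds.congr' ?_
    filter_upwards [eventually_ge_atTop 1] with t ht
    rw [setIntegral_eq_integral_of_forall_compl_eq_zero,
      integral_contractKernel μ ψ x (by positivity), hψ1]
    exact fun y hy => Function.notMem_support.1 fun h =>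
      hy (support_contractKernel_subset hsupp hx ht h)
  · exact Eventually.of_forall fun t =>
      (contDiff_contractKernel hψ x t).continuous.aestronglyMeasurable

/-- An admissible constant in Morrey's inequality on balls of a `d`-dimensional space, for the
exponent `p`. -/
noncomputable def morreyConst (d : ℕ) (p : ℝ≥0∞) : ℝ :=
  4 * 2 ^ (d / p.toReal) / (1 - d / p.toReal)

lemma div_toReal_lt_one {d : ℕ} (hdp : (d : ℝ≥0∞) < p) : d / p.toReal < 1 := by
  obtain rfl | hp := eq_or_ne p ∞
  · simp
  have hd : (d : ℝ) < p.toReal := by simpa using ENNReal.toReal_strict_mono hp hdp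
  exact (div_lt_one ((Nat.cast_nonneg d).trans_lt hd)).2 hd

lemma morreyConst_nonneg {d : ℕ} (hdp : (d : ℝ≥0∞) < p) : 0 ≤ morreyConst d p :=
  div_nonneg (by positivity) (sub_nonneg.2 (div_toReal_lt_one hdp).le)

lemma norm_sub_average_le_of_finrank_lt [CompleteSpace F]
    (h : ContinuousSobolevOn p u G (closedBall c r) μ) (hp : 1 ≤ p)
    (hdp : (finrank ℝ E : ℝ≥0∞) < p) (hr : 0 < r) (hψ : ContDiff ℝ (⊤ : ℕ∞) ψ)
    (hψ0 : ∀ y, 0 ≤ ψ y) (hsupp : Function.support ψ ⊆ closedBall c r) (hψ1 : ∫ y, ψ y ∂μ = 1)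
    (hψM : ∀ y, ψ y ≤ 2 ^ finrank ℝ E / μ.real (closedBall c r)) (hx : x ∈ closedBall c r) :
    ‖u x - ∫ y in closedBall c r, ψ y • u y ∂μ‖ ≤ morreyConst (finrank ℝ E) p / 2 * r *
      (eLpNorm G p μ[|closedBall c r]).toReal := by
  set d := finrank ℝ E
  set T := (eLpNorm G p μ[|closedBall c r]).toReal
  have hβ : 0 < 1 - d / p.toReal := sub_pos.2 (div_toReal_lt_one hdp)
  have hG : MemLp G p μ[|closedBall c r] :=
    h.memLp.smul_measure (ENNReal.inv_ne_top.2 (measure_closedBall_pos μ c hr).ne')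
  have hbound t (ht : 1 ≤ t) :
      ‖∫ y in closedBall c r, contractKernel ψ x t y • u y ∂μ -
        ∫ y in closedBall c r, contractKernel ψ x 1 y • u y ∂μ‖ ≤
      2 * r * 2 ^ (d / p.toReal) * T / (1 - d / p.toReal) := by
    refine norm_sub_le_div_of_norm_deriv_le_rpow hβ
      (fun s hs => h.hasDerivAt_setIntegral_contractKernel_smul hp hψ hsupp hx hs)
      (fun s hs => ?_) ht
    have hs0 : 0 < s := by positivity
    rw [norm_neg, norm_smul, norm_inv, Real.norm_of_nonneg hs0.le]
    calc _ ≤ s⁻¹ * (2 * r / s * ((s ^ d * 2 ^ d) ^ (1 / p).toReal * T)) := by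
          gcongr
          exact norm_integral_contractKernel_smul_le hψ hψ0 hsupp hψ1 hr (by positivity) hψM hp hG
            hx hs
      _ = 2 * r * 2 ^ (d / p.toReal) * T * s ^ (-(1 - d / p.toReal) - 1) := by
        have hexp : -(1 - d / p.toReal) - 1 = d / p.toReal - 2 := by ring
        rw [hexp, Real.rpow_sub hs0, ← mul_pow, ← Real.rpow_natCast,
          ← Real.rpow_mul (by positivity), Real.mul_rpow hs0.le zero_le_two, one_div,
          ENNReal.toReal_inv, ← div_eq_mul_inv, Real.rpow_two]
        field_simp
  have hlim := (tendsto_setIntegral_contractKernel_smul h.continuousOn hψ hψ0 hsupp hψ1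
    hx).sub_const (∫ y in closedBall c r, contractKernel ψ x 1 y • u y ∂μ)
  rw [contractKernel_one] at hlim hbound
  refine (le_of_tendsto hlim.norm ((eventually_ge_atTop 1).mono hbound)).trans_eq ?_
  rw [morreyConst]
  ring

theorem ContinuousSobolevOn.norm_sub_le_morreyConst_mul [CompleteSpace F]
    (h : ContinuousSobolevOn p u G (closedBall c r) μ) (hp : 1 ≤ p)
    (hdp : (finrank ℝ E : ℝ≥0∞) < p) (hr : 0 < r) (hx : x ∈ closedBall c r)
    (hy : y ∈ closedBall c r) :
    ‖u x - u y‖ ≤ morreyConst (finrank ℝ E) p * r * (eLpNorm G p μ[|closedBall c r]).toReal := by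
  let b : ContDiffBump c := ⟨r / 2, r, by positivity, by linarith⟩
  have hsupp : Function.support (b.normed μ) ⊆ closedBall c r := by
    rw [b.support_normed_eq]
    exact ball_subset_closedBall
  have hmean z (hz : z ∈ closedBall c r) := norm_sub_average_le_of_finrank_lt h hp hdp hr
    b.contDiff_normed b.nonneg_normed hsupp (b.integral_normed (μ := μ))
    (fun y => b.normed_le_div_measure_closedBall_rOut μ 2 (mul_div_cancel₀ r two_ne_zero).ge y) hz
  have htri := norm_sub_le_norm_sub_add_norm_sub (u x)
    (∫ y in closedBall c r, b.normed μ y • u y ∂μ) (u y)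
  have hxm := hmean x hx
  have hym := hmean y hy
  rw [norm_sub_rev] at hym
  linarith

end Morrey

section LebesguePoint

variable {α : Type*} [MetricSpace α] [MeasurableSpace α] {F : Type*} [NormedAddCommGroup F]
  {p : ℝ≥0∞} {g : α → F} {L : F} {x : α} {μ : Measure α} {s : Set α}

/-- `x` is a Lebesgue point of `g`, with value `L`, in the sense of `L^p` means over balls. -/
def HasLebesgueValue (p : ℝ≥0∞) (g : α → F) (L : F) (x : α) (μ : Measure α) : Prop :=
  Tendsto (fun r => eLpNorm (fun y => g y - L) p μ[|closedBall x r]) (𝓝[>] 0) (𝓝 0)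

variable [BorelSpace α]

lemma HasLebesgueValue.of_restrict (h : HasLebesgueValue p g L x (μ.restrict s)) (hs : s ∈ 𝓝 x) :
    HasLebesgueValue p g L x μ := by
  refine h.congr' ?_
  filter_upwards [(eventually_closedBall_subset hs).filter_mono nhdsWithin_le_nhds] with r hr
  rw [ProbabilityTheory.cond, ProbabilityTheory.cond,
    Measure.restrict_apply measurableSet_closedBall,
    Measure.restrict_restrict measurableSet_closedBall, inter_eq_left.2 hr]

variable [SecondCountableTopology α] [HasBesicovitchCovering α]

lemma ae_tendsto_eLpNorm_cond_closedBall [IsFiniteMeasure μ] (hp0 : p ≠ 0) (hp : p ≠ ∞)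
    (hg : MemLp g p μ) :
    ∀ᵐ x ∂μ, Tendsto (fun r => eLpNorm g p μ[|closedBall x r]) (𝓝[>] 0) (𝓝 ‖g x‖ₑ) := by
  have hp' := ENNReal.toReal_pos hp0 hp
  filter_upwards [(Besicovitch.vitaliFamily μ).ae_tendsto_lintegral_div
    (hg.1.enorm.pow_const p.toReal) (lintegral_rpow_enorm_lt_top_of_eLpNorm_lt_top hp0 hp hg.2).ne]
    with x hx
  have hlim := (hx.comp (Besicovitch.tendsto_filterAt μ x)).ennrpow_const (1 / p.toReal)
  rw [← ENNReal.rpow_mul, mul_one_div_cancel hp'.ne', ENNReal.rpow_one] at hlim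
  refine hlim.congr fun r => ?_
  rw [eLpNorm_eq_lintegral_rpow_enorm_toReal hp0 hp, ProbabilityTheory.cond,
    lintegral_smul_measure, Function.comp_apply, ENNReal.div_eq_inv_mul, smul_eq_mul]

theorem ae_hasLebesgueValue [IsFiniteMeasure μ] [TopologicalSpace.SeparableSpace F] (hp1 : 1 ≤ p)
    (hp : p ≠ ∞) (hg : MemLp g p μ) : ∀ᵐ x ∂μ, HasLebesgueValue p g (g x) x μ := by
  obtain ⟨D, hDc, hD⟩ := TopologicalSpace.exists_countable_dense F
  have hall : ∀ᵐ x ∂μ, ∀ a ∈ D, Tendsto (fun r => eLpNorm (fun y => g y - a) p μ[|closedBall x r])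
      (𝓝[>] 0) (𝓝 ‖g x - a‖ₑ) :=
    (ae_ball_iff hDc).2 fun a _ => ae_tendsto_eLpNorm_cond_closedBall (by positivity) hp
      (hg.sub (memLp_const a))
  filter_upwards [hall] with x hx
  refine ENNReal.tendsto_nhds_zero.2 fun ε hε => ?_
  obtain ⟨a, haD, ha⟩ := hD.exists_mem_open (U := {a | ‖g x - a‖ₑ < ε / 2})
    (isOpen_lt (by fun_prop) continuous_const) ⟨g x, by simpa using hε.ne'⟩
  filter_upwards [(hx a haD).eventually (gt_mem_nhds ha)] with r hr
  have hconst : eLpNorm (fun _ => g x - a) p μ[|closedBall x r] ≤ ‖g x - a‖ₑ := by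
    rw [eLpNorm_const' _ (zero_lt_one.trans_le hp1).ne' hp]
    exact mul_le_of_le_one_right' (ENNReal.rpow_le_one prob_le_one (by positivity))
  calc eLpNorm (fun y => g y - g x) p μ[|closedBall x r]
    _ = eLpNorm ((fun y => g y - a) - fun _ => g x - a) p μ[|closedBall x r] := by
      congr 1; ext y; simp
    _ ≤ eLpNorm (fun y => g y - a) p μ[|closedBall x r] +
        eLpNorm (fun _ => g x - a) p μ[|closedBall x r] :=
      eLpNorm_sub_le ((hg.1.sub aestronglyMeasurable_const).mono_ac
        ProbabilityTheory.cond_absolutelyContinuous) aestronglyMeasurable_const hp1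
    _ ≤ ε / 2 + ε / 2 := add_le_add hr.le (hconst.trans ha.le)
    _ = ε := ENNReal.add_halves ε

lemma ae_restrict_hasLebesgueValue [TopologicalSpace.SeparableSpace F] (hs : IsOpen s)
    [IsFiniteMeasure (μ.restrict s)] (hp1 : 1 ≤ p) (hp : p ≠ ∞) (hg : MemLp g p (μ.restrict s)) :
    ∀ᵐ x ∂μ.restrict s, HasLebesgueValue p g (g x) x μ := by
  filter_upwards [ae_hasLebesgueValue hp1 hp hg, ae_restrict_mem hs.measurableSet] with x hx hxs
  exact hx.of_restrict (hs.mem_nhds hxs)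

end LebesguePoint

section Differentiability

variable {E : Type*} [NormedAddCommGroup E] [NormedSpace ℝ E]
  {F : Type*} [NormedAddCommGroup F] [NormedSpace ℝ F] {u : E → F} {L : E →L[ℝ] F} {x : E}

lemma eventually_forall_mem_closedBall_norm_sub_le (h : HasFDerivAt u L x) {ε : ℝ} (hε : 0 < ε) :
    ∀ᶠ r in 𝓝 (0 : ℝ), ∀ y ∈ closedBall x r, ‖u y - u x - L (y - x)‖ ≤ ε * r := by
  filter_upwards [eventually_closedBall_subset (h.isLittleO.def hε)] with r hr y hy
  exact (hr hy).trans (by gcongr; exact mem_closedBall_iff_norm.1 hy)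

variable [FiniteDimensional ℝ E] [MeasurableSpace E] [BorelSpace E] {μ : Measure E}
  [μ.IsAddHaarMeasure] [CompleteSpace F] {G : E → E →L[ℝ] F} {Ω : Set E} {p : ℝ≥0∞}

theorem ContinuousSobolevOn.hasFDerivAt (h : ContinuousSobolevOn p u G Ω μ) (hp : 1 ≤ p)
    (hdp : (finrank ℝ E : ℝ≥0∞) < p) (hΩ : Ω ∈ 𝓝 x) (hG : HasLebesgueValue p G L x μ) :
    HasFDerivAt u L x := by
  have hlim : Tendsto (fun r => morreyConst (finrank ℝ E) p *
      (eLpNorm (fun y => G y - L) p μ[|closedBall x r]).toReal) (𝓝[>] 0) (𝓝 0) := by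
    simpa using ((ENNReal.tendsto_toReal ENNReal.zero_ne_top).comp hG).const_mul
      (morreyConst (finrank ℝ E) p)
  refine .of_isLittleO <| Asymptotics.IsLittleO.of_bound fun ε hε => ?_
  have hev : ∀ᶠ r in 𝓝[>] 0, ∀ y ∈ closedBall x r, ‖u y - u x - L (y - x)‖ ≤ ε * r := by
    filter_upwards [hlim.eventually (ge_mem_nhds hε), self_mem_nhdsWithin,
      (eventually_closedBall_subset hΩ).filter_mono nhdsWithin_le_nhds] with r hr hr0 hrΩ y hy
    have hsub := (h.mono hrΩ).sub_clm hp measure_closedBall_lt_top.ne L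
    have hmorrey := hsub.norm_sub_le_morreyConst_mul hp hdp hr0 hy (mem_closedBall_self hr0.le)
    calc ‖u y - u x - L (y - x)‖ = ‖u y - L y - (u x - L x)‖ := by
          rw [map_sub]; congr 1; abel
      _ ≤ _ := hmorrey
      _ = morreyConst (finrank ℝ E) p *
          (eLpNorm (fun y => G y - L) p μ[|closedBall x r]).toReal * r := by ring
      _ ≤ ε * r := mul_le_mul_of_nonneg_right hr hr0.le
  filter_upwards [eventually_nhdsWithin_iff.1 ((tendsto_norm_sub_self_nhdsNE x).eventually hev)]
    with y hy
  obtain rfl | hyx := eq_or_ne y x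
  · simp
  · exact hy hyx y (by simp [dist_eq_norm])

end Differentiability

section HorizontalProjection

variable {n : ℕ}

/-- The horizontal projection `piH`, as a continuous linear map. -/
noncomputable def horizProj (n : ℕ) : Heis n →L[ℝ] Horiz n :=
  LinearMap.toContinuousLinearMap
    { toFun := piH n
      map_add' := fun _ _ => rfl
      map_smul' := fun _ _ => rfl }

@[simp] lemma horizProj_apply_xIdx2 (p : Heis n) (j : Fin n) :
    horizProj n p (xIdx2 n j) = p (xIdx n j) := rfl

@[simp] lemma horizProj_apply_yIdx2 (p : Heis n) (j : Fin n) :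
    horizProj n p (yIdx2 n j) = p (yIdx n j) := rfl

lemma norm_horizProj_apply_le (p : Heis n) : ‖horizProj n p‖ ≤ ‖p‖ := by
  refine pow_le_pow_iff_left₀ (norm_nonneg _) (norm_nonneg _) two_ne_zero |>.1 ?_
  rw [EuclideanSpace.norm_sq_eq, EuclideanSpace.norm_sq_eq, Fin.sum_univ_castSucc]
  exact le_add_of_nonneg_right (sq_nonneg _)

lemma sum_fin_two_mul (h : Fin (2 * n) → ℝ) :
    ∑ i, h i = ∑ j, (h (xIdx2 n j) + h (yIdx2 n j)) := by
  rw [← (finProdFinEquiv.trans (finCongr (mul_comm n 2))).sum_comp, Fintype.sum_prod_type]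
  refine Finset.sum_congr rfl fun j _ => ?_
  rw [Fin.sum_univ_two]
  congr 2 <;> ext <;> simp [xIdx2, yIdx2, add_comm]

lemma norm_horizProj_sq (p : Heis n) :
    ‖horizProj n p‖ ^ 2 = ∑ j, (p (xIdx n j) ^ 2 + p (yIdx n j) ^ 2) := by
  simp [EuclideanSpace.norm_sq_eq, sum_fin_two_mul]

end HorizontalProjection

section SymplecticForm

variable {n : ℕ}

/-- The standard symplectic form `omegaF`, as a continuous bilinear form. -/
noncomputable def symplecticForm (n : ℕ) : Horiz n →L[ℝ] Horiz n →L[ℝ] ℝ :=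
  ∑ j, ((EuclideanSpace.proj (xIdx2 n j)).smulRight (EuclideanSpace.proj (yIdx2 n j)) -
    (EuclideanSpace.proj (yIdx2 n j)).smulRight (EuclideanSpace.proj (xIdx2 n j)))

lemma symplecticForm_apply (v w : Horiz n) : symplecticForm n v w = omegaF n v w := by
  simp [symplecticForm, omegaF]

lemma symplecticForm_swap (v w : Horiz n) : symplecticForm n v w = -symplecticForm n w v := by
  simp only [symplecticForm_apply, omegaF, ← Finset.sum_neg_distrib]
  exact Finset.sum_congr rfl fun j _ => by ring

lemma symplecticForm_self (v : Horiz n) : symplecticForm n v v = 0 := by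
  linarith [symplecticForm_swap v v]

lemma symplecticForm_single_yIdx2 (v : Horiz n) (j : Fin n) :
    symplecticForm n v (EuclideanSpace.single (yIdx2 n j) 1) = v (xIdx2 n j) := by
  have hxy i : xIdx2 n i ≠ yIdx2 n j := fun h => by
    have := Fin.ext_iff.1 h
    simp only [xIdx2, yIdx2] at this
    omega
  have hyy i : yIdx2 n i = yIdx2 n j ↔ i = j := by simp [yIdx2, Fin.ext_iff]
  simp [symplecticForm_apply, omegaF, hxy, hyy]

lemma symplecticForm_single_xIdx2 (v : Horiz n) (j : Fin n) :
    symplecticForm n v (EuclideanSpace.single (xIdx2 n j) 1) = -v (yIdx2 n j) := by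
  have hyx i : yIdx2 n i ≠ xIdx2 n j := fun h => by
    have := Fin.ext_iff.1 h
    simp only [xIdx2, yIdx2] at this
    omega
  have hxx i : xIdx2 n i = xIdx2 n j ↔ i = j := by simp [xIdx2, Fin.ext_iff]
  simp [symplecticForm_apply, omegaF, hyx, hxx]

lemma symplecticForm_injective : Function.Injective (symplecticForm n) := by
  refine (injective_iff_map_eq_zero _).2 fun v hv => ?_
  have hx j : v (xIdx2 n j) = 0 := by rw [← symplecticForm_single_yIdx2, hv]; simp
  have hy j : v (yIdx2 n j) = 0 := by
    rw [← neg_eq_zero, ← symplecticForm_single_xIdx2, hv]; simp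
  refine norm_eq_zero.1 (pow_eq_zero_iff two_ne_zero |>.1 ?_)
  rw [EuclideanSpace.norm_sq_eq, sum_fin_two_mul]
  simp [hx, hy]

end SymplecticForm

lemma exists_ne_zero_map_eq_zero_of_isotropic {K V W : Type*} [Field K] [AddCommGroup V]
    [Module K V] [FiniteDimensional K V] [AddCommGroup W] [Module K W] [FiniteDimensional K W]
    {B : LinearMap.BilinForm K W} (hB : LinearMap.ker B = ⊥) {T : V →ₗ[K] W}
    (hT : ∀ v w, B (T v) (T w) = 0) (hdim : finrank K W < 2 * finrank K V) :
    ∃ v, v ≠ 0 ∧ T v = 0 := by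
  have hle : T.range ≤ B.orthogonal T.range := by
    rintro _ ⟨w, rfl⟩ _ ⟨v, rfl⟩
    exact hT v w
  have horth := LinearMap.BilinForm.finrank_add_finrank_orthogonal' (B := B) T.range
  rw [hB, inf_bot_eq, finrank_bot, add_zero] at horth
  have hmono := Submodule.finrank_mono hle
  have hrank := T.finrank_range_add_finrank_ker
  have hker : T.ker ≠ ⊥ := fun h => by
    rw [h, finrank_bot] at hrank
    omega
  obtain ⟨v, hv, hv0⟩ := Submodule.exists_mem_ne_zero_of_ne_bot hker
  exact ⟨v, hv0, hv⟩

section ContactForm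

variable {n : ℕ}

/-- The standard contact form `α` at the point `q`. -/
noncomputable def contactForm (n : ℕ) (q : Heis n) : Heis n →L[ℝ] ℝ :=
  EuclideanSpace.proj (tIdx n) + (2 : ℝ) • (symplecticForm n (horizProj n q)).comp (horizProj n)

lemma contactForm_apply (q v : Heis n) :
    contactForm n q v = v (tIdx n) + 2 * symplecticForm n (horizProj n q) (horizProj n v) := by
  simp [contactForm]

lemma mem_kerAlpha_iff {q v : Heis n} : v ∈ kerAlpha n q ↔ contactForm n q v = 0 := by
  simp [contactForm_apply, symplecticForm_apply, omegaF, kerAlpha]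

lemma contactForm_eq_add (q q' v : Heis n) :
    contactForm n q v =
      contactForm n q' v + 2 * symplecticForm n (horizProj n (q - q')) (horizProj n v) := by
  simp only [contactForm_apply, map_sub, sub_apply]
  ring

lemma contactForm_sub_eq (q₀ q q' : Heis n) :
    contactForm n q' (q - q') = contactForm n q₀ (q - q₀) - contactForm n q₀ (q' - q₀) +
      2 * symplecticForm n (horizProj n (q' - q₀)) (horizProj n (q - q₀)) := by
  simp only [contactForm_apply, map_sub, sub_apply, symplecticForm_self,
    symplecticForm_swap (horizProj n q') (horizProj n q₀)]
  ring

lemma abs_symplecticForm_le (v w : Horiz n) :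
    |symplecticForm n v w| ≤ ‖symplecticForm n‖ * ‖v‖ * ‖w‖ :=
  (symplecticForm n).le_opNorm₂ v w

end ContactForm

section KoranyiDistance

variable {n k : ℕ} {p q : Heis n} {a : ℝ} {U : Set (Heis n)}

lemma dK_eq (p q : Heis n) :
    dK n p q = (‖horizProj n (p - q)‖ ^ 4 + contactForm n q (p - q) ^ 2) ^ ((1 : ℝ) / 4) := by
  have hω : symplecticForm n (horizProj n q) (horizProj n (p - q)) =
      ∑ j, (q (xIdx n j) * p (yIdx n j) - p (xIdx n j) * q (yIdx n j)) := by
    rw [symplecticForm_apply]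
    refine Finset.sum_congr rfl fun j _ => ?_
    simp only [horizProj_apply_xIdx2, horizProj_apply_yIdx2, PiLp.sub_apply]
    ring
  rw [dK, contactForm_apply, hω, show 4 = 2 * 2 from rfl, pow_mul, norm_horizProj_sq]
  rfl

lemma dK_le (ha : 0 ≤ a) (hπ : ‖horizProj n (p - q)‖ ≤ a)
    (hα : |contactForm n q (p - q)| ≤ a ^ 2) : dK n p q ≤ 2 * a := by
  rw [dK_eq]
  calc _ ≤ ((2 * a) ^ 4) ^ ((1 : ℝ) / 4) := by
        gcongr
        have hπ4 := pow_le_pow_left₀ (norm_nonneg _) hπ 4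
        have hα2 := sq_le_sq' (abs_le.1 hα).1 (abs_le.1 hα).2
        nlinarith [pow_nonneg ha 4]
    _ = 2 * a := by
        rw [one_div]
        exact Real.pow_rpow_inv_natCast (by positivity) four_ne_zero

lemma kDiam_le (h : ∀ p ∈ U, ∀ q ∈ U, dK n p q ≤ a) : kDiam n U ≤ ENNReal.ofReal a :=
  iSup₂_le fun p hp => iSup₂_le fun q hq => ENNReal.ofReal_le_ofReal (h p hp q hq)

/-- The `k`-dimensional Hausdorff content of the Korányi distance. The empty set is priced at
`0`, also for `k = 0`. -/
noncomputable def kContent (n k : ℕ) : OuterMeasure (Heis n) :=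
  OuterMeasure.ofFunction (fun U => ⨆ _ : U.Nonempty, kDiam n U ^ k) (by simp)

lemma kContent_le_kDiam_pow (U : Set (Heis n)) : kContent n k U ≤ kDiam n U ^ k :=
  (OuterMeasure.ofFunction_le _).trans (iSup_le fun _ => le_rfl)

lemma kContent_le_ofReal_pow (ha : 0 ≤ a) (h : ∀ p ∈ U, ∀ q ∈ U, dK n p q ≤ a) :
    kContent n k U ≤ ENNReal.ofReal (a ^ k) := by
  rw [ENNReal.ofReal_pow ha]
  exact (kContent_le_kDiam_pow U).trans (pow_le_pow_left' (kDiam_le h) k)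

lemma isHausdorffNullK_of_kContent_eq_zero (hk : k ≠ 0) (h : kContent n k U = 0) :
    IsHausdorffNullK n k U := by
  intro ε hε
  rw [← h, kContent, OuterMeasure.ofFunction_apply] at hε
  simp only [iInf_lt_iff] at hε
  obtain ⟨t, hUt, ht⟩ := hε
  refine ⟨t, hUt, (ENNReal.tsum_le_tsum fun i => ?_).trans_lt ht⟩
  obtain hi | hi := (t i).eq_empty_or_nonempty
  · simp [hi, kDiam, hk]
  · simp [hi]

end KoranyiDistance

section IntegralBound

variable {α F : Type*} [MeasurableSpace α] {μ : Measure α} [NormedAddCommGroup F]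
  [NormedSpace ℝ F] {s : Set α} {g : α → ℝ} {H : α → F} {M : ℝ} {p : ℝ≥0∞}

lemma enorm_integral_smul_le_mul_eLpNorm_cond (hμs : 0 < μ.real s)
    (hgs : Function.support g ⊆ s) (hg : ∀ y, ‖g y‖ ≤ M / μ.real s) (hp : 1 ≤ p)
    (hH : AEStronglyMeasurable H (μ.restrict s)) :
    ‖∫ y, g y • H y ∂μ‖ₑ ≤ ENNReal.ofReal M * eLpNorm H p μ[|s] := by
  have : IsProbabilityMeasure μ[|s] :=
    ProbabilityTheory.cond_isProbabilityMeasure_of_finite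
      (fun h => by simp [Measure.real, h] at hμs) (fun h => by simp [Measure.real, h] at hμs)
  have hμ : ENNReal.ofReal (M / μ.real s) = ENNReal.ofReal M * (μ s)⁻¹ := by
    rw [ENNReal.ofReal_div_of_pos hμs, Measure.real, ENNReal.ofReal_toReal
      (fun h => by simp [Measure.real, h] at hμs), div_eq_mul_inv]
  rw [← setIntegral_eq_integral_of_forall_compl_eq_zero fun y hy => by
    rw [Function.notMem_support.1 fun h => hy (hgs h), zero_smul]]
  calc ‖∫ y in s, g y • H y ∂μ‖ₑ
      ≤ ∫⁻ y in s, ‖g y • H y‖ₑ ∂μ := enorm_integral_le_lintegral_enorm _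
    _ ≤ ∫⁻ y in s, ENNReal.ofReal (M / μ.real s) * ‖H y‖ₑ ∂μ := by
        refine lintegral_mono fun y => ?_
        rw [enorm_smul, ← ofReal_norm (g y)]
        gcongr
        exact hg y
    _ = ENNReal.ofReal M * eLpNorm H 1 μ[|s] := by
        rw [lintegral_const_mul' _ _ ENNReal.ofReal_ne_top, hμ, eLpNorm_one_eq_lintegral_enorm,
          ProbabilityTheory.cond, lintegral_smul_measure, smul_eq_mul, mul_assoc]
    _ ≤ ENNReal.ofReal M * eLpNorm H p μ[|s] := by
        gcongr
        exact eLpNorm_le_eLpNorm_of_exponent_le hp (hH.smul_measure _)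

end IntegralBound

section Symmetry

variable {E : Type*} [NormedAddCommGroup E] [NormedSpace ℝ E] [MeasurableSpace E]
  {F : Type*} [NormedAddCommGroup F] [NormedSpace ℝ F]
  {u : E → F} {G : E → E →L[ℝ] F} {s : Set E} {μ : Measure E} {p : ℝ≥0∞}
  {φ : E → ℝ} {x₀ : E} {r : ℝ}

lemma HasWeakFDerivOn.integral_fderiv_smul_apply_comm (h : HasWeakFDerivOn u G s μ)
    (hφ : ContDiff ℝ (⊤ : ℕ∞) φ) (hc : HasCompactSupport φ) (hs : tsupport φ ⊆ s) (v w : E) :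
    ∫ x, fderiv ℝ φ x w • G x v ∂μ = ∫ x, fderiv ℝ φ x v • G x w ∂μ := by
  have hφ' : ContDiff ℝ (⊤ : ℕ∞) (fderiv ℝ φ) := hφ.fderiv_right (by simp)
  have hparts (v w : E) :
      ∫ x, fderiv ℝ (fderiv ℝ φ) x v w • u x ∂μ = -∫ x, fderiv ℝ φ x w • G x v ∂μ := by
    rw [← h (fun x => fderiv ℝ φ x w) (hφ'.clm_apply contDiff_const) (hc.fderiv_apply ℝ w)
      ((closure_minimal (support_fderiv_apply_subset_tsupport φ w) (isClosed_tsupport φ)).trans hs)]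
    congr with x
    rw [fderiv_clm_apply (hφ'.differentiable (by simp) x) (differentiableAt_const w)]
    simp
  have hsymm (x : E) : IsSymmSndFDerivAt ℝ φ x :=
    hφ.contDiffAt.isSymmSndFDerivAt
      (by rw [minSmoothness_of_isRCLikeNormedField]; exact WithTop.coe_le_coe.2 le_top)
  rw [← neg_inj, ← hparts, ← hparts]
  simp only [(hsymm _).eq v w]

variable [FiniteDimensional ℝ E] [BorelSpace E] [μ.IsAddHaarMeasure]

lemma integral_fderiv_smul_clm_sub_apply [CompleteSpace F] (hφ : ContDiff ℝ (⊤ : ℕ∞) φ)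
    (hc : HasCompactSupport φ) (B : E →L[ℝ] E →L[ℝ] F) (x₀ v w : E) :
    ∫ y, fderiv ℝ φ y w • B (y - x₀) v ∂μ = -((∫ y, φ y ∂μ) • B w v) := by
  have hB : ContDiff ℝ 1 fun y => B (y - x₀) v := by fun_prop
  have hd (y : E) : fderiv ℝ (fun y => B (y - x₀) v) y = B.flip v := by
    have := (B.flip v).hasFDerivAt.comp y ((hasFDerivAt_id y).sub_const x₀)
    exact this.fderiv
  rw [hasWeakFDerivOn_of_contDiff hB φ hφ hc (subset_univ _) w]
  simp only [hd, ContinuousLinearMap.flip_apply, integral_smul_const]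

lemma exists_bump_norm_fderiv_le (μ : Measure E) [μ.IsAddHaarMeasure] (x₀ : E) :
    ∃ D, 0 ≤ D ∧ ∀ r, 0 < r → ∃ φ : E → ℝ, ContDiff ℝ (⊤ : ℕ∞) φ ∧ tsupport φ ⊆ closedBall x₀ r ∧
      ∫ y, φ y ∂μ = 1 ∧ ∀ y, ‖fderiv ℝ φ y‖ ≤ D / r / μ.real (closedBall x₀ r) := by
  let b : ContDiffBump x₀ := ⟨1 / 2, 1, by norm_num, by norm_num⟩
  let ψ := b.normed μ
  have hψ : ContDiff ℝ (⊤ : ℕ∞) ψ := b.contDiff_normed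
  have hψs : Function.support ψ ⊆ closedBall x₀ 1 :=
    b.support_normed_eq.trans_subset ball_subset_closedBall
  obtain ⟨D, hD⟩ := (b.hasCompactSupport_normed (μ := μ)).fderiv ℝ
    |>.exists_bound_of_continuous (hψ.continuous_fderiv (by simp))
  have hD0 : 0 ≤ D := (norm_nonneg _).trans (hD x₀)
  refine ⟨D * μ.real (closedBall x₀ 1), by positivity, fun r hr =>
    ⟨contractKernel ψ x₀ r⁻¹, contDiff_contractKernel hψ x₀ r⁻¹, closure_minimal (fun y hy => ?_)
      isClosed_closedBall, ?_, fun y => ?_⟩⟩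
  · rw [mem_closedBall_iff_norm]
    simpa using norm_sub_le_of_contractKernel_ne_zero hψs (inv_pos.2 hr) hy
  · rw [integral_contractKernel μ ψ x₀ (inv_pos.2 hr)]
    exact b.integral_normed
  · have hV : 0 < μ.real (closedBall x₀ 1) :=
      ENNReal.toReal_pos (measure_closedBall_pos μ x₀ one_pos).ne' measure_closedBall_lt_top.ne
    have hVr : μ.real (closedBall x₀ r) = r ^ finrank ℝ E * μ.real (closedBall x₀ 1) := by
      rw [Measure.addHaar_real_closedBall' μ x₀ hr.le,
        Measure.addHaar_real_closedBall' μ x₀ zero_le_one, one_pow, one_mul]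
    rw [fderiv_contractKernel (hψ.differentiable (by simp)), norm_smul,
      Real.norm_of_nonneg (by positivity), hVr]
    calc r⁻¹ ^ (finrank ℝ E + 1) * ‖fderiv ℝ ψ (x₀ + r⁻¹ • (y - x₀))‖
        ≤ r⁻¹ ^ (finrank ℝ E + 1) * D := by gcongr; exact hD _
      _ = D * μ.real (closedBall x₀ 1) / r / (r ^ finrank ℝ E * μ.real (closedBall x₀ 1)) := by
        rw [inv_pow, pow_succ]
        field_simp

lemma ContinuousSobolevOn.norm_integral_fderiv_smul_sub_le [CompleteSpace F]
    (h : ContinuousSobolevOn p u G (closedBall x₀ r) μ) (hp : 1 ≤ p) {D ε : ℝ} (hD : 0 ≤ D)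
    (hr : 0 < r) (hφ : ContDiff ℝ (⊤ : ℕ∞) φ) (hs : tsupport φ ⊆ closedBall x₀ r)
    (hφ1 : ∫ y, φ y ∂μ = 1) (hφD : ∀ y, ‖fderiv ℝ φ y‖ ≤ D / r / μ.real (closedBall x₀ r))
    (hε : 0 ≤ ε) {B : E →L[ℝ] E →L[ℝ] F}
    (hB : eLpNorm (fun y => G y - B (y - x₀)) p μ[|closedBall x₀ r] ≤ ENNReal.ofReal (ε * r))
    (v w : E) :
    ‖∫ y, fderiv ℝ φ y w • G y v ∂μ + B w v‖ ≤ D * ‖w‖ * ‖v‖ * ε := by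
  have hcb := isCompact_closedBall x₀ r
  have hc : HasCompactSupport φ := hcb.of_isClosed_subset (isClosed_tsupport φ) hs
  have hV : 0 < μ.real (closedBall x₀ r) :=
    ENNReal.toReal_pos (measure_closedBall_pos μ x₀ hr).ne' measure_closedBall_lt_top.ne
  have hφs : Function.support (fun y => fderiv ℝ φ y w) ⊆ closedBall x₀ r :=
    (support_fderiv_apply_subset_tsupport φ w).trans hs
  have hG : IntegrableOn G (closedBall x₀ r) μ := h.integrableOn hp hcb subset_rfl
  have hBc : ContinuousOn (fun y => B (y - x₀)) (closedBall x₀ r) := by fun_prop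
  have hφw := continuous_fderiv_apply hφ w
  have hdiff : ∫ y, fderiv ℝ φ y w • G y v ∂μ + B w v =
      ∫ y, fderiv ℝ φ y w • (G y - B (y - x₀)) v ∂μ := by
    simp only [sub_apply, smul_sub]
    rw [integral_sub, integral_fderiv_smul_clm_sub_apply hφ hc B x₀ v w, hφ1, one_smul,
      sub_neg_eq_add]
    · exact integrable_smul_of_support_subset hcb hφw (hG.apply_continuousLinearMap v) hφs
    · exact integrable_smul_of_support_subset hcb hφw
        ((hBc.integrableOn_compact hcb).apply_continuousLinearMap v) hφs
  have hGB : AEStronglyMeasurable (fun y => G y - B (y - x₀)) (μ.restrict (closedBall x₀ r)) :=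
    (hG.sub (hBc.integrableOn_compact hcb)).aestronglyMeasurable
  rw [hdiff, ← ENNReal.ofReal_le_ofReal_iff (by positivity), ofReal_norm]
  calc ‖∫ y, fderiv ℝ φ y w • (G y - B (y - x₀)) v ∂μ‖ₑ
      ≤ ENNReal.ofReal (D / r * ‖w‖) *
          eLpNorm (fun y => (G y - B (y - x₀)) v) p μ[|closedBall x₀ r] := by
        refine enorm_integral_smul_le_mul_eLpNorm_cond hV hφs (fun y => ?_) hp
          (hGB.apply_continuousLinearMap v)
        rw [mul_div_right_comm]
        exact (fderiv ℝ φ y).le_of_opNorm_le (hφD y) w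
    _ ≤ ENNReal.ofReal (D / r * ‖w‖) * (ENNReal.ofReal ‖v‖ * ENNReal.ofReal (ε * r)) := by
        gcongr
        refine (eLpNorm_le_mul_eLpNorm_of_ae_le_mul (Eventually.of_forall fun y => ?_) p).trans
          (by gcongr)
        rw [mul_comm]
        exact (G y - B (y - x₀)).le_opNorm v
    _ = ENNReal.ofReal (D * ‖w‖ * ‖v‖ * ε) := by
        rw [← ENNReal.ofReal_mul (by positivity), ← ENNReal.ofReal_mul (by positivity)]
        congr 1
        field_simp

lemma ContinuousSobolevOn.symmetric_of_eLpNorm_sub_le [CompleteSpace F]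
    (h : ContinuousSobolevOn p u G s μ) (hp : 1 ≤ p) (hs : s ∈ 𝓝 x₀) {B : E →L[ℝ] E →L[ℝ] F}
    (hB : ∀ ε > 0, ∀ᶠ r in 𝓝[>] 0,
      eLpNorm (fun y => G y - B (y - x₀)) p μ[|closedBall x₀ r] ≤ ENNReal.ofReal (ε * r))
    (v w : E) : B v w = B w v := by
  obtain ⟨D, hD, hφ⟩ := exists_bump_norm_fderiv_le μ x₀
  have hbound ε (hε : 0 < ε) : ‖B v w - B w v‖ ≤ 2 * D * ‖v‖ * ‖w‖ * ε := by
    obtain ⟨r, hr, hrs, hrB⟩ := (eventually_mem_nhdsWithin.and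
      ((eventually_nhdsWithin_of_eventually_nhds (eventually_closedBall_subset hs)).and
        (hB ε hε))).exists
    obtain ⟨φ, hφ, hφs, hφ1, hφD⟩ := hφ r hr
    have hbd v w := (h.mono hrs).norm_integral_fderiv_smul_sub_le hp hD hr hφ hφs hφ1 hφD hε.le
      hrB v w
    have hcomm := h.hasWeakFDerivOn.integral_fderiv_smul_apply_comm hφ
      ((isCompact_closedBall x₀ r).of_isClosed_subset (isClosed_tsupport φ) hφs)
      (hφs.trans hrs) v w
    calc ‖B v w - B w v‖ = ‖(∫ y, fderiv ℝ φ y v • G y w ∂μ + B v w) -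
          (∫ y, fderiv ℝ φ y w • G y v ∂μ + B w v)‖ := by rw [hcomm, add_sub_add_left_eq_sub]
      _ ≤ D * ‖v‖ * ‖w‖ * ε + D * ‖w‖ * ‖v‖ * ε := norm_sub_le_of_le (hbd w v) (hbd v w)
      _ = 2 * D * ‖v‖ * ‖w‖ * ε := by ring
  have hlim : Tendsto (fun ε => 2 * D * ‖v‖ * ‖w‖ * ε) (𝓝[>] 0) (𝓝 0) := by
    simpa using (tendsto_id.const_mul (2 * D * ‖v‖ * ‖w‖)).mono_left
      (nhdsWithin_le_nhds (a := (0 : ℝ)))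
  exact sub_eq_zero.1 (norm_le_zero_iff.1
    (ge_of_tendsto hlim (eventually_mem_nhdsWithin.mono fun ε hε => hbound ε hε)))

end Symmetry

section ContactLinearMap

variable {n : ℕ} {E : Type*} [NormedAddCommGroup E] [NormedSpace ℝ E] {q q' : Heis n}
  {L T : E →L[ℝ] Heis n}

/-- The pull-back of the symplectic form under the horizontal part of a linear map. -/
noncomputable def pullbackSymplectic (L : E →L[ℝ] Heis n) : E →L[ℝ] E →L[ℝ] ℝ :=
  (symplecticForm n).bilinearComp ((horizProj n).comp L) ((horizProj n).comp L)

lemma pullbackSymplectic_apply (L : E →L[ℝ] Heis n) (v w : E) :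
    pullbackSymplectic L v w = symplecticForm n (horizProj n (L v)) (horizProj n (L w)) := rfl

lemma abs_symplecticForm_horizProj_le (v w : Heis n) :
    |symplecticForm n (horizProj n v) (horizProj n w)| ≤ ‖symplecticForm n‖ * ‖v‖ * ‖w‖ :=
  (abs_symplecticForm_le _ _).trans (by gcongr <;> exact norm_horizProj_apply_le _)

lemma contactForm_apply_of_forall_mem_kerAlpha (hT : ∀ v, T v ∈ kerAlpha n q') (q : Heis n)
    (v : E) :
    contactForm n q (T v) = 2 * symplecticForm n (horizProj n (q - q')) (horizProj n (T v)) := by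
  rw [contactForm_eq_add q q', mem_kerAlpha_iff.1 (hT v), zero_add]

lemma norm_contactForm_comp_le (hT : ∀ v, T v ∈ kerAlpha n q') (q : Heis n) :
    ‖(contactForm n q).comp T‖ ≤ 2 * ‖symplecticForm n‖ * ‖q - q'‖ * ‖T‖ := by
  refine ContinuousLinearMap.opNorm_le_bound _ (by positivity) fun v => ?_
  rw [ContinuousLinearMap.comp_apply, contactForm_apply_of_forall_mem_kerAlpha hT, norm_mul,
    Real.norm_two]
  calc 2 * ‖symplecticForm n (horizProj n (q - q')) (horizProj n (T v))‖
      ≤ 2 * (‖symplecticForm n‖ * ‖q - q'‖ * (‖T‖ * ‖v‖)) := by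
        gcongr
        exact (abs_symplecticForm_horizProj_le _ _).trans (by gcongr; exact T.le_opNorm v)
    _ = 2 * ‖symplecticForm n‖ * ‖q - q'‖ * ‖T‖ * ‖v‖ := by ring

lemma norm_contactForm_comp_add_pullbackSymplectic_le (hT : ∀ v, T v ∈ kerAlpha n q')
    (L : E →L[ℝ] Heis n) (z : E) :
    ‖(contactForm n q).comp T + (2 : ℝ) • pullbackSymplectic L z‖ ≤
      2 * ‖symplecticForm n‖ * (‖q' - q - L z‖ * ‖T‖ + ‖L‖ * ‖z‖ * ‖T - L‖) := by
  refine ContinuousLinearMap.opNorm_le_bound _ (by positivity) fun v => ?_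
  have hsplit : ((contactForm n q).comp T + (2 : ℝ) • pullbackSymplectic L z) v =
      -2 * (symplecticForm n (horizProj n (q' - q - L z)) (horizProj n (T v)) +
        symplecticForm n (horizProj n (L z)) (horizProj n ((T - L) v))) := by
    simp only [add_apply, smul_apply, ContinuousLinearMap.comp_apply, smul_eq_mul,
      contactForm_apply_of_forall_mem_kerAlpha hT, pullbackSymplectic_apply, map_sub, sub_apply]
    ring
  rw [hsplit, norm_mul, norm_neg, Real.norm_two]
  calc 2 * ‖symplecticForm n (horizProj n (q' - q - L z)) (horizProj n (T v)) +
        symplecticForm n (horizProj n (L z)) (horizProj n ((T - L) v))‖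
      ≤ 2 * (‖symplecticForm n‖ * ‖q' - q - L z‖ * (‖T‖ * ‖v‖) +
          ‖symplecticForm n‖ * (‖L‖ * ‖z‖) * (‖T - L‖ * ‖v‖)) := by
        gcongr
        refine norm_add_le_of_le ((abs_symplecticForm_horizProj_le _ _).trans ?_)
          ((abs_symplecticForm_horizProj_le _ _).trans ?_)
        · gcongr
          exact T.le_opNorm v
        · gcongr
          · exact L.le_opNorm z
          · exact (T - L).le_opNorm v
    _ = _ := by ring

lemma exists_ne_zero_horizProj_apply_eq_zero [FiniteDimensional ℝ E] (hn : n < finrank ℝ E)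
    (hL : pullbackSymplectic L = 0) : ∃ v, v ≠ 0 ∧ horizProj n (L v) = 0 := by
  let B : LinearMap.BilinForm ℝ (Horiz n) := (symplecticForm n).toLinearMap₁₂
  have hB : LinearMap.ker B = ⊥ := LinearMap.ker_eq_bot.2 fun v w hvw =>
    symplecticForm_injective (ContinuousLinearMap.ext fun z => DFunLike.congr_fun hvw z)
  refine exists_ne_zero_map_eq_zero_of_isotropic hB
    (T := ((horizProj n).comp L).toLinearMap) (fun v w => ?_) (by simpa using hn)
  exact congr($hL v w)

end ContactLinearMap

section ContactSobolev

variable {n : ℕ} {E : Type*} [NormedAddCommGroup E] [NormedSpace ℝ E] [MeasurableSpace E]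
  {p : ℝ≥0∞} {f : E → Heis n} {Df : E → E →L[ℝ] Heis n} {Ω s : Set E} {μ : Measure E}
  {L : E →L[ℝ] Heis n} {x₀ : E}

/-- `f` is a continuous `W^{1,p}` map into the Heisenberg group on `Ω` solving the weak contact
equation: almost everywhere, the image of the weak derivative `Df` is horizontal. -/
structure ContactSobolevOn (p : ℝ≥0∞) (f : E → Heis n) (Df : E → E →L[ℝ] Heis n) (Ω : Set E)
    (μ : Measure E) : Prop extends ContinuousSobolevOn p f Df Ω μ where
  ae_mem_kerAlpha : ∀ᵐ x ∂μ.restrict Ω, ∀ v, Df x v ∈ kerAlpha n (f x)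

namespace ContactSobolevOn

lemma mono (h : ContactSobolevOn p f Df Ω μ) (hs : s ⊆ Ω) : ContactSobolevOn p f Df s μ :=
  ⟨h.toContinuousSobolevOn.mono hs, ae_restrict_of_ae_restrict_of_subset hs h.ae_mem_kerAlpha⟩

lemma ae_cond (h : ContactSobolevOn p f Df s μ) (hs : MeasurableSet s) :
    ∀ᵐ x ∂μ[|s], x ∈ s ∧ ∀ v, Df x v ∈ kerAlpha n (f x) :=
  Measure.ae_smul_measure ((ae_restrict_mem hs).and h.ae_mem_kerAlpha) _

variable [FiniteDimensional ℝ E] [BorelSpace E] [μ.IsAddHaarMeasure]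

lemma abs_contactForm_sub_le {x y c : E} {r : ℝ} (h : ContactSobolevOn p f Df (closedBall c r) μ)
    (hp : 1 ≤ p) (hdp : (finrank ℝ E : ℝ≥0∞) < p) (hr : 0 < r) (q : Heis n)
    (hx : x ∈ closedBall c r) (hy : y ∈ closedBall c r) :
    |contactForm n q (f x - f y)| ≤ morreyConst (finrank ℝ E) p * r *
      (eLpNorm (fun z => (contactForm n q).comp (Df z)) p μ[|closedBall c r]).toReal := by
  rw [map_sub]
  exact (h.toContinuousSobolevOn.clm_comp hp (contactForm n q)).norm_sub_le_morreyConst_mul hp hdp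
    hr hx hy

theorem dK_le_mul_eLpNorm {x y c : E} {r : ℝ} (h : ContactSobolevOn p f Df (closedBall c r) μ)
    (hp : 1 ≤ p) (hdp : (finrank ℝ E : ℝ≥0∞) < p) (hr : 0 < r) (hx : x ∈ closedBall c r)
    (hy : y ∈ closedBall c r) :
    dK n (f x) (f y) ≤ 2 * (1 + 2 * ‖symplecticForm n‖) * morreyConst (finrank ℝ E) p * r *
      (eLpNorm Df p μ[|closedBall c r]).toReal := by
  set C := morreyConst (finrank ℝ E) p
  set A := (eLpNorm Df p μ[|closedBall c r]).toReal
  have hC : 0 ≤ C := morreyConst_nonneg hdp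
  have hosc z (hz : z ∈ closedBall c r) : ‖f y - f z‖ ≤ C * r * A :=
    h.norm_sub_le_morreyConst_mul hp hdp hr hy hz
  have hDf : eLpNorm Df p μ[|closedBall c r] ≠ ∞ :=
    (h.memLp.smul_measure (by simp [(measure_closedBall_pos μ c hr).ne'])).2.ne
  have hα : (eLpNorm (fun z => (contactForm n (f y)).comp (Df z)) p μ[|closedBall c r]).toReal ≤
      2 * ‖symplecticForm n‖ * (C * r * A) * A := by
    refine ENNReal.toReal_le_of_le_ofReal (by positivity) ?_
    rw [ENNReal.ofReal_mul (by positivity), ENNReal.ofReal_toReal hDf]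
    refine eLpNorm_le_mul_eLpNorm_of_ae_le_mul ?_ p
    filter_upwards [h.ae_cond measurableSet_closedBall] with z ⟨hz, hzα⟩
    refine (norm_contactForm_comp_le hzα (f y)).trans ?_
    gcongr
    exact hosc z hz
  calc dK n (f x) (f y) ≤ 2 * ((1 + 2 * ‖symplecticForm n‖) * (C * r * A)) := by
        refine dK_le (by positivity) ?_ ?_
        · refine (norm_horizProj_apply_le _).trans
            ((norm_sub_rev _ _).trans_le ((hosc x hx).trans ?_))
          exact le_mul_of_one_le_left (by positivity) (by linarith [norm_nonneg (symplecticForm n)])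
        · calc _ ≤ C * r * (2 * ‖symplecticForm n‖ * (C * r * A) * A) :=
                (h.abs_contactForm_sub_le hp hdp hr (f y) hx hy).trans (by gcongr)
            _ = 2 * ‖symplecticForm n‖ * (C * r * A) ^ 2 := by ring
            _ ≤ (1 + 2 * ‖symplecticForm n‖) ^ 2 * (C * r * A) ^ 2 := by
                gcongr
                nlinarith [norm_nonneg (symplecticForm n)]
            _ = _ := by ring
    _ = _ := by ring

lemma eLpNorm_contactForm_comp_add_le {r η : ℝ} (h : ContactSobolevOn p f Df (closedBall x₀ r) μ)
    (hp : 1 ≤ p) (hr : 0 < r) (hη : 0 ≤ η) (hη1 : η ≤ 1)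
    (hf : ∀ y ∈ closedBall x₀ r, ‖f y - f x₀ - L (y - x₀)‖ ≤ η * r)
    (hDf : eLpNorm (fun y => Df y - L) p μ[|closedBall x₀ r] ≤ ENNReal.ofReal η) :
    eLpNorm (fun y => (contactForm n (f x₀)).comp (Df y) +
        (2 : ℝ) • pullbackSymplectic L (y - x₀)) p μ[|closedBall x₀ r] ≤
      ENNReal.ofReal (4 * ‖symplecticForm n‖ * (‖L‖ + 1) * η * r) := by
  have : IsProbabilityMeasure μ[|closedBall x₀ r] :=
    ProbabilityTheory.cond_isProbabilityMeasure_of_finite (measure_closedBall_pos μ x₀ hr).ne'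
      measure_closedBall_lt_top.ne
  have hpoint : ∀ᵐ y ∂μ[|closedBall x₀ r], ‖(contactForm n (f x₀)).comp (Df y) +
      (2 : ℝ) • pullbackSymplectic L (y - x₀)‖ ≤
        2 * ‖symplecticForm n‖ * (‖L‖ + 1) * r * ‖η + ‖Df y - L‖‖ := by
    filter_upwards [h.ae_cond measurableSet_closedBall] with y ⟨hy, hyα⟩
    have hDy : ‖Df y‖ ≤ ‖L‖ + ‖Df y - L‖ := norm_le_norm_add_norm_sub' _ _
    have hyr : ‖y - x₀‖ ≤ r := mem_closedBall_iff_norm.1 hy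
    calc _ ≤ 2 * ‖symplecticForm n‖ *
            (η * r * (‖L‖ + ‖Df y - L‖) + ‖L‖ * r * ‖Df y - L‖) :=
          (norm_contactForm_comp_add_pullbackSymplectic_le hyα L (y - x₀)).trans
            (by gcongr; exact hf y hy)
      _ = 2 * ‖symplecticForm n‖ * r * (η * ‖L‖ + (η + ‖L‖) * ‖Df y - L‖) := by ring
      _ ≤ 2 * ‖symplecticForm n‖ * r * (η * (‖L‖ + 1) + (1 + ‖L‖) * ‖Df y - L‖) := by
          gcongr; linarith
      _ = 2 * ‖symplecticForm n‖ * (‖L‖ + 1) * r * ‖η + ‖Df y - L‖‖ := by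
          rw [Real.norm_of_nonneg (by positivity)]; ring
  have hmeas : AEStronglyMeasurable (fun y => ‖Df y - L‖) μ[|closedBall x₀ r] :=
    (h.memLp.aestronglyMeasurable.smul_measure _).sub aestronglyMeasurable_const |>.norm
  calc _ ≤ ENNReal.ofReal (2 * ‖symplecticForm n‖ * (‖L‖ + 1) * r) *
          eLpNorm (fun y => η + ‖Df y - L‖) p μ[|closedBall x₀ r] :=
        eLpNorm_le_mul_eLpNorm_of_ae_le_mul hpoint p
    _ ≤ ENNReal.ofReal (2 * ‖symplecticForm n‖ * (‖L‖ + 1) * r) *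
          (ENNReal.ofReal η + ENNReal.ofReal η) := by
        gcongr
        refine (eLpNorm_add_le aestronglyMeasurable_const hmeas hp).trans (add_le_add ?_ ?_)
        · rw [eLpNorm_const _ (one_pos.trans_le hp).ne' (NeZero.ne _), measure_univ,
            ENNReal.one_rpow, mul_one, Real.enorm_of_nonneg hη]
        · rwa [eLpNorm_norm]
    _ = ENNReal.ofReal (4 * ‖symplecticForm n‖ * (‖L‖ + 1) * η * r) := by
        rw [← ENNReal.ofReal_add hη hη, ← ENNReal.ofReal_mul (by positivity)]
        congr 1
        ring

lemma eventually_eLpNorm_contactForm_comp_add_le (h : ContactSobolevOn p f Df Ω μ) (hp : 1 ≤ p)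
    (hdp : (finrank ℝ E : ℝ≥0∞) < p) (hΩ : Ω ∈ 𝓝 x₀) (hL : HasLebesgueValue p Df L x₀ μ) {ε : ℝ}
    (hε : 0 < ε) :
    ∀ᶠ r in 𝓝[>] 0, eLpNorm (fun y => (contactForm n (f x₀)).comp (Df y) +
      (2 : ℝ) • pullbackSymplectic L (y - x₀)) p μ[|closedBall x₀ r] ≤ ENNReal.ofReal (ε * r) := by
  have hlim : Tendsto (fun η => 4 * ‖symplecticForm n‖ * (‖L‖ + 1) * η) (𝓝[>] 0) (𝓝 0) := by
    simpa using (tendsto_id.const_mul (4 * ‖symplecticForm n‖ * (‖L‖ + 1))).mono_left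
      (nhdsWithin_le_nhds (a := (0 : ℝ)))
  obtain ⟨η, hηε, hη0, hη1⟩ :=
    ((hlim.eventually (ge_mem_nhds hε)).and (Ioc_mem_nhdsGT one_pos)).exists
  have hdiff := h.toContinuousSobolevOn.hasFDerivAt hp hdp hΩ hL
  filter_upwards [hL.eventually (ge_mem_nhds (ENNReal.ofReal_pos.2 hη0)),
    (eventually_forall_mem_closedBall_norm_sub_le hdiff hη0).filter_mono nhdsWithin_le_nhds,
    (eventually_closedBall_subset hΩ).filter_mono nhdsWithin_le_nhds, self_mem_nhdsWithin]
    with r hDf hf hrΩ hr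
  refine ((h.mono hrΩ).eLpNorm_contactForm_comp_add_le hp hr hη0.le hη1 hf hDf).trans ?_
  have : 0 ≤ r := le_of_lt hr
  gcongr

theorem pullbackSymplectic_eq_zero (h : ContactSobolevOn p f Df Ω μ) (hp : 1 ≤ p)
    (hdp : (finrank ℝ E : ℝ≥0∞) < p) (hΩ : Ω ∈ 𝓝 x₀) (hL : HasLebesgueValue p Df L x₀ μ) :
    pullbackSymplectic L = 0 := by
  have hsymm v w : (-(2 : ℝ) • pullbackSymplectic L) v w = (-(2 : ℝ) • pullbackSymplectic L) w v :=
    (h.toContinuousSobolevOn.clm_comp hp (contactForm n (f x₀))).symmetric_of_eLpNorm_sub_le hp hΩ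
      (fun ε hε => by
        simpa only [smul_apply, neg_smul, sub_neg_eq_add, neg_apply] using
          h.eventually_eLpNorm_contactForm_comp_add_le hp hdp hΩ hL hε) v w
  ext v w
  have hswap : pullbackSymplectic L v w = -pullbackSymplectic L w v := symplecticForm_swap _ _
  have := hsymm v w
  simp only [smul_apply, smul_eq_mul] at this
  rw [zero_apply, zero_apply]
  linarith

lemma eventually_abs_contactForm_sub_le (h : ContactSobolevOn p f Df Ω μ) (hp : 1 ≤ p)
    (hdp : (finrank ℝ E : ℝ≥0∞) < p) (hΩ : Ω ∈ 𝓝 x₀) (hL : HasLebesgueValue p Df L x₀ μ) {ε : ℝ}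
    (hε : 0 < ε) :
    ∀ᶠ r in 𝓝[>] 0, ∀ y ∈ closedBall x₀ r,
      |contactForm n (f x₀) (f y - f x₀)| ≤ ε * r ^ 2 := by
  have hC : 0 ≤ morreyConst (finrank ℝ E) p := morreyConst_nonneg hdp
  have hlim : Tendsto (fun η => morreyConst (finrank ℝ E) p * η) (𝓝[>] 0) (𝓝 0) := by
    simpa using (tendsto_id.const_mul (morreyConst (finrank ℝ E) p)).mono_left
      (nhdsWithin_le_nhds (a := (0 : ℝ)))
  obtain ⟨η, hηε, hη⟩ := ((hlim.eventually (ge_mem_nhds hε)).and self_mem_nhdsWithin).exists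
  filter_upwards [h.eventually_eLpNorm_contactForm_comp_add_le hp hdp hΩ hL hη,
    (eventually_closedBall_subset hΩ).filter_mono nhdsWithin_le_nhds, self_mem_nhdsWithin]
    with r hα hrΩ hr y hy
  replace hr : 0 < r := hr
  replace hη : 0 < η := hη
  simp only [h.pullbackSymplectic_eq_zero hp hdp hΩ hL, zero_apply, smul_zero, add_zero] at hα
  calc |contactForm n (f x₀) (f y - f x₀)|
      ≤ morreyConst (finrank ℝ E) p * r * (η * r) :=
        ((h.mono hrΩ).abs_contactForm_sub_le hp hdp hr _ hy (mem_closedBall_self hr.le)).trans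
          (by gcongr; exact ENNReal.toReal_le_of_le_ofReal (by positivity) hα)
    _ = morreyConst (finrank ℝ E) p * η * r ^ 2 := by ring
    _ ≤ ε * r ^ 2 := by gcongr

end ContactSobolevOn

end ContactSobolev

section Grid

variable {E : Type*} [NormedAddCommGroup E] [NormedSpace ℝ E] {m N : ℕ} {r : ℝ}

lemma exists_finset_cover_closedBall_norm_pi_le (S : E →L[ℝ] Fin m → ℝ) (x₀ : E) (hr : 0 < r)
    (hN : 1 ≤ N) :
    ∃ P : Finset (Set E), (P.card : ℝ) ≤ ((2 * ‖S‖ + 3) * N) ^ m ∧ closedBall x₀ r ⊆ ⋃ s ∈ P, s ∧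
      ∀ s ∈ P, ∀ y ∈ s, ∀ y' ∈ s, ‖S (y - y')‖ ≤ r / N := by
  classical
  have hN0 : (0 : ℝ) < N := by exact_mod_cast hN
  let idx (y : E) (i : Fin m) : ℤ := ⌊S (y - x₀) i * (N / r)⌋
  let K : ℤ := ⌈‖S‖ * N⌉
  have hK : 0 ≤ K := Int.ceil_nonneg (by positivity)
  let I : Finset (Fin m → ℤ) := Fintype.piFinset fun _ => Finset.Icc (-K) K
  refine ⟨I.image fun a => {y | idx y = a}, ?_, fun y hy => ?_, ?_⟩
  · have hcard : ((Finset.Icc (-K) K).card : ℝ) = 2 * K + 1 := by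
      have h : ((Finset.Icc (-K) K).card : ℤ) = 2 * K + 1 := by
        rw [Int.card_Icc, Int.toNat_of_nonneg (by linarith)]; ring
      exact_mod_cast h
    calc ((I.image fun a => {y | idx y = a}).card : ℝ) ≤ I.card :=
          Nat.cast_le.2 Finset.card_image_le
      _ = (2 * K + 1 : ℝ) ^ m := by
          rw [Fintype.card_piFinset_const, Nat.cast_pow, hcard]
      _ ≤ ((2 * ‖S‖ + 3) * N) ^ m := by
          have hceil : (K : ℝ) < ‖S‖ * N + 1 := Int.ceil_lt_add_one _
          have hN1 : (1 : ℝ) ≤ N := by exact_mod_cast hN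
          gcongr
          linarith
  · have hcoord i : |S (y - x₀) i * (N / r)| ≤ K := by
      refine le_trans ?_ (Int.le_ceil _)
      calc |S (y - x₀) i * (N / r)| = ‖S (y - x₀) i‖ * (N / r) := by
            rw [abs_mul, abs_of_pos (div_pos hN0 hr), Real.norm_eq_abs]
        _ ≤ ‖S‖ * r * (N / r) := by
            gcongr
            exact (norm_le_pi_norm _ i).trans
              (S.le_opNorm_of_le (mem_closedBall_iff_norm.1 hy))
        _ = ‖S‖ * N := by field_simp
    refine mem_iUnion₂.2 ⟨_, Finset.mem_image_of_mem _ (a := idx y) ?_, rfl⟩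
    refine Fintype.mem_piFinset.2 fun i => Finset.mem_Icc.2 ⟨Int.le_floor.2 ?_, ?_⟩
    · exact_mod_cast (abs_le.1 (hcoord i)).1
    · exact Int.cast_le.1 ((Int.floor_le _).trans (abs_le.1 (hcoord i)).2)
  · simp only [Finset.forall_mem_image]
    rintro a - y (hy : idx y = a) y' (hy' : idx y' = a)
    refine (pi_norm_le_iff_of_nonneg (by positivity)).2 fun i => ?_
    have hlt := Int.abs_sub_lt_one_of_floor_eq_floor (congrFun (hy.trans hy'.symm) i)
    rw [← sub_mul, abs_mul, abs_of_pos (div_pos hN0 hr), ← Pi.sub_apply, ← map_sub,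
      sub_sub_sub_cancel_right, ← lt_div_iff₀ (by positivity), one_div_div] at hlt
    exact hlt.le

theorem exists_finset_cover_closedBall_norm_le [FiniteDimensional ℝ E] {W : Type*}
    [NormedAddCommGroup W] [NormedSpace ℝ W] {T : E →L[ℝ] W} (hT : ∃ v, v ≠ 0 ∧ T v = 0) :
    ∃ C, 0 ≤ C ∧ ∀ (x₀ : E) (r : ℝ), 0 < r → ∀ N : ℕ, 1 ≤ N →
      ∃ P : Finset (Set E), (P.card : ℝ) ≤ C * N ^ (finrank ℝ E - 1) ∧
        closedBall x₀ r ⊆ ⋃ s ∈ P, s ∧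
        ∀ s ∈ P, ∀ y ∈ s, ∀ y' ∈ s, ‖T (y - y')‖ ≤ C * (r / N) := by
  let R := LinearMap.range T.toLinearMap
  let e : R ≃L[ℝ] (Fin (finrank ℝ R) → ℝ) :=
    ContinuousLinearEquiv.ofFinrankEq (by simp)
  have hm : finrank ℝ R ≤ finrank ℝ E - 1 := by
    obtain ⟨v, hv, hTv⟩ := hT
    have hker : 0 < finrank ℝ (LinearMap.ker T.toLinearMap) :=
      finrank_pos_iff_exists_ne_zero.2 ⟨⟨v, hTv⟩, fun h => hv (congrArg Subtype.val h)⟩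
    have : finrank ℝ R + _ = finrank ℝ E := T.toLinearMap.finrank_range_add_finrank_ker
    omega
  let S : E →L[ℝ] Fin (finrank ℝ R) → ℝ := e.toContinuousLinearMap.comp T.rangeRestrict
  let e' : (Fin (finrank ℝ R) → ℝ) →L[ℝ] R := e.symm
  have hTS v : T v = e' (S v) := by simp [S, e']
  refine ⟨max ((2 * ‖S‖ + 3) ^ finrank ℝ R) ‖e'‖, by positivity,
    fun x₀ r hr N hN => ?_⟩
  obtain ⟨P, hcard, hcov, hP⟩ := exists_finset_cover_closedBall_norm_pi_le S x₀ hr hN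
  refine ⟨P, hcard.trans ?_, hcov, fun s hs y hy y' hy' => ?_⟩
  · rw [mul_pow]
    have hN1 : (1 : ℝ) ≤ N := by exact_mod_cast hN
    gcongr
    exact le_max_left _ _
  · rw [hTS]
    calc ‖e' (S (y - y'))‖ ≤ ‖e'‖ * ‖S (y - y')‖ :=
          e'.le_opNorm _
      _ ≤ _ := by
          gcongr
          · exact le_max_right _ _
          · exact hP s hs y hy y' hy'

end Grid

section SmallPieces

variable {n : ℕ} {E : Type*} [NormedAddCommGroup E] [NormedSpace ℝ E] {L : E →L[ℝ] Heis n}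
  {q₀ q q' : Heis n} {z z' : E} {r θ : ℝ}

lemma norm_horizProj_sub_apply_le {a : ℝ} (hq : ‖q - q₀ - L z‖ ≤ a) :
    ‖horizProj n (q - q₀) - horizProj n (L z)‖ ≤ a := by
  rw [← map_sub]
  exact (norm_horizProj_apply_le _).trans hq

lemma norm_horizProj_sub_le (hq : ‖q - q₀ - L z‖ ≤ θ ^ 2 * r)
    (hq' : ‖q' - q₀ - L z'‖ ≤ θ ^ 2 * r) :
    ‖horizProj n (q - q')‖ ≤ ‖horizProj n (L (z - z'))‖ + 2 * θ ^ 2 * r := by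
  have hsplit : horizProj n (q - q') = horizProj n (L (z - z')) +
      ((horizProj n (q - q₀) - horizProj n (L z)) -
        (horizProj n (q' - q₀) - horizProj n (L z'))) := by
    simp only [map_sub]; abel
  rw [hsplit]
  refine norm_add_le_of_le le_rfl ((norm_sub_le_of_le (norm_horizProj_sub_apply_le hq)
    (norm_horizProj_sub_apply_le hq')).trans_eq ?_)
  ring

/-- The image of `L` being isotropic, only the first-order errors contribute. -/
lemma abs_symplecticForm_horizProj_sub_le (hL : pullbackSymplectic L = 0) (hz : ‖z‖ ≤ r)
    (hz' : ‖z'‖ ≤ r) (hθ : θ ^ 2 ≤ 1) (hq : ‖q - q₀ - L z‖ ≤ θ ^ 2 * r)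
    (hq' : ‖q' - q₀ - L z'‖ ≤ θ ^ 2 * r) :
    |symplecticForm n (horizProj n (q' - q₀)) (horizProj n (q - q₀))| ≤
      ‖symplecticForm n‖ * (2 * ‖L‖ + 1) * (θ * r) ^ 2 := by
  have hr : 0 ≤ r := (norm_nonneg z).trans hz
  have hisot : symplecticForm n (horizProj n (L z')) (horizProj n (L z)) = 0 := congr($hL z' z)
  have hLz {z : E} (hz : ‖z‖ ≤ r) : ‖horizProj n (L z)‖ ≤ ‖L‖ * r :=
    (norm_horizProj_apply_le _).trans (L.le_opNorm_of_le hz)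
  have hqr : ‖horizProj n (q - q₀)‖ ≤ (‖L‖ + 1) * r := by
    have := norm_le_norm_add_norm_sub' (horizProj n (q - q₀)) (horizProj n (L z))
    have : θ ^ 2 * r ≤ r := mul_le_of_le_one_left hr hθ
    linarith [hLz hz, norm_horizProj_sub_apply_le hq]
  have hsplit : symplecticForm n (horizProj n (q' - q₀)) (horizProj n (q - q₀)) =
      symplecticForm n (horizProj n (q' - q₀) - horizProj n (L z')) (horizProj n (q - q₀)) +
      symplecticForm n (horizProj n (L z')) (horizProj n (q - q₀) - horizProj n (L z)) := by
    rw [(symplecticForm n).map_sub, sub_apply, (symplecticForm n _).map_sub, hisot]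
    ring
  calc _ ≤ ‖symplecticForm n‖ * (θ ^ 2 * r) * ((‖L‖ + 1) * r) +
          ‖symplecticForm n‖ * (‖L‖ * r) * (θ ^ 2 * r) := by
        rw [hsplit]
        refine (abs_add_le _ _).trans (add_le_add ((abs_symplecticForm_le _ _).trans ?_)
          ((abs_symplecticForm_le _ _).trans ?_))
        · gcongr
          exact norm_horizProj_sub_apply_le hq'
        · gcongr
          · exact hLz hz'
          · exact norm_horizProj_sub_apply_le hq
    _ = _ := by ring

/-- The factor in the Korányi-diameter bound for sets on which `π ∘ L` oscillates little. -/
noncomputable def pieceConst (C : ℝ) (L : E →L[ℝ] Heis n) : ℝ :=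
  2 * (C + 4 + 2 * ‖symplecticForm n‖ * (2 * ‖L‖ + 1))

lemma pieceConst_nonneg {C : ℝ} (hC : 0 ≤ C) : 0 ≤ pieceConst C L := by
  unfold pieceConst
  positivity

lemma dK_le_pieceConst_mul (hL : pullbackSymplectic L = 0) {C : ℝ} (hC : 0 ≤ C) (hθ : 0 ≤ θ)
    (hθ1 : θ ≤ 1) (hz : ‖z‖ ≤ r) (hz' : ‖z'‖ ≤ r) (hq : ‖q - q₀ - L z‖ ≤ θ ^ 2 * r)
    (hq' : ‖q' - q₀ - L z'‖ ≤ θ ^ 2 * r) (hα : |contactForm n q₀ (q - q₀)| ≤ θ ^ 2 * r ^ 2)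
    (hα' : |contactForm n q₀ (q' - q₀)| ≤ θ ^ 2 * r ^ 2)
    (hzz' : ‖horizProj n (L (z - z'))‖ ≤ C * (θ * r)) :
    dK n q q' ≤ pieceConst C L * (θ * r) := by
  have hr : 0 ≤ r := (norm_nonneg z).trans hz
  have hθ2 : θ ^ 2 ≤ 1 := pow_le_one₀ hθ hθ1
  set κ := 2 * ‖symplecticForm n‖ * (2 * ‖L‖ + 1)
  have hκ : 0 ≤ κ := by positivity
  refine (dK_le (a := (C + 4 + κ) * (θ * r)) (by positivity) ?_ ?_).trans_eq
    (mul_assoc _ _ _).symm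
  · calc _ ≤ C * (θ * r) + 2 * θ ^ 2 * r :=
          (norm_horizProj_sub_le hq hq').trans (by gcongr)
      _ = (C + 2 * θ) * (θ * r) := by ring
      _ ≤ _ := mul_le_mul_of_nonneg_right (by linarith) (by positivity)
  · have hω := abs_symplecticForm_horizProj_sub_le hL hz hz' hθ2 hq hq'
    calc |contactForm n q' (q - q')| ≤ θ ^ 2 * r ^ 2 + θ ^ 2 * r ^ 2 +
            2 * (‖symplecticForm n‖ * (2 * ‖L‖ + 1) * (θ * r) ^ 2) := by
          rw [contactForm_sub_eq q₀]
          refine (abs_add_le _ _).trans (add_le_add ((abs_sub _ _).trans (add_le_add hα hα')) ?_)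
          rw [abs_mul, abs_two]
          gcongr
      _ = (2 + κ) * (θ * r) ^ 2 := by ring
      _ ≤ (C + 4 + κ) ^ 2 * (θ * r) ^ 2 := by
          gcongr
          nlinarith
      _ = _ := by ring

end SmallPieces

section DensityComparison

variable {α : Type*} [MetricSpace α] [SecondCountableTopology α] [HasBesicovitchCovering α]
  [MeasurableSpace α] [OpensMeasurableSpace α] {θ : OuterMeasure α} {ν : Measure α} [SFinite ν]
  [ν.OuterRegular] {s : Set α}

lemma outerMeasure_le_mul_of_forall_eventually_closedBall_le {c : ℝ≥0}
    (hs : ∀ x ∈ s, ∀ᶠ r in 𝓝[>] 0, θ (closedBall x r) ≤ c * ν (closedBall x r)) :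
    θ s ≤ c * ν s := by
  have hadd (ε : ℝ≥0∞) (hε : ε ≠ 0) : θ s ≤ c * (ν s + ε) := by
    obtain ⟨t, r, htc, -, htr, hst, hsum⟩ :=
      Besicovitch.exists_closedBall_covering_tsum_measure_le ν hε
        (fun x => {r | θ (closedBall x r) ≤ c * ν (closedBall x r)}) s
        fun x hx δ hδ => ((hs x hx).and (Ioo_mem_nhdsGT hδ)).exists
    calc θ s ≤ θ (⋃ x ∈ t, closedBall x (r x)) := measure_mono hst
      _ ≤ ∑' x : t, θ (closedBall x (r x)) := measure_biUnion_le θ htc _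
      _ ≤ ∑' x : t, c * ν (closedBall x (r x)) := ENNReal.tsum_le_tsum fun x => htr x x.2
      _ = c * ∑' x : t, ν (closedBall x (r x)) := ENNReal.tsum_mul_left
      _ ≤ c * (ν s + ε) := by gcongr
  have hlim : Tendsto (fun ε => c * (ν s + ε)) (𝓝[>] 0) (𝓝 (c * (ν s + 0))) :=
    ENNReal.Tendsto.const_mul
      (((continuous_const_add (ν s)).tendsto 0).mono_left nhdsWithin_le_nhds)
      (Or.inr ENNReal.coe_ne_top)
  rw [add_zero] at hlim
  exact ge_of_tendsto hlim (eventually_nhdsWithin_of_forall fun ε hε => hadd ε (ne_of_gt hε))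

lemma outerMeasure_eq_zero_of_forall_eventually_closedBall_le (hνs : ν s ≠ ∞)
    (hs : ∀ x ∈ s, ∀ ε : ℝ≥0, 0 < ε →
      ∀ᶠ r in 𝓝[>] 0, θ (closedBall x r) ≤ ε * ν (closedBall x r)) : θ s = 0 := by
  have hlim : Tendsto (fun ε : ℝ≥0 => ε * ν s) (𝓝[>] 0) (𝓝 (0 * ν s)) :=
    ENNReal.Tendsto.mul_const
      ((ENNReal.continuous_coe.tendsto 0).mono_left nhdsWithin_le_nhds) (Or.inr hνs)
  rw [zero_mul] at hlim
  exact nonpos_iff_eq_zero.1 <| ge_of_tendsto hlim <| eventually_nhdsWithin_of_forall fun ε hε =>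
    outerMeasure_le_mul_of_forall_eventually_closedBall_le fun x hx => hs x hx ε hε

end DensityComparison

section GoodPoints

variable {n : ℕ} {E : Type*} [NormedAddCommGroup E] [NormedSpace ℝ E] [FiniteDimensional ℝ E]
  {f : E → Heis n} {L : E →L[ℝ] Heis n} {x₀ : E}

lemma kContent_image_le_card_mul {α : Type*} {f : α → Heis n} {s : Set α} {P : Finset (Set α)}
    (hP : s ⊆ ⋃ t ∈ P, t) {d : ℕ} {a : ℝ} (ha : 0 ≤ a)
    (hf : ∀ t ∈ P, ∀ y ∈ t ∩ s, ∀ y' ∈ t ∩ s, dK n (f y) (f y') ≤ a) :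
    kContent n d (f '' s) ≤ ENNReal.ofReal (P.card * a ^ d) := by
  have himage : f '' s ⊆ ⋃ t ∈ P, f '' (t ∩ s) := by
    simp only [← image_iUnion₂, ← iUnion₂_inter]
    exact image_mono (subset_inter hP Subset.rfl)
  calc kContent n d (f '' s) ≤ ∑ t ∈ P, kContent n d (f '' (t ∩ s)) :=
        (measure_mono himage).trans (measure_biUnion_finset_le P _)
    _ ≤ ∑ _t ∈ P, ENNReal.ofReal (a ^ d) := by
        refine Finset.sum_le_sum fun t ht => kContent_le_ofReal_pow ha ?_
        rintro _ ⟨y, hy, rfl⟩ _ ⟨y', hy', rfl⟩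
        exact hf t ht y hy y' hy'
    _ = ENNReal.ofReal (P.card * a ^ d) := by
        rw [Finset.sum_const, nsmul_eq_mul, ENNReal.ofReal_mul (by positivity),
          ENNReal.ofReal_natCast]

/-- Cutting the ball along a kernel direction of `π ∘ L` takes only about `N ^ (d - 1)` pieces of
image diameter `O(r / N)`, which gains the factor `1 / N`. -/
lemma exists_kContent_image_closedBall_le (hn : n < finrank ℝ E) (hL : pullbackSymplectic L = 0) :
    ∃ C, ∀ (f : E → Heis n) (x₀ : E) (r : ℝ), 0 < r → ∀ N : ℕ, 1 ≤ N →
      (∀ y ∈ closedBall x₀ r, ‖f y - f x₀ - L (y - x₀)‖ ≤ (N : ℝ)⁻¹ ^ 2 * r) →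
      (∀ y ∈ closedBall x₀ r, |contactForm n (f x₀) (f y - f x₀)| ≤ (N : ℝ)⁻¹ ^ 2 * r ^ 2) →
      kContent n (finrank ℝ E) (f '' closedBall x₀ r) ≤
        ENNReal.ofReal (C / N * r ^ finrank ℝ E) := by
  obtain ⟨C, hC, hcover⟩ := exists_finset_cover_closedBall_norm_le (T := (horizProj n).comp L)
    (exists_ne_zero_horizProj_apply_eq_zero hn hL)
  have hK : 0 ≤ pieceConst C L := pieceConst_nonneg hC
  refine ⟨C * pieceConst C L ^ finrank ℝ E, fun f x₀ r hr N hN hfst hsnd => ?_⟩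
  obtain ⟨P, hcard, hPcover, hP⟩ := hcover x₀ r hr N hN
  have hpiece : ∀ t ∈ P, ∀ y ∈ t ∩ closedBall x₀ r, ∀ y' ∈ t ∩ closedBall x₀ r,
      dK n (f y) (f y') ≤ pieceConst C L * ((N : ℝ)⁻¹ * r) := by
    rintro t ht y ⟨hyt, hy⟩ y' ⟨hyt', hy'⟩
    refine dK_le_pieceConst_mul hL hC (by positivity) (Nat.cast_inv_le_one N)
      (mem_closedBall_iff_norm.1 hy) (mem_closedBall_iff_norm.1 hy') (hfst y hy) (hfst y' hy')
      (hsnd y hy) (hsnd y' hy') ?_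
    rw [sub_sub_sub_cancel_right, inv_mul_eq_div]
    exact hP t ht y hyt y' hyt'
  refine (kContent_image_le_card_mul hPcover (by positivity) hpiece).trans
    (ENNReal.ofReal_le_ofReal ?_)
  have hN0 : (N : ℝ) ≠ 0 := by positivity
  calc P.card * (pieceConst C L * ((N : ℝ)⁻¹ * r)) ^ finrank ℝ E
      ≤ C * N ^ (finrank ℝ E - 1) * (pieceConst C L * ((N : ℝ)⁻¹ * r)) ^ finrank ℝ E := by gcongr
    _ = _ := by
        obtain ⟨l, hl⟩ : ∃ l, finrank ℝ E = l + 1 := Nat.exists_eq_add_one.2 (by omega)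
        simp only [hl, Nat.add_sub_cancel, mul_pow, inv_pow]
        field_simp
        ring

variable [MeasurableSpace E] [BorelSpace E] {μ : Measure E} [μ.IsAddHaarMeasure] {p : ℝ≥0∞}
  {Df : E → E →L[ℝ] Heis n} {Ω : Set E}

theorem ContactSobolevOn.eventually_kContent_image_closedBall_le (h : ContactSobolevOn p f Df Ω μ)
    (hn : n < finrank ℝ E) (hp : 1 ≤ p) (hdp : (finrank ℝ E : ℝ≥0∞) < p) (hΩ : Ω ∈ 𝓝 x₀)
    (hL : HasLebesgueValue p Df L x₀ μ) {ε : ℝ≥0} (hε : 0 < ε) :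
    ∀ᶠ r in 𝓝[>] 0,
      kContent n (finrank ℝ E) (f '' closedBall x₀ r) ≤ ε * μ (closedBall x₀ r) := by
  obtain ⟨C, hcontent⟩ :=
    exists_kContent_image_closedBall_le hn (h.pullbackSymplectic_eq_zero hp hdp hΩ hL)
  set V := μ.real (closedBall (0 : E) 1)
  have hV : 0 < V :=
    ENNReal.toReal_pos (measure_closedBall_pos μ _ one_pos).ne' measure_closedBall_lt_top.ne
  obtain ⟨N, hN, hN1⟩ : ∃ N : ℕ, C / N ≤ ε * V ∧ 1 ≤ N :=
    (((tendsto_const_div_atTop_nhds_zero_nat C).eventually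
      (ge_mem_nhds (by positivity : 0 < ε * V))).and (eventually_ge_atTop 1)).exists
  filter_upwards [(eventually_forall_mem_closedBall_norm_sub_le (h.hasFDerivAt hp hdp hΩ hL)
      (ε := (N : ℝ)⁻¹ ^ 2) (by positivity)).filter_mono nhdsWithin_le_nhds,
    h.eventually_abs_contactForm_sub_le hp hdp hΩ hL (ε := (N : ℝ)⁻¹ ^ 2) (by positivity),
    self_mem_nhdsWithin] with r hfst hsnd hr
  replace hr : 0 < r := hr
  calc kContent n (finrank ℝ E) (f '' closedBall x₀ r)
      ≤ ENNReal.ofReal (C / N * r ^ finrank ℝ E) := hcontent f x₀ r hr N hN1 hfst hsnd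
    _ ≤ ENNReal.ofReal (ε * V * r ^ finrank ℝ E) := by gcongr
    _ = ENNReal.ofReal (ε * μ.real (closedBall x₀ r)) := by
        rw [Measure.addHaar_real_closedBall' μ x₀ hr.le]
        congr 1
        ring
    _ = ε * μ (closedBall x₀ r) := by
        rw [ENNReal.ofReal_mul (by positivity), ofReal_measureReal measure_closedBall_lt_top.ne,
          ENNReal.ofReal_coe_nnreal]

end GoodPoints

section Conclusion

variable {n : ℕ} {E : Type*} [NormedAddCommGroup E] [NormedSpace ℝ E] [FiniteDimensional ℝ E]
  [MeasurableSpace E] [BorelSpace E] {μ : Measure E} [μ.IsAddHaarMeasure] {p : ℝ≥0∞}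
  {f : E → Heis n} {Df : E → E →L[ℝ] Heis n} {Ω : Set E}

lemma eLpNorm_pow_le_one_add_lintegral {α F : Type*} [MeasurableSpace α] [NormedAddCommGroup F]
    {ν : Measure α} {g : α → F} {d : ℕ} (hp : p ≠ ∞) (hdp : (d : ℝ≥0∞) < p) :
    eLpNorm g p ν ^ d ≤ 1 + ∫⁻ y, ‖g y‖ₑ ^ p.toReal ∂ν := by
  have hp0 : p ≠ 0 := (zero_le.trans_lt hdp).ne'
  have hd : (d : ℝ) ≤ p.toReal := by simpa using ENNReal.toReal_mono hp hdp.le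
  have hpow : eLpNorm g p ν ^ p.toReal = ∫⁻ y, ‖g y‖ₑ ^ p.toReal ∂ν := by
    rw [eLpNorm_eq_lintegral_rpow_enorm_toReal hp0 hp, ← ENNReal.rpow_mul,
      one_div_mul_cancel (ENNReal.toReal_pos hp0 hp).ne', ENNReal.rpow_one]
  rw [← hpow, ← ENNReal.rpow_natCast]
  obtain hA | hA := le_total (eLpNorm g p ν) 1
  · exact (ENNReal.rpow_le_one hA (by positivity)).trans le_self_add
  · exact (ENNReal.rpow_le_rpow_of_exponent_le hA hd).trans le_add_self

namespace ContactSobolevOn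

lemma exists_kContent_image_closedBall_le_mul_add (n : ℕ) (μ : Measure E) [μ.IsAddHaarMeasure]
    (hp : 1 ≤ p) (hpt : p ≠ ∞) (hdp : (finrank ℝ E : ℝ≥0∞) < p) :
    ∃ C : ℝ≥0, ∀ (f : E → Heis n) (Df : E → E →L[ℝ] Heis n) (c : E) (r : ℝ), 0 < r →
      ContactSobolevOn p f Df (closedBall c r) μ →
      kContent n (finrank ℝ E) (f '' closedBall c r) ≤
        C * (μ (closedBall c r) + ∫⁻ y in closedBall c r, ‖Df y‖ₑ ^ p.toReal ∂μ) := by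
  set d := finrank ℝ E
  set K := 2 * (1 + 2 * ‖symplecticForm n‖) * morreyConst d p
  have hK : 0 ≤ K := mul_nonneg (by positivity) (morreyConst_nonneg hdp)
  set V := μ (closedBall (0 : E) 1)
  have hV : V ≠ 0 := (measure_closedBall_pos μ _ one_pos).ne'
  have hV' : V ≠ ∞ := measure_closedBall_lt_top.ne
  refine ⟨(ENNReal.ofReal (K ^ d) / V).toNNReal, fun f Df c r hr h => ?_⟩
  rw [ENNReal.coe_toNNReal (ENNReal.div_ne_top ENNReal.ofReal_ne_top hV)]
  set B := closedBall c r
  have hB : μ B = ENNReal.ofReal (r ^ d) * V := μ.addHaar_closedBall' c hr.le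
  have hB0 : μ B ≠ 0 := (measure_closedBall_pos μ c hr).ne'
  have hB' : μ B ≠ ∞ := measure_closedBall_lt_top.ne
  have hA : eLpNorm Df p μ[|B] ≠ ∞ := (h.memLp.smul_measure (by simp [hB0])).2.ne
  calc kContent n d (f '' B)
      ≤ ENNReal.ofReal ((K * r * (eLpNorm Df p μ[|B]).toReal) ^ d) := by
        refine kContent_le_ofReal_pow (by positivity) ?_
        rintro _ ⟨x, hx, rfl⟩ _ ⟨y, hy, rfl⟩
        exact h.dK_le_mul_eLpNorm hp hdp hr hx hy
    _ = ENNReal.ofReal (K ^ d) * ENNReal.ofReal (r ^ d) * eLpNorm Df p μ[|B] ^ d := by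
        rw [mul_pow, mul_pow, ENNReal.ofReal_mul (by positivity),
          ENNReal.ofReal_mul (by positivity), ← ENNReal.toReal_pow,
          ENNReal.ofReal_toReal (ENNReal.pow_ne_top hA)]
    _ = ENNReal.ofReal (K ^ d) / V * (μ B * eLpNorm Df p μ[|B] ^ d) := by
        rw [hB, mul_comm _ V, mul_assoc V, ← mul_assoc _ V, ENNReal.div_mul_cancel hV hV',
          mul_assoc]
    _ ≤ ENNReal.ofReal (K ^ d) / V * (μ B * (1 + ∫⁻ y, ‖Df y‖ₑ ^ p.toReal ∂μ[|B])) := by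
        gcongr
        exact eLpNorm_pow_le_one_add_lintegral hpt hdp
    _ = _ := by
        rw [ProbabilityTheory.cond, lintegral_smul_measure, smul_eq_mul, mul_add, mul_one,
          ENNReal.mul_inv_cancel_left hB0 hB']

lemma kContent_image_eq_zero_of_measure_eq_zero (h : ContactSobolevOn p f Df Ω μ)
    (hΩ : IsOpen Ω) (hμΩ : μ Ω ≠ ∞) (hp : 1 ≤ p) (hpt : p ≠ ∞)
    (hdp : (finrank ℝ E : ℝ≥0∞) < p) {s : Set E} (hsΩ : s ⊆ Ω) (hs : μ s = 0) :
    kContent n (finrank ℝ E) (f '' s) = 0 := by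
  obtain ⟨C, hC⟩ := exists_kContent_image_closedBall_le_mul_add n μ hp hpt hdp
  have hp0 : p ≠ 0 := (zero_lt_one.trans_le hp).ne'
  have : IsFiniteMeasure (μ.restrict Ω) := ⟨by simpa using hμΩ.lt_top⟩
  set ν := (μ.restrict Ω).withDensity fun y => 1 + ‖Df y‖ₑ ^ p.toReal
  have hfin : ∫⁻ y in Ω, (1 + ‖Df y‖ₑ ^ p.toReal) ∂μ ≠ ∞ := by
    rw [lintegral_add_left measurable_const]
    simpa [hμΩ] using (lintegral_rpow_enorm_lt_top_of_eLpNorm_lt_top hp0 hpt h.memLp.2).ne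
  have : IsFiniteMeasure ν := isFiniteMeasure_withDensity hfin
  have hνs : ν s = 0 := (withDensity_absolutelyContinuous _ _).trans
    Measure.absolutelyContinuous_restrict hs
  have hball : ∀ x ∈ s, ∀ᶠ r in 𝓝[>] 0,
      OuterMeasure.comap f (kContent n (finrank ℝ E)) (closedBall x r) ≤
        C * ν (closedBall x r) := by
    intro x hx
    filter_upwards [(eventually_closedBall_subset (hΩ.mem_nhds (hsΩ hx))).filter_mono
      nhdsWithin_le_nhds, self_mem_nhdsWithin] with r hrΩ hr
    rw [withDensity_apply _ measurableSet_closedBall,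
      Measure.restrict_restrict_of_subset hrΩ, lintegral_add_left measurable_const,
      setLIntegral_one]
    exact hC f Df x r hr (h.mono hrΩ)
  simpa [hνs] using outerMeasure_le_mul_of_forall_eventually_closedBall_le hball

theorem kContent_image_eq_zero (h : ContactSobolevOn p f Df Ω μ) (hn : n < finrank ℝ E)
    (hΩ : IsOpen Ω) (hμΩ : μ Ω ≠ ∞) (hp : 1 ≤ p) (hpt : p ≠ ∞)
    (hdp : (finrank ℝ E : ℝ≥0∞) < p) : kContent n (finrank ℝ E) (f '' Ω) = 0 := by
  set good := {x ∈ Ω | HasLebesgueValue p Df (Df x) x μ}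
  set bad := {x ∈ Ω | ¬HasLebesgueValue p Df (Df x) x μ}
  have hgood : OuterMeasure.comap f (kContent n (finrank ℝ E)) good = 0 := by
    refine outerMeasure_eq_zero_of_forall_eventually_closedBall_le (ν := μ)
      (measure_ne_top_of_subset (sep_subset _ _) hμΩ) fun x hx ε hε => ?_
    exact h.eventually_kContent_image_closedBall_le hn hp hdp (hΩ.mem_nhds hx.1) hx.2 hε
  have hbad : kContent n (finrank ℝ E) (f '' bad) = 0 := by
    have : IsFiniteMeasure (μ.restrict Ω) := ⟨by simpa using hμΩ.lt_top⟩
    refine h.kContent_image_eq_zero_of_measure_eq_zero hΩ hμΩ hp hpt hdp (sep_subset _ _) ?_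
    simpa only [ae_restrict_iff' hΩ.measurableSet, ae_iff, Classical.not_imp] using
      ae_restrict_hasLebesgueValue hΩ hp hpt h.memLp
  have hΩ_eq : Ω = good ∪ bad := (sep_or.symm.trans (by simp [em])).symm
  rw [hΩ_eq, image_union]
  exact measure_union_null hgood hbad

end ContactSobolevOn

end Conclusion

section WeakDerivativeTransfer

variable {E : Type*} [NormedAddCommGroup E] [NormedSpace ℝ E] [MeasurableSpace E] [BorelSpace E]
  {F : Type*} [NormedAddCommGroup F] [NormedSpace ℝ F] {μ : Measure E}
  [IsFiniteMeasureOnCompacts μ] {u : E → F} {s : Set E}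

lemma hasWeakFDerivOn_of_span_eq_top {G : E → E →L[ℝ] F} {t : Set E}
    (ht : Submodule.span ℝ t = ⊤) (hu : ContinuousOn u s)
    (hG : ∀ Q, IsCompact Q → Q ⊆ s → IntegrableOn G Q μ)
    (h : ∀ φ : E → ℝ, ContDiff ℝ (⊤ : ℕ∞) φ → HasCompactSupport φ → tsupport φ ⊆ s → ∀ v ∈ t,
      ∫ x, fderiv ℝ φ x v • u x ∂μ = -∫ x, φ x • G x v ∂μ) :
    HasWeakFDerivOn u G s μ := by
  intro φ hφ hc hs v
  have hGv (v : E) : Integrable (fun x => φ x • G x v) μ :=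
    integrable_smul_of_support_subset hc hφ.continuous
      ((hG _ hc hs).apply_continuousLinearMap v) (subset_tsupport φ)
  have hv : v ∈ Submodule.span ℝ t := ht ▸ Submodule.mem_top
  induction hv using Submodule.span_induction with
  | mem v hv => exact h φ hφ hc hs v hv
  | zero => simp
  | add v w _ _ hv hw =>
    simp only [map_add, add_smul, smul_add]
    rw [integral_add (integrable_fderiv_apply_smul hu hφ hc hs v)
      (integrable_fderiv_apply_smul hu hφ hc hs w), integral_add (hGv v) (hGv w), hv, hw, neg_add]
  | smul a v _ hv => simp only [map_smul, smul_assoc, smul_comm _ a, integral_smul, hv, smul_neg]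

/-- Formal integration by parts against a `g` that is not locally integrable says that `∂_v u = 0`:
the integrals of the nonintegrable functions `φ • g` are zero by convention, and a `φ` for which
`φ • g` is integrable becomes a `φ` of this kind after adding `ψ`. -/
lemma integral_fderiv_apply_smul_eq_zero_of_not_integrable {g : E → F} {v : E}
    (hu : ContinuousOn u s)
    (h : ∀ φ : E → ℝ, ContDiff ℝ (⊤ : ℕ∞) φ → HasCompactSupport φ → tsupport φ ⊆ s →
      ∫ x, fderiv ℝ φ x v • u x ∂μ = -∫ x, φ x • g x ∂μ)
    {ψ : E → ℝ} (hψ : ContDiff ℝ (⊤ : ℕ∞) ψ) (hψc : HasCompactSupport ψ) (hψs : tsupport ψ ⊆ s)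
    (hψg : ¬Integrable (fun x => ψ x • g x) μ)
    {φ : E → ℝ} (hφ : ContDiff ℝ (⊤ : ℕ∞) φ) (hφc : HasCompactSupport φ) (hφs : tsupport φ ⊆ s) :
    ∫ x, fderiv ℝ φ x v • u x ∂μ = 0 := by
  by_cases hφg : Integrable (fun x => φ x • g x) μ
  · have hsum : ¬Integrable (fun x => (φ + ψ) x • g x) μ := by
      simpa only [Pi.add_apply, add_smul, integrable_add_iff_integrable_right' hφg] using hψg
    have hφψ := h (φ + ψ) (hφ.add hψ) (hφc.add hψc)
      ((tsupport_add φ ψ).trans (union_subset hφs hψs))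
    have hderiv x : fderiv ℝ (φ + ψ) x v = fderiv ℝ φ x v + fderiv ℝ ψ x v := by
      rw [fderiv_add (hφ.differentiable (by simp) x) (hψ.differentiable (by simp) x), add_apply]
    simp only [hderiv, add_smul] at hφψ
    rwa [integral_undef hsum, integral_add (integrable_fderiv_apply_smul hu hφ hφc hφs v)
      (integrable_fderiv_apply_smul hu hψ hψc hψs v), h ψ hψ hψc hψs, integral_undef hψg, neg_zero,
      add_zero] at hφψ
  · rw [h φ hφ hφc hφs, integral_undef hφg, neg_zero]

end WeakDerivativeTransfer

section MeasurablePartials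

variable {k : ℕ} {F : Type*} [NormedAddCommGroup F] [NormedSpace ℝ F]

lemma span_range_single_one :
    Submodule.span ℝ (range fun i : Fin k => EuclideanSpace.single i (1 : ℝ)) = ⊤ := by
  have hbasis : (fun i : Fin k => EuclideanSpace.single i (1 : ℝ)) =
      (EuclideanSpace.basisFun (Fin k) ℝ).toBasis := by
    ext1 i
    simp
  rw [hbasis]
  exact (EuclideanSpace.basisFun (Fin k) ℝ).toBasis.span_eq

lemma exists_aestronglyMeasurable_clm_comp {α : Type*} [MeasurableSpace α] (ν : Measure α)
    (D : α → EuclideanSpace ℝ (Fin k) →L[ℝ] F) :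
    ∃ P : EuclideanSpace ℝ (Fin k) →L[ℝ] EuclideanSpace ℝ (Fin k),
      AEStronglyMeasurable (fun x => (D x).comp P) ν ∧
      ∀ i, P (EuclideanSpace.single i 1) = EuclideanSpace.single i 1 ∨
        P (EuclideanSpace.single i 1) = 0 ∧
          ¬AEStronglyMeasurable (fun x => D x (EuclideanSpace.single i 1)) ν := by
  classical
  let S : Finset (Fin k) :=
    {i | AEStronglyMeasurable (fun x => D x (EuclideanSpace.single i 1)) ν}
  let P : EuclideanSpace ℝ (Fin k) →L[ℝ] EuclideanSpace ℝ (Fin k) :=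
    ∑ i ∈ S, (EuclideanSpace.proj (𝕜 := ℝ) i).smulRight (EuclideanSpace.single i 1)
  have hcomp : (fun x => (D x).comp P) = fun x => ∑ i ∈ S, ContinuousLinearMap.smulRightL ℝ _ _
      (EuclideanSpace.proj (𝕜 := ℝ) i) (D x (EuclideanSpace.single i 1)) := by
    ext x v
    simp [P]
  refine ⟨P, ?_, fun i => ?_⟩
  · rw [hcomp]
    exact Finset.aestronglyMeasurable_fun_sum _ fun i hi =>
      (ContinuousLinearMap.continuous _).comp_aestronglyMeasurable (Finset.mem_filter.1 hi).2
  · by_cases hi : i ∈ S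
    · exact Or.inl (by simp [P, hi])
    · exact Or.inr ⟨by simp [P, hi], by simpa [S] using hi⟩

end MeasurablePartials

section Localization

lemma aestronglyMeasurable_restrict_support_of_smul {E F : Type*} [TopologicalSpace E]
    [MeasurableSpace E] [BorelSpace E] [NormedAddCommGroup F] [NormedSpace ℝ F] {μ : Measure E}
    {ψ : E → ℝ} {g : E → F} (hψ : Continuous ψ)
    (hg : AEStronglyMeasurable (fun x => ψ x • g x) μ) :
    AEStronglyMeasurable g (μ.restrict (Function.support ψ)) := by
  refine (hψ.measurable.inv.aestronglyMeasurable.smul hg.restrict).congr ?_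
  filter_upwards [ae_restrict_mem hψ.isOpen_support.measurableSet] with x hx
  exact inv_smul_smul₀ hx (g x)

lemma memLp_clm_comp_of_integrable_rpow {α E E' F : Type*} [MeasurableSpace α] {ν : Measure α}
    [NormedAddCommGroup E] [NormedSpace ℝ E] [NormedAddCommGroup E'] [NormedSpace ℝ E']
    [NormedAddCommGroup F] [NormedSpace ℝ F] {D : α → E →L[ℝ] F} {P : E' →L[ℝ] E} {p : ℝ}
    (hp : 0 < p) (hDP : AEStronglyMeasurable (fun x => (D x).comp P) ν)
    (hD : Integrable (fun x => ‖D x‖ ^ p) ν) :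
    MemLp (fun x => (D x).comp P) (ENNReal.ofReal p) ν := by
  rw [← integrable_norm_rpow_iff hDP (by simpa using hp) ENNReal.ofReal_ne_top,
    ENNReal.toReal_ofReal hp.le]
  refine (hD.mul_const (‖P‖ ^ p)).mono'
    (hDP.norm.aemeasurable.pow_const p).aestronglyMeasurable (Eventually.of_forall fun x => ?_)
  rw [Real.norm_of_nonneg (by positivity), ← Real.mul_rpow (by positivity) (by positivity)]
  gcongr
  exact (D x).opNorm_comp_le P

namespace IsWeakFDerivOn

variable {k m n : ℕ} {Ω U : Set (EuclideanSpace ℝ (Fin k))} {p : ℝ}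

lemma integral_fderiv_smul_eq {f : EuclideanSpace ℝ (Fin k) → EuclideanSpace ℝ (Fin m)}
    {Df : EuclideanSpace ℝ (Fin k) → EuclideanSpace ℝ (Fin k) →L[ℝ] EuclideanSpace ℝ (Fin m)}
    (h : IsWeakFDerivOn Ω f Df) {φ : EuclideanSpace ℝ (Fin k) → ℝ} (hφ : ContDiff ℝ (⊤ : ℕ∞) φ)
    (hc : HasCompactSupport φ) (hs : tsupport φ ⊆ Ω) (i : Fin k) :
    ∫ x, fderiv ℝ φ x (EuclideanSpace.single i 1) • f x =
      -∫ x, φ x • Df x (EuclideanSpace.single i 1) := by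
  have hΩ := h φ hφ hc hs i
  rwa [setIntegral_eq_integral_of_forall_compl_eq_zero fun x hx => ?_,
    setIntegral_eq_integral_of_forall_compl_eq_zero fun x hx => ?_] at hΩ
  · rw [image_eq_zero_of_notMem_tsupport fun hx' => hx (hs hx'), zero_smul]
  · rw [Function.notMem_support.1 fun hx' =>
      hx (hs (support_fderiv_apply_subset_tsupport φ _ hx')), zero_smul]

variable {f : EuclideanSpace ℝ (Fin k) → Heis n}
  {Df : EuclideanSpace ℝ (Fin k) → EuclideanSpace ℝ (Fin k) →L[ℝ] Heis n}

/-- The partial derivatives `Df x (e i)` need not be measurable. One that is not satisfies the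
integration by parts formula only through the convention that nonintegrable functions have
integral zero; then `∂f/∂x i` vanishes weakly, and `G` replaces this partial by zero. -/
lemma exists_contactSobolevOn (h : IsWeakFDerivOn Ω f Df) (hp : 1 ≤ p) (hfc : ContinuousOn f Ω)
    (hcontact : ∀ᵐ x, x ∈ Ω → ∀ v, Df x v ∈ kerAlpha n (f x)) (hU : IsOpen U)
    (hUc : IsCompact (closure U)) (hUΩ : closure U ⊆ Ω)
    (hD : IntegrableOn (fun x => ‖Df x‖ ^ p) U) :
    ∃ G, ContactSobolevOn (ENNReal.ofReal p) f G U volume := by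
  obtain ⟨P, hP, hPe⟩ := exists_aestronglyMeasurable_clm_comp (volume.restrict U) Df
  have hLp := memLp_clm_comp_of_integrable_rpow (zero_lt_one.trans_le hp) hP hD
  have hUΩ' : U ⊆ Ω := subset_closure.trans hUΩ
  obtain ⟨ψ, hψU, hψ, -⟩ := hU.exists_contDiff_support_eq (n := (⊤ : ℕ∞))
  have hψt : tsupport ψ = closure U := by rw [tsupport, hψU]
  have hψc : HasCompactSupport ψ := by rwa [HasCompactSupport, hψt]
  have hparts : ∀ φ : EuclideanSpace ℝ (Fin k) → ℝ, ContDiff ℝ (⊤ : ℕ∞) φ → HasCompactSupport φ →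
      tsupport φ ⊆ U → ∀ v ∈ range fun i : Fin k => EuclideanSpace.single i (1 : ℝ),
      ∫ x, fderiv ℝ φ x v • f x = -∫ x, φ x • (Df x).comp P v := by
    rintro φ hφ hc hs _ ⟨i, rfl⟩
    simp only [ContinuousLinearMap.comp_apply]
    rcases hPe i with hi | ⟨hi, hmeas⟩
    · rw [hi, h.integral_fderiv_smul_eq hφ hc (hs.trans hUΩ') i]
    · rw [hi, integral_fderiv_apply_smul_eq_zero_of_not_integrable hfc
        (fun φ hφ hc hs => h.integral_fderiv_smul_eq hφ hc hs i) hψ hψc (hψt.trans_subset hUΩ)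
        (fun hint => hmeas ?_) hφ hc (hs.trans hUΩ')]
      · simp
      · exact hψU ▸ aestronglyMeasurable_restrict_support_of_smul hψ.continuous hint.1
  refine ⟨fun x => (Df x).comp P, ⟨hfc.mono hUΩ', hLp, ?_⟩, ?_⟩
  · refine hasWeakFDerivOn_of_span_eq_top span_range_single_one (hfc.mono hUΩ')
      (fun Q hQ hQU => ?_) hparts
    have : IsFiniteMeasure (volume.restrict Q) := ⟨by simpa using hQ.measure_lt_top⟩
    exact (hLp.mono_measure (Measure.restrict_mono_set _ hQU)).integrable (by simpa using hp)
  · filter_upwards [ae_restrict_of_ae hcontact, ae_restrict_mem hU.measurableSet] with x hx hxU v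
    exact hx (hUΩ' hxU) (P v)

end IsWeakFDerivOn

end Localization

/-- If `k > n ≥ 1`, `p > k`, `Ω ⊆ ℝ^k` is open and
`f ∈ W^{1,p}_loc(Ω; ℝ^{2n+1})` is continuous and satisfies the weak contact equation,
then `f(Ω)` is `ℋ^k_{d_K}`-null. -/
theorem image_null_of_weak_contact_supercritical (n k : ℕ) (hn : 0 < n) (hk : n < k)
    (p : ℝ) (hp : (k : ℝ) < p)
    (Ω : Set (EuclideanSpace ℝ (Fin k))) (hΩ : IsOpen Ω)
    (f : EuclideanSpace ℝ (Fin k) → Heis n)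
    (hfc : ContinuousOn f Ω)
    (hf : LocallyIntegrableOn f Ω)
    (Df : EuclideanSpace ℝ (Fin k) → (EuclideanSpace ℝ (Fin k) →L[ℝ] Heis n))
    (hweak : IsWeakFDerivOn Ω f Df)
    (hDfp : ∀ C : Set (EuclideanSpace ℝ (Fin k)), IsCompact C → C ⊆ Ω →
      IntegrableOn (fun x => ‖Df x‖ ^ p) C)
    (hcontact : ∀ᵐ x, x ∈ Ω → ∀ v, Df x v ∈ kerAlpha n (f x)) :
    IsHausdorffNullK n k (f '' Ω) := by
  have hp1 : 1 ≤ p := (Nat.one_le_cast.2 (by omega : 1 ≤ k)).trans hp.le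
  refine isHausdorffNullK_of_kContent_eq_zero (by omega) ?_
  refine measure_null_of_locally_null (μ := OuterMeasure.comap f (kContent n k)) Ω fun x hx => ?_
  obtain ⟨R, hR, hRΩ⟩ := nhds_basis_closedBall.mem_iff.1 (hΩ.mem_nhds hx)
  have hball : closure (ball x R) ⊆ Ω := closure_ball_subset_closedBall.trans hRΩ
  have hcpt : IsCompact (closure (ball x R)) := isBounded_ball.isCompact_closure
  obtain ⟨G, hG⟩ := hweak.exists_contactSobolevOn hp1 hfc hcontact isOpen_ball hcpt hball
    ((hDfp _ hcpt hball).mono_set subset_closure)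
  refine ⟨ball x R, mem_nhdsWithin_of_mem_nhds (ball_mem_nhds x hR), ?_⟩
  simpa using hG.kContent_image_eq_zero (by simpa using hk) isOpen_ball measure_ball_lt_top.ne
    (ENNReal.one_le_ofReal.2 hp1) ENNReal.ofReal_ne_top
    (by simpa [ENNReal.natCast_lt_ofReal] using hp)
end

section
/- Let k > n be positive integers and let Ω ⊆ ℝ^k be a nonempty open set. Suppose f : Ω → ℝ^{2n+1} is locally Lipschitz with respect to the Euclidean metrics, and suppose there exists a continuous non-decreasing function β : [0,∞) → [0,∞) with β(0) = 0 such that d_K(f(x), f(y)) ≤ |x − y|^{1/2} β(|x − y|) for all x, y ∈ Ω. Then f is not injective. -/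
open MeasureTheory Metric Set
open scoped ENNReal NNReal

/-!
The Hölder condition says that the vertical component of `f x⁻¹ * f y` is `o(|x - y|)`, i.e. that
`f` is tangent to the contact distribution. Integrating this along the edges of a shrinking triangle
at a point of differentiability, the areas swept out by the horizontal projection must vanish to
second order, so the image of the differential is horizontal and isotropic, hence of dimension at
most `n < k`. Thus no differential of `f` is injective.

On the other hand, an injective Lipschitz `f` has an injective differential somewhere. A Lipschitz
approximation `g` of a left inverse makes `g ∘ f` close to the identity of a ball. Gluing `g ∘ f` to
the identity near the boundary, and pushing the gluing region onto the bounding sphere, gives a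
Lipschitz `P` equal to the identity off the ball. If no differential of `f` were injective, `det DP`
would vanish almost everywhere in the ball, yet its integral is the volume of the ball.
-/

open Filter Asymptotics
open scoped Topology

section Contact

variable {E H : Type*} [NormedAddCommGroup E] [NormedSpace ℝ E]
  [NormedAddCommGroup H] [NormedSpace ℝ H]

/-- The vertical defect of the pair `p, q` for a contact form with linear part `T` and symplectic
part `ω`; for the Heisenberg group this is the last coordinate of `q⁻¹ * p`. -/
noncomputable def verticalDefect (T : H →L[ℝ] ℝ) (ω : H →L[ℝ] H →L[ℝ] ℝ) (p q : H) : ℝ :=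
  T p - T q - 2 * ω p q

/-- `f` is tangent at `x` to the contact distribution of `T` and `ω`, expressed through increments
so that no differentiability of `f` is presupposed. -/
def IsContactAt (T : H →L[ℝ] ℝ) (ω : H →L[ℝ] H →L[ℝ] ℝ) (f : E → H) (x : E) : Prop :=
  (fun y => verticalDefect T ω (f x) (f y)) =o[𝓝 x] fun y => y - x

variable {T : H →L[ℝ] ℝ} {ω : H →L[ℝ] H →L[ℝ] ℝ}

theorem verticalDefect_triangle (hω : ∀ p, ω p p = 0) (p q r : H) :
    verticalDefect T ω p q + verticalDefect T ω q r + verticalDefect T ω r p =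
      -2 * ω (q - p) (r - p) := by
  have hrp := hω (r - p)
  have hqp := hω (q - p)
  simp only [map_sub, _root_.sub_apply, verticalDefect, hω] at hrp hqp ⊢
  linarith

theorem norm_image_sub_le_of_eventually_norm_sub_le {G : Type*} [SeminormedAddCommGroup G]
    {h : ℝ → G} {a b c : ℝ} (hab : a ≤ b) (hcont : ContinuousOn h (Icc a b))
    (hslope : ∀ s ∈ Ico a b, ∀ c' > c, ∀ᶠ t in 𝓝[>] s, ‖h t - h s‖ ≤ c' * (t - s)) :
    ‖h b - h a‖ ≤ c * (b - a) := by
  refine image_le_of_liminf_slope_right_le_deriv_boundary (f := fun s => ‖h s - h a‖)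
    (B := fun s => c * (s - a)) (B' := fun _ => c) ?_ (by simp) (by fun_prop)
    (fun s _ => ?_) (fun s hs r hr => ?_) (right_mem_Icc.2 hab)
  · exact (hcont.sub continuousOn_const).norm
  · simpa using (((hasDerivAt_id s).sub_const a).const_mul c).hasDerivWithinAt
  · obtain ⟨c', hc', hc'r⟩ := exists_between hr
    refine Eventually.frequently ?_
    filter_upwards [hslope s hs c' hc', self_mem_nhdsWithin] with t ht hst
    have hpos : 0 < t - s := sub_pos.2 hst
    have htri : ‖h t - h a‖ - ‖h s - h a‖ ≤ ‖h t - h s‖ := by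
      simpa using norm_sub_norm_le (h t - h a) (h s - h a)
    rw [slope_def_field, div_lt_iff₀ hpos]
    calc ‖h t - h a‖ - ‖h s - h a‖ ≤ c' * (t - s) := htri.trans ht
      _ < r * (t - s) := by gcongr

theorem compensated_verticalDefect_sub (hω : ∀ p, ω p p = 0) (p q r d : H) (s t : ℝ) :
    (verticalDefect T ω p r - 2 * t * ω d (r - p - t • d))
        - (verticalDefect T ω p q - 2 * s * ω d (q - p - s • d))
      = verticalDefect T ω q r + 2 * ω (q - p - s • d) (r - q)
        - 2 * (t - s) * ω d (r - p - t • d) := by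
  simp only [verticalDefect, map_sub, map_smul, _root_.sub_apply, _root_.smul_apply, smul_eq_mul,
    hω]
  ring

theorem abs_verticalDefect_le_of_curve (hω : ∀ p, ω p p = 0) {γ : ℝ → H} {m : ℝ≥0}
    (hγ : LipschitzOnWith m γ (Icc 0 1))
    (hcontact : ∀ s ∈ Ico (0 : ℝ) 1,
      (fun t => verticalDefect T ω (γ s) (γ t)) =o[𝓝[>] s] fun t => t - s)
    {d : H} (hd : ‖d‖ ≤ m) {η : ℝ} (hη : ∀ s ∈ Icc (0 : ℝ) 1, ‖γ s - γ 0 - s • d‖ ≤ η) :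
    |verticalDefect T ω (γ 0) (γ 1)| ≤ 6 * (‖ω‖ * m * η) := by
  set e : ℝ → H := fun s => γ s - γ 0 - s • d with he
  -- The increments of `k` are infinitesimal defects plus errors of size `‖ω‖ * m * η`.
  set k : ℝ → ℝ := fun s => verticalDefect T ω (γ 0) (γ s) - 2 * s * ω d (e s) with hk
  have hkcont : ContinuousOn k (Icc 0 1) := by
    have := hγ.continuousOn
    simp only [hk, he, verticalDefect]
    fun_prop
  have hk01 : ‖k 1 - k 0‖ ≤ 4 * (‖ω‖ * m * η) * (1 - 0) := by
    refine norm_image_sub_le_of_eventually_norm_sub_le zero_le_one hkcont fun s hs c' hc' => ?_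
    filter_upwards [(hcontact s hs).def (sub_pos.2 hc'), Ioc_mem_nhdsGT hs.2] with t hτ ht
    have hst : 0 < t - s := sub_pos.2 ht.1
    have hs' : s ∈ Icc (0 : ℝ) 1 := Ico_subset_Icc_self hs
    have ht' : t ∈ Icc (0 : ℝ) 1 := ⟨hs.1.trans ht.1.le, ht.2⟩
    have hγst : ‖γ t - γ s‖ ≤ m * (t - s) := by
      simpa [dist_eq_norm, abs_of_pos hst] using hγ.dist_le_mul t ht' s hs'
    have hes : |ω (e s) (γ t - γ s)| ≤ ‖ω‖ * η * (m * (t - s)) :=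
      ω.le_of_opNorm₂_le_of_le le_rfl (hη s hs') hγst
    have het : (t - s) * |ω d (e t)| ≤ (t - s) * (‖ω‖ * m * η) :=
      mul_le_mul_of_nonneg_left (ω.le_of_opNorm₂_le_of_le le_rfl hd (hη t ht')) hst.le
    rw [Real.norm_eq_abs, Real.norm_eq_abs, abs_of_pos hst] at hτ
    calc |k t - k s|
        = |verticalDefect T ω (γ s) (γ t) + 2 * ω (e s) (γ t - γ s) - 2 * (t - s) * ω d (e t)| :=
          congrArg _ (compensated_verticalDefect_sub hω _ _ _ _ _ _)
      _ ≤ |verticalDefect T ω (γ s) (γ t)| + 2 * |ω (e s) (γ t - γ s)|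
          + 2 * ((t - s) * |ω d (e t)|) := by
          refine (abs_sub _ _).trans ((add_le_add_left (abs_add_le _ _) _).trans_eq ?_)
          simp only [abs_mul, abs_of_pos hst, abs_two, mul_assoc]
      _ ≤ c' * (t - s) := by linarith
  have hend : |ω d (e 1)| ≤ ‖ω‖ * m * η :=
    ω.le_of_opNorm₂_le_of_le le_rfl hd (hη 1 (right_mem_Icc.2 zero_le_one))
  have hk0 : k 0 = 0 := by simp [hk, verticalDefect, hω]
  calc |verticalDefect T ω (γ 0) (γ 1)| = |k 1 - k 0 + 2 * ω d (e 1)| := by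
        rw [hk0]; simp only [hk]; ring_nf
    _ ≤ |k 1 - k 0| + 2 * |ω d (e 1)| := (abs_add_le _ _).trans_eq (by rw [abs_mul, abs_two])
    _ ≤ 6 * (‖ω‖ * m * η) := by rw [Real.norm_eq_abs] at hk01; linarith

theorem abs_verticalDefect_le_of_segment (hω : ∀ p, ω p p = 0) {f : E → H} {L : ℝ≥0} {P Q : E}
    (hf : LipschitzOnWith L f (segment ℝ P Q)) (hcontact : ∀ x ∈ segment ℝ P Q, IsContactAt T ω f x)
    {A : E →L[ℝ] H} (hAL : ‖A‖ ≤ L) {c : H} {η : ℝ}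
    (hη : ∀ x ∈ segment ℝ P Q, ‖f x - (c + A x)‖ ≤ η) :
    |verticalDefect T ω (f P) (f Q)| ≤ 12 * (‖ω‖ * (L * ‖Q - P‖) * η) := by
  have hseg : MapsTo (AffineMap.lineMap P Q) (Icc (0 : ℝ) 1) (segment ℝ P Q) :=
    fun _ => lineMap_mem_segment ℝ P Q
  set γ : ℝ → H := fun s => f (AffineMap.lineMap P Q s) with hγ
  have hlip : LipschitzOnWith (L * ‖Q - P‖₊) γ (Icc 0 1) := by
    rw [← nndist_eq_nnnorm, nndist_comm]
    exact hf.comp (lipschitzWith_lineMap P Q).lipschitzOnWith hseg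
  have htangent (s : ℝ) (hs : s ∈ Ico (0 : ℝ) 1) :
      (fun t => verticalDefect T ω (γ s) (γ t)) =o[𝓝[>] s] fun t => t - s := by
    have hcont : Tendsto (AffineMap.lineMap P Q) (𝓝[>] s) (𝓝 (AffineMap.lineMap P Q s)) :=
      (lipschitzWith_lineMap P Q).continuous.continuousAt.mono_left nhdsWithin_le_nhds
    refine ((hcontact _ (hseg (Ico_subset_Icc_self hs))).comp_tendsto hcont).trans_isBigO
      (.of_bound ‖Q - P‖ (.of_forall fun t => le_of_eq ?_))
    rw [Function.comp_apply, ← dist_eq_norm, dist_lineMap_lineMap, dist_comm P, dist_eq_norm,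
      dist_eq_norm, mul_comm]
  have hdev (s : ℝ) (hs : s ∈ Icc (0 : ℝ) 1) : ‖γ s - γ 0 - s • A (Q - P)‖ ≤ 2 * η := by
    have hsplit : γ s - γ 0 - s • A (Q - P)
        = (γ s - (c + A (AffineMap.lineMap P Q s))) - (f P - (c + A P)) := by
      simp only [hγ, AffineMap.lineMap_apply_zero]
      simp only [AffineMap.lineMap_apply, vsub_eq_sub, vadd_eq_add, map_add, map_smul]
      abel
    rw [hsplit]
    refine (norm_sub_le _ _).trans ?_
    linarith [hη _ (hseg hs), hη P (left_mem_segment ℝ P Q)]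
  have hcurve := abs_verticalDefect_le_of_curve hω hlip htangent
    (by simpa using A.le_of_opNorm_le hAL (Q - P)) hdev
  simp only [hγ, AffineMap.lineMap_apply_zero, AffineMap.lineMap_apply_one,
    NNReal.coe_mul, coe_nnnorm] at hcurve
  linarith

theorem isLittleO_verticalDefect (hω : ∀ p, ω p p = 0) {f : E → H} {x₀ : E} {U : Set E}
    (hU : U ∈ 𝓝 x₀) {L : ℝ≥0} (hf : LipschitzOnWith L f U)
    (hcontact : ∀ x ∈ U, IsContactAt T ω f x) {A : E →L[ℝ] H} (hA : HasFDerivAt f A x₀) :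
    (fun p : E × E => verticalDefect T ω (f p.1) (f p.2)) =o[𝓝 (x₀, x₀)]
      fun p => ‖p - (x₀, x₀)‖ ^ 2 := by
  have hAL : ‖A‖ ≤ L := hA.le_of_lipschitzOn hU hf
  refine isLittleO_iff.2 fun ε hε => ?_
  obtain ⟨δ, hδ, hδε⟩ : ∃ δ > 0, 24 * (‖ω‖ * L) * δ ≤ ε :=
    ⟨ε / (24 * (‖ω‖ * L) + 1), by positivity, by
      rw [mul_div_assoc', div_le_iff₀ (by positivity)]; linarith⟩
  obtain ⟨r, hr, hball⟩ := Metric.mem_nhds_iff.1 (inter_mem hU (hA.isLittleO.def hδ))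
  filter_upwards [ball_mem_nhds (x₀, x₀) hr] with ⟨P, Q⟩ hPQ
  set ρ := ‖(P, Q) - (x₀, x₀)‖ with hρ
  have hP : ‖P - x₀‖ ≤ ρ := by simp [hρ]
  have hQ : ‖Q - x₀‖ ≤ ρ := by simp [hρ]
  have hlen : ‖Q - P‖ ≤ 2 * ρ := by
    rw [← sub_sub_sub_cancel_right Q P x₀]
    linarith [norm_sub_le (Q - x₀) (P - x₀)]
  have hseg : segment ℝ P Q ⊆ closedBall x₀ ρ :=
    (convex_closedBall x₀ ρ).segment_subset (by simpa [dist_eq_norm]) (by simpa [dist_eq_norm])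
  have hsub : segment ℝ P Q ⊆ ball x₀ r :=
    hseg.trans (closedBall_subset_ball (by rwa [mem_ball, dist_eq_norm] at hPQ))
  have hdev (x : E) (hx : x ∈ segment ℝ P Q) : ‖f x - (f x₀ - A x₀ + A x)‖ ≤ δ * ρ := by
    have hxρ : ‖x - x₀‖ ≤ ρ := by simpa [dist_eq_norm] using hseg hx
    calc ‖f x - (f x₀ - A x₀ + A x)‖ = ‖f x - f x₀ - A (x - x₀)‖ := by
          rw [map_sub]; congr 1; abel
      _ ≤ δ * ‖x - x₀‖ := (hball (hsub hx)).2
      _ ≤ δ * ρ := by gcongr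
  have hedge := abs_verticalDefect_le_of_segment hω (hf.mono fun x hx => (hball (hsub hx)).1)
    (fun x hx => hcontact x (hball (hsub hx)).1) hAL hdev
  rw [Real.norm_eq_abs, Real.norm_eq_abs, abs_of_nonneg (sq_nonneg ρ)]
  calc |verticalDefect T ω (f P) (f Q)| ≤ 12 * (‖ω‖ * (L * ‖Q - P‖) * (δ * ρ)) := hedge
    _ ≤ 12 * (‖ω‖ * (L * (2 * ρ)) * (δ * ρ)) := by gcongr
    _ = 24 * (‖ω‖ * L) * δ * ρ ^ 2 := by ring
    _ ≤ ε * ρ ^ 2 := by gcongr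

theorem isotropic_of_hasFDerivAt (hω : ∀ p, ω p p = 0) {f : E → H} {x₀ : E} {U : Set E}
    (hU : U ∈ 𝓝 x₀) {L : ℝ≥0} (hf : LipschitzOnWith L f U)
    (hcontact : ∀ x ∈ U, IsContactAt T ω f x) {A : E →L[ℝ] H} (hA : HasFDerivAt f A x₀) (v w : E) :
    ω (A v) (A w) = 0 := by
  have hedge (a b : E) : (fun s : ℝ => verticalDefect T ω (f (x₀ + s • a)) (f (x₀ + s • b)))
      =o[𝓝[>] 0] fun s => s ^ 2 := by
    have hcont : Tendsto (fun s : ℝ => (x₀ + s • a, x₀ + s • b)) (𝓝[>] 0) (𝓝 (x₀, x₀)) := by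
      refine tendsto_nhdsWithin_of_tendsto_nhds ?_
      exact Continuous.tendsto' (by fun_prop) _ _ (by simp)
    refine ((isLittleO_verticalDefect hω hU hf hcontact hA).comp_tendsto hcont).trans_isBigO ?_
    refine .of_bound (‖(a, b)‖ ^ 2) (.of_forall fun s => le_of_eq ?_)
    have : (x₀ + s • a, x₀ + s • b) - (x₀, x₀) = s • (a, b) := by simp
    rw [Function.comp_apply, this, norm_smul, norm_pow, norm_mul, norm_norm, norm_norm,
      mul_pow, norm_pow, mul_comm]
  have hslope (a : E) : Tendsto (fun s : ℝ => s⁻¹ • (f (x₀ + s • a) - f x₀)) (𝓝[>] 0) (𝓝 (A a)) :=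
    (hA.hasLineDerivAt a).tendsto_slope_zero_right
  have hlim := (ω.isBoundedBilinearMap.continuous.tendsto (A v, A w)).comp
    ((hslope v).prodMk_nhds (hslope w))
  have hzero := (((hedge 0 v).add (hedge v w)).add (hedge w 0)).tendsto_div_nhds_zero.const_mul
    (-(1 / 2))
  rw [mul_zero] at hzero
  refine tendsto_nhds_unique (hlim.congr fun s => ?_) hzero
  simp only [smul_zero, add_zero, Function.comp_apply, verticalDefect_triangle hω, map_smul,
    _root_.smul_apply, smul_eq_mul]
  ring

theorem apply_eq_neg_two_mul_of_hasFDerivAt (hω : ∀ p, ω p p = 0) {f : E → H} {x₀ : E}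
    (hcontact : IsContactAt T ω f x₀) {A : E →L[ℝ] H} (hA : HasFDerivAt f A x₀) (v : E) :
    T (A v) = -2 * ω (f x₀) (A v) := by
  have hconst : HasFDerivAt (fun y => (T + 2 • ω (f x₀)) (f y)) (0 : E →L[ℝ] ℝ) x₀ := by
    refine .of_isLittleO (hcontact.neg_left.congr_left fun y => ?_)
    simp only [verticalDefect, _root_.add_apply, _root_.smul_apply, nsmul_eq_mul, hω,
      _root_.zero_apply]
    push_cast
    ring
  have hcomp := (T + 2 • ω (f x₀)).hasFDerivAt.comp x₀ hA
  have := DFunLike.congr_fun (hcomp.unique hconst) v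
  simp only [ContinuousLinearMap.comp_apply, _root_.add_apply, _root_.smul_apply, nsmul_eq_mul,
    _root_.zero_apply] at this
  push_cast at this
  linarith

end Contact

section Determinant

theorem det_one_add_smul_eq_sum_lagrange {K V ι : Type*} [Field K] [AddCommGroup V] [Module K V]
    [FiniteDimensional K V] [DecidableEq ι] {s : Finset ι} {t : ι → K} (ht : InjOn t s)
    (hs : Module.finrank K V < s.card) (A : V →ₗ[K] V) (r : K) :
    LinearMap.det (1 + r • A)
      = ∑ i ∈ s, (Lagrange.basis s t i).eval r * LinearMap.det (1 + t i • A) := by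
  classical
  set b := Module.finBasis K V
  set M := LinearMap.toMatrix b b A with hM
  set P : Polynomial K := ((Polynomial.X : Polynomial K) • M.map Polynomial.C
    + (1 : Matrix (Fin (Module.finrank K V)) (Fin (Module.finrank K V)) K).map Polynomial.C).det
    with hP
  have heval (x : K) : P.eval x = LinearMap.det (1 + x • A) := by
    rw [← LinearMap.det_toMatrix b, map_add, map_smul, LinearMap.toMatrix_one, hP,
      ← Polynomial.coe_evalRingHom, RingHom.map_det]
    congr 1
    ext i j
    by_cases hij : i = j <;> simp [hij, hM] <;> ring
  have hdeg : P.degree < s.card := by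
    refine (Polynomial.degree_le_of_natDegree_le
      (Polynomial.natDegree_det_X_add_C_le M 1)).trans_lt ?_
    rw [Fintype.card_fin]
    exact_mod_cast hs
  have hinterp := congrArg (Polynomial.eval r) (Lagrange.eq_interpolate ht hdeg)
  simpa only [heval, Lagrange.interpolate_apply, Polynomial.eval_finsetSum, Polynomial.eval_mul,
    Polynomial.eval_C, mul_comm] using hinterp

variable {E : Type*} [NormedAddCommGroup E] [NormedSpace ℝ E] [FiniteDimensional ℝ E]

theorem det_one_add_pos_of_norm_lt_one {A : E →L[ℝ] E} (hA : ‖A‖ < 1) : 0 < (1 + A).det := by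
  have hne (r : ℝ) (hr : r ∈ Icc (0 : ℝ) 1) : (1 + r • A).det ≠ 0 := by
    have hnorm : ‖-(r • A)‖ < 1 := by
      rw [norm_neg, norm_smul, Real.norm_of_nonneg hr.1]
      exact (mul_le_of_le_one_left (norm_nonneg A) hr.2).trans_lt hA
    have hunit : IsUnit (1 + r • A) := by
      simpa using isUnit_one_sub_of_norm_lt_one hnorm
    exact ((hunit.map (ContinuousLinearMap.toLinearMapRingHom)).map LinearMap.det).ne_zero
  have hcont : Continuous fun r : ℝ => (1 + r • A).det :=
    ContinuousLinearMap.continuous_det.comp (by fun_prop)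
  by_contra! hle
  have hmem : (0 : ℝ) ∈ Icc ((1 + (1 : ℝ) • A).det) ((1 + (0 : ℝ) • A).det) := by
    simpa [ContinuousLinearMap.det] using hle
  obtain ⟨r, hr, hr0⟩ := intermediate_value_Icc' zero_le_one hcont.continuousOn hmem
  exact hne r hr hr0

end Determinant

section Volume

theorem image_eq_self_of_bijective {α : Type*} {F : α → α} (hF : Function.Bijective F) {s : Set α}
    (hs : ∀ x ∉ s, F x = x) : F '' s = s := by
  rw [← compl_inj_iff, ← image_compl_eq hF]
  exact (image_congr hs).trans (image_id' _)

variable {E : Type*} [NormedAddCommGroup E] [NormedSpace ℝ E]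

theorem bijective_add_of_lipschitz_lt_one [CompleteSpace E] {u : E → E} {K : ℝ≥0}
    (hu : LipschitzWith K u) (hK : K < 1) : Function.Bijective fun x => x + u x := by
  rcases subsingleton_or_nontrivial E with hE | hE
  · exact ⟨Function.injective_of_subsingleton _, Function.surjective_to_subsingleton _⟩
  have happrox : ApproximatesLinearOn (fun x => x + u x)
      (ContinuousLinearEquiv.refl ℝ E : E →L[ℝ] E) univ K :=
    LipschitzOnWith.approximatesLinearOn (by convert hu.lipschitzOnWith; ext; simp)
  have hK' : Subsingleton E ∨
      K < ‖((ContinuousLinearEquiv.refl ℝ E).symm : E →L[ℝ] E)‖₊⁻¹ := .inr (by simpa using hK)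
  exact ⟨injOn_univ.1 (happrox.injOn hK'), happrox.surjective hK'⟩

variable [FiniteDimensional ℝ E] [MeasurableSpace E] [BorelSpace E]
  (μ : Measure E) [μ.IsAddHaarMeasure]

theorem addHaar_image_eq_zero_of_lipschitzOnWith {F : E → E} {C : ℝ≥0} {s : Set E}
    (hF : LipschitzOnWith C F s) (hs : μ s = 0) : μ (F '' s) = 0 := by
  have : Measure.IsAddHaarMeasure (μH[Module.finrank ℝ E] : Measure E) :=
    isAddHaarMeasure_hausdorffMeasure
  refine Measure.absolutelyContinuous_isAddHaarMeasure μ μH[Module.finrank ℝ E] ?_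
  refine nonpos_iff_eq_zero.1 ((hF.hausdorffMeasure_image_le (Nat.cast_nonneg _)).trans_eq ?_)
  rw [Measure.absolutelyContinuous_isAddHaarMeasure μH[Module.finrank ℝ E] μ hs, mul_zero]

theorem integral_abs_det_fderiv_of_lipschitz_injOn {F : E → E} {C : ℝ≥0} (hF : LipschitzWith C F)
    {s : Set E} (hs : MeasurableSet s) (hinj : InjOn F s) (hμ : μ (F '' s) ≠ ∞) :
    IntegrableOn (fun x => |(fderiv ℝ F x).det|) s μ ∧
      ∫ x in s, |(fderiv ℝ F x).det| ∂μ = μ.real (F '' s) := by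
  set D : Set E := s ∩ {x | DifferentiableAt ℝ F x}
  have hDm : MeasurableSet D := hs.inter (measurableSet_of_differentiableAt ℝ F)
  have hDs : D =ᵐ[μ] s := inter_ae_eq_left_of_ae_eq_univ
    (eventuallyEq_univ.2 hF.ae_differentiableAt)
  have hnull : μ (s \ D) = 0 := (ae_eq_set.1 hDs).2
  have himage : μ (F '' D) = μ (F '' s) := by
    refine measure_eq_measure_of_null_sdiff (image_mono inter_subset_left)
      (measure_mono_null (fun y hy => ?_)
        (addHaar_image_eq_zero_of_lipschitzOnWith μ hF.lipschitzOnWith hnull))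
    obtain ⟨⟨x, hx, rfl⟩, hxD⟩ := hy
    exact ⟨x, ⟨hx, fun hxD' => hxD ⟨x, hxD', rfl⟩⟩, rfl⟩
  have hderiv (x : E) (hx : x ∈ D) : HasFDerivWithinAt F (fderiv ℝ F x) D x :=
    hx.2.hasFDerivAt.hasFDerivWithinAt
  have hinjD : InjOn F D := hinj.mono inter_subset_left
  have hint := integrableOn_image_iff_integrableOn_abs_det_fderiv_smul μ hDm hderiv hinjD
    (fun _ => (1 : ℝ))
  have hval := integral_image_eq_integral_abs_det_fderiv_smul μ hDm hderiv hinjD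
    (fun _ => (1 : ℝ))
  simp only [smul_eq_mul, mul_one] at hint hval
  rw [← integrableOn_congr_set_ae hDs, ← setIntegral_congr_set hDs, ← hval, setIntegral_const,
    smul_eq_mul, mul_one, measureReal_def, measureReal_def, himage]
  exact ⟨hint.1 (integrableOn_const (by rwa [himage])), rfl⟩

theorem integral_det_one_add_fderiv_of_lipschitz_lt_one {u : E → E} {K : ℝ≥0}
    (hu : LipschitzWith K u) (hK : K < 1) {s : Set E} (hs : MeasurableSet s) (hμ : μ s ≠ ∞)
    (hus : ∀ x ∉ s, u x = 0) :
    IntegrableOn (fun x => (1 + fderiv ℝ u x).det) s μ ∧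
      ∫ x in s, (1 + fderiv ℝ u x).det ∂μ = μ.real s := by
  set F : E → E := fun x => x + u x with hF
  have hbij : Function.Bijective F := bijective_add_of_lipschitz_lt_one hu hK
  have himage : F '' s = s := image_eq_self_of_bijective hbij fun x hx => by simp [hF, hus x hx]
  have hdet : (fun x => (1 + fderiv ℝ u x).det) =ᵐ[μ.restrict s] fun x => |(fderiv ℝ F x).det| := by
    filter_upwards [ae_restrict_of_ae hu.ae_differentiableAt] with x hx
    have hFx : fderiv ℝ F x = 1 + fderiv ℝ u x := ((hasFDerivAt_id x).add hx.hasFDerivAt).fderiv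
    rw [hFx, abs_of_pos (det_one_add_pos_of_norm_lt_one
      ((norm_fderiv_le_of_lipschitz ℝ hu).trans_lt (by exact_mod_cast hK)))]
  have hFlip : LipschitzWith (1 + K) F := LipschitzWith.id.add hu
  have harea := integral_abs_det_fderiv_of_lipschitz_injOn μ hFlip hs hbij.1.injOn
    (by rwa [himage])
  rw [himage] at harea
  exact ⟨harea.1.congr hdet.symm, (integral_congr_ae hdet).trans harea.2⟩

theorem integral_det_one_add_fderiv {u : E → E} {K : ℝ≥0} (hu : LipschitzWith K u) {s : Set E}
    (hs : MeasurableSet s) (hμ : μ s ≠ ∞) (hus : ∀ x ∉ s, u x = 0) :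
    ∫ x in s, (1 + fderiv ℝ u x).det ∂μ = μ.real s := by
  -- For small `t` the map `x + t u(x)` is a bijection of `s`; both sides of the volume identity are
  -- polynomials in `t`, so it extends from such parameters to `t = 1` by interpolation.
  set t : ℕ → ℝ≥0 := fun i => (K + 1 + i)⁻¹ with ht
  have htinj : Function.Injective fun i => (t i : ℝ) := fun i j hij => by
    simpa [ht] using NNReal.coe_injective hij
  set nodes := Finset.range (Module.finrank ℝ E + 1)
  set w : ℕ → ℝ := fun i => (Lagrange.basis nodes (fun i => (t i : ℝ)) i).eval 1
  have hdet (A : E →L[ℝ] E) : (1 + A).det = ∑ i ∈ nodes, w i * (1 + (t i : ℝ) • A).det := by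
    have hlagrange := det_one_add_smul_eq_sum_lagrange (s := nodes) htinj.injOn
      (by simp [nodes]) (A : E →ₗ[ℝ] E) 1
    rwa [one_smul] at hlagrange
  have hw : ∑ i ∈ nodes, w i = 1 := by
    simpa [ContinuousLinearMap.det] using (hdet 0).symm
  have hsmall (i : ℕ) := integral_det_one_add_fderiv_of_lipschitz_lt_one μ
    (u := fun x => (t i : ℝ) • u x) (K := t i * K)
    (by simpa [Function.comp_def] using (lipschitzWith_smul (t i : ℝ)).comp hu)
    (by
      rw [ht, inv_mul_lt_iff₀ (by positivity), mul_one, add_assoc]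
      exact lt_add_of_pos_right K (by positivity))
    hs hμ (fun x hx => by rw [hus x hx, smul_zero])
  have hfderiv (i : ℕ) (x : E) :
      fderiv ℝ (fun x => (t i : ℝ) • u x) x = (t i : ℝ) • fderiv ℝ u x :=
    congrFun (fderiv_const_smul_field (t i : ℝ)) x
  simp only [hfderiv] at hsmall
  simp only [hdet (fderiv ℝ u _)]
  rw [integral_finsetSum _ fun i _ => (hsmall i).1.const_mul (w i)]
  simp_rw [integral_const_mul, (hsmall _).2]
  rw [← Finset.sum_mul, hw, one_mul]

end Volume

section Collapse

theorem lipschitzWith_smul_of_norm_le_of_ne_zero {α E : Type*} [PseudoMetricSpace α]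
    [NormedAddCommGroup E] [NormedSpace ℝ E] {χ : α → ℝ} {u : α → E} {A B S M : ℝ≥0}
    (hχ : LipschitzWith A χ) (hu : LipschitzWith B u) (hS : ∀ x, |χ x| ≤ S)
    (hM : ∀ x, χ x ≠ 0 → ‖u x‖ ≤ M) : LipschitzWith (S * B + A * M) fun x => χ x • u x := by
  have key (x y : α) (hx : χ x ≠ 0) :
      dist (χ x • u x) (χ y • u y) ≤ (S * B + A * M : ℝ≥0) * dist x y := by
    have hu' : ‖u x - u y‖ ≤ B * dist x y := dist_eq_norm (u x) (u y) ▸ hu.dist_le_mul x y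
    have hχ' : |χ x - χ y| ≤ A * dist x y := hχ.dist_le_mul x y
    calc dist (χ x • u x) (χ y • u y) = ‖χ y • (u x - u y) + (χ x - χ y) • u x‖ := by
          rw [dist_eq_norm, smul_sub, sub_smul]; congr 1; abel
      _ ≤ |χ y| * ‖u x - u y‖ + |χ x - χ y| * ‖u x‖ := by
          simpa only [norm_smul, Real.norm_eq_abs] using
            norm_add_le (χ y • (u x - u y)) ((χ x - χ y) • u x)
      _ ≤ S * (B * dist x y) + A * dist x y * M := by
          gcongr
          exacts [hS y, hM x hx]
      _ = (S * B + A * M : ℝ≥0) * dist x y := by push_cast; ring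
  refine LipschitzWith.of_dist_le_mul fun x y => ?_
  by_cases hx : χ x = 0
  · by_cases hy : χ y = 0
    · simp only [hx, hy, zero_smul, dist_self]; positivity
    · rw [dist_comm, dist_comm x y]; exact key y x hy
  · exact key x y hx

theorem max_one_div_max_eq_one {c r s : ℝ} (hr : 0 ≤ r) (hrs : r ≤ s) : max 1 (r / max c s) = 1 :=
  max_eq_left (div_le_one_of_le₀ (hrs.trans (le_max_right c s))
    ((hr.trans hrs).trans (le_max_right c s)))

theorem lipschitzWith_max_one_div_max {c : ℝ≥0} (hc : 0 < c) (r : ℝ≥0) :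
    LipschitzWith (r * (c⁻¹ * c⁻¹)) fun s : ℝ => max 1 (r / max (c : ℝ) s) := by
  refine .of_dist_le_mul fun s t => ?_
  have hpos (s : ℝ) : 0 < max (c : ℝ) s := (NNReal.coe_pos.2 hc).trans_le (le_max_left _ _)
  calc |max 1 (r / max (c : ℝ) s) - max 1 (r / max (c : ℝ) t)|
      ≤ |r / max (c : ℝ) s - r / max (c : ℝ) t| := by
        simpa using abs_max_sub_max_le_max 1 (r / max (c : ℝ) s) 1 (r / max (c : ℝ) t)
    _ = r * (|max (c : ℝ) t - max (c : ℝ) s| / (max (c : ℝ) s * max (c : ℝ) t)) := by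
        rw [div_sub_div _ _ (hpos s).ne' (hpos t).ne', abs_div,
          abs_of_pos (mul_pos (hpos s) (hpos t)), mul_comm _ (r : ℝ), ← mul_sub, abs_mul,
          NNReal.abs_eq, mul_div_assoc]
    _ ≤ r * (dist s t / (c * c)) := by
        gcongr
        · simpa [abs_sub_comm t s, Real.dist_eq] using abs_max_sub_max_le_max (c : ℝ) t c s
        · exact le_max_left _ _
        · exact le_max_left _ _
    _ = (r * (c⁻¹ * c⁻¹) : ℝ≥0) * dist s t := by push_cast; field_simp

variable {E : Type*} [NormedAddCommGroup E] [NormedSpace ℝ E]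

/-- Radial map pushing the shell `c ≤ ‖y‖ ≤ r` onto the sphere of radius `r` and fixing the exterior
of that sphere. The truncation `max c ‖y‖` keeps it Lipschitz at the origin. -/
noncomputable def radialCollapse (c r : ℝ) (y : E) : E := max 1 (r / max c ‖y‖) • y

theorem radialCollapse_of_le_norm {c r : ℝ} (hr : 0 ≤ r) {y : E} (hy : r ≤ ‖y‖) :
    radialCollapse c r y = y := by
  rw [radialCollapse, max_one_div_max_eq_one hr hy, one_smul]

theorem norm_radialCollapse {c r : ℝ} (hc : 0 < c) {y : E} (hcy : c ≤ ‖y‖) (hyr : ‖y‖ ≤ r) :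
    ‖radialCollapse c r y‖ = r := by
  have hy : 0 < ‖y‖ := hc.trans_le hcy
  rw [radialCollapse, max_eq_right hcy, max_eq_right ((one_le_div hy).2 hyr), norm_smul,
    Real.norm_of_nonneg (div_nonneg (hy.le.trans hyr) hy.le), div_mul_cancel₀ _ hy.ne']

theorem exists_lipschitzWith_radialCollapse {c r : ℝ} (hc : 0 < c) (hr : 0 ≤ r) :
    ∃ C, LipschitzWith C (radialCollapse c r : E → E) := by
  lift r to ℝ≥0 using hr
  lift c to ℝ≥0 using hc.le
  have hcoef : LipschitzWith (r * (c⁻¹ * c⁻¹)) fun y : E => max 1 (r / max (c : ℝ) ‖y‖) - 1 := by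
    simpa using ((lipschitzWith_max_one_div_max (NNReal.coe_pos.1 hc) r).comp
      (lipschitzWith_one_norm (E := E))).sub (LipschitzWith.const (1 : ℝ))
  have hbound (y : E) : |max 1 (r / max (c : ℝ) ‖y‖) - 1| ≤ (r * c⁻¹ : ℝ≥0) := by
    rw [abs_of_nonneg (sub_nonneg.2 (le_max_left _ _)), sub_le_iff_le_add, NNReal.coe_mul,
      NNReal.coe_inv, ← div_eq_mul_inv]
    refine max_le (le_add_of_nonneg_left (by positivity)) (le_add_of_le_of_nonneg ?_ zero_le_one)
    gcongr
    exact le_max_left _ _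
  have hsupp (y : E) (hy : max 1 (r / max (c : ℝ) ‖y‖) - 1 ≠ 0) : ‖y‖ ≤ r := by
    contrapose! hy
    rw [max_one_div_max_eq_one r.coe_nonneg hy.le, sub_self]
  have hsum := LipschitzWith.id.add
    (lipschitzWith_smul_of_norm_le_of_ne_zero hcoef LipschitzWith.id hbound hsupp)
  have hsplit : (radialCollapse (c : ℝ) r : E → E)
      = fun y => id y + (max 1 (r / max (c : ℝ) ‖y‖) - 1) • id y := by
    funext y
    simp [radialCollapse, sub_smul]
  exact ⟨_, hsplit ▸ hsum⟩

theorem not_surjective_of_isLocalMax_norm {F : Type*} [NormedAddCommGroup F] [NormedSpace ℝ F]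
    {R : E → F} {x : E} (hmax : IsLocalMax (fun y => ‖R y‖) x) (hx : R x ≠ 0) {A : E →L[ℝ] F}
    (hA : HasFDerivAt R A x) : ¬ Function.Surjective A := by
  intro hsurj
  obtain ⟨φ, hφ, hφx⟩ := exists_dual_vector ℝ (R x) (norm_ne_zero_iff.2 hx)
  have hφmax : IsLocalMax (fun y => φ (R y)) x := by
    filter_upwards [hmax] with y hy
    calc φ (R y) ≤ ‖φ‖ * ‖R y‖ := (le_abs_self _).trans (φ.le_opNorm (R y))
      _ ≤ φ (R x) := by rw [hφ, one_mul, hφx]; exact hy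
  have hzero := hφmax.hasFDerivAt_eq_zero (φ.hasFDerivAt.comp x hA)
  obtain ⟨v, hv⟩ := hsurj (R x)
  have hv0 : φ (A v) = 0 := DFunLike.congr_fun hzero v
  rw [hv, hφx] at hv0
  exact hx (norm_eq_zero.1 (by exact_mod_cast hv0))

theorem norm_apply_le_of_hasFDerivAt_comp {F G : Type*} [NormedAddCommGroup F] [NormedSpace ℝ F]
    [NormedAddCommGroup G] [NormedSpace ℝ G] {Φ : F → G} {K : ℝ≥0} (hΦ : LipschitzWith K Φ)
    {f : E → F} {x : E} {A : E →L[ℝ] F} {B : E →L[ℝ] G} (hA : HasFDerivAt f A x)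
    (hB : HasFDerivAt (Φ ∘ f) B x) (v : E) : ‖B v‖ ≤ K * ‖A v‖ := by
  refine le_of_tendsto_of_tendsto' (hB.hasLineDerivAt v).tendsto_slope_zero_right.norm
    ((hA.hasLineDerivAt v).tendsto_slope_zero_right.norm.const_mul (K : ℝ)) fun t => ?_
  rw [norm_smul, norm_smul, mul_left_comm, ← dist_eq_norm, ← dist_eq_norm]
  gcongr
  exact hΦ.dist_le_mul _ _

end Collapse

section InjectiveDifferential

theorem exists_lipschitzWith_approx_leftInverse {X F : Type*} [NormedAddCommGroup X]
    [NormedSpace ℝ X] [FiniteDimensional ℝ X] [NormedAddCommGroup F] [NormedSpace ℝ F]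
    [FiniteDimensional ℝ F] {f : X → F} {K : Set X} (hK : IsCompact K) (hf : ContinuousOn f K)
    (hinj : InjOn f K) {ε : ℝ} (hε : 0 < ε) :
    ∃ (G : F → X) (C : ℝ≥0), LipschitzWith C G ∧ ∀ x ∈ K, ‖G (f x) - x‖ < ε := by
  have := isCompact_iff_compactSpace.1 hK
  have hemb : Topology.IsClosedEmbedding (K.domRestrict f) :=
    hf.domRestrict.isClosedEmbedding hinj.injective
  obtain ⟨g, hg⟩ := ContinuousMap.exists_extension' hemb
    (⟨Subtype.val, continuous_subtype_val⟩ : C(K, X))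
  obtain ⟨g', hg', hgg', -⟩ := g.continuous.exists_contDiff_approx 1
    (continuous_const (y := ε)) fun _ => hε
  obtain ⟨ρ, hρ⟩ := (hK.image_of_continuousOn hf).isBounded.subset_closedBall 0
  obtain ⟨C, hC⟩ := hg'.contDiffOn.exists_lipschitzOnWith one_ne_zero
    (convex_closedBall (0 : F) ρ) (isCompact_closedBall 0 ρ)
  obtain ⟨G, hG, hGg'⟩ := hC.extend_finite_dimension
  refine ⟨G, _, hG, fun x hx => ?_⟩
  have hgx : g (f x) = x := congrFun hg ⟨x, hx⟩
  rw [← hGg' (hρ (mem_image_of_mem f hx)), ← dist_eq_norm]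
  nth_rw 2 [← hgx]
  exact hgg' (f x)

variable {E : Type*} [NormedAddCommGroup E] [NormedSpace ℝ E] [FiniteDimensional ℝ E]

theorem exists_lipschitzWith_collapse {g : E → E} {C : ℝ≥0} (hg : LipschitzWith C g) {x₀ : E}
    {r : ℝ} (hr : 0 < r) (hgr : ∀ x ∈ ball x₀ r, ‖g x - x‖ ≤ r / 8) :
    ∃ P : E → E, (∃ K, LipschitzWith K P) ∧ (∀ x ∉ ball x₀ r, P x = x) ∧
      (∀ x ∈ ball x₀ r \ closedBall x₀ (3 * r / 8), ‖P x - x₀‖ = r) ∧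
      ∃ Φ : E → E, (∃ K, LipschitzWith K Φ) ∧ EqOn P (Φ ∘ g) (ball x₀ (r / 2)) := by
  obtain ⟨K, hK⟩ := exists_lipschitzWith_radialCollapse (E := E) (c := r / 4) (by positivity) hr.le
  set Φ : E → E := fun y => x₀ + radialCollapse (r / 4) r (y - x₀) with hΦ
  have hΦlip : LipschitzWith K Φ := by
    simpa using (LipschitzWith.const x₀).add (hK.comp (LipschitzWith.id.sub (.const x₀)))
  let χ : ContDiffBump x₀ := ⟨r / 2, 3 * r / 4, by positivity, by linarith⟩
  obtain ⟨A, hA⟩ : ∃ A, LipschitzWith A χ :=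
    (χ.contDiff (n := 1)).lipschitzWith_of_hasCompactSupport χ.hasCompactSupport one_ne_zero
  have hχ0 (x : E) (hx : x ∉ ball x₀ (3 * r / 4)) : χ x = 0 :=
    χ.zero_of_le_dist (not_lt.1 hx)
  set h : E → E := fun x => x + χ x • (g x - x) with hh
  have hhlip : LipschitzWith _ h := LipschitzWith.id.add
    (lipschitzWith_smul_of_norm_le_of_ne_zero (S := 1) (M := ⟨r / 8, by positivity⟩) hA
      (hg.sub LipschitzWith.id) (fun x => by simpa [abs_of_nonneg χ.nonneg] using χ.le_one)
      fun x hx => hgr x (ball_subset_ball (by linarith) (not_imp_comm.1 (hχ0 x) hx)))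
  have hhout (x : E) (hx : x ∉ ball x₀ (3 * r / 4)) : h x = x := by simp [hh, hχ0 x hx]
  refine ⟨Φ ∘ h, ⟨_, hΦlip.comp hhlip⟩, fun x hx => ?_, fun x hx => ?_, Φ, ⟨K, hΦlip⟩,
    fun x hx => ?_⟩
  · have hxr : r ≤ ‖x - x₀‖ := by simpa [dist_eq_norm] using hx
    rw [Function.comp_apply, hhout x fun hx' => hx (ball_subset_ball (by linarith) hx')]
    simp only [hΦ, radialCollapse_of_le_norm hr.le hxr, add_sub_cancel]
  · have hfar : 3 * r / 8 < ‖x - x₀‖ := by simpa [dist_eq_norm] using hx.2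
    have hnear : ‖x - x₀‖ < r := by simpa [dist_eq_norm] using hx.1
    have hhx : ‖h x - x‖ ≤ r / 8 := by
      rw [hh, add_sub_cancel_left, norm_smul, Real.norm_of_nonneg χ.nonneg]
      exact (mul_le_of_le_one_left (norm_nonneg _) χ.le_one).trans (hgr x hx.1)
    have hlow : r / 4 ≤ ‖h x - x₀‖ := by
      linarith [norm_sub_le_norm_sub_add_norm_sub x (h x) x₀, norm_sub_rev x (h x)]
    have hupp : ‖h x - x₀‖ ≤ r := by
      by_cases hx' : x ∈ ball x₀ (3 * r / 4)
      · rw [mem_ball, dist_eq_norm] at hx'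
        linarith [norm_sub_le_norm_sub_add_norm_sub (h x) x x₀]
      · rw [hhout x hx']
        exact hnear.le
    simpa [hΦ] using norm_radialCollapse (by positivity) hlow hupp
  · have : χ x = 1 := χ.one_of_mem_closedBall (ball_subset_closedBall hx)
    simp [hh, this]

section Measure

variable [MeasurableSpace E] [BorelSpace E] (μ : Measure E) [μ.IsAddHaarMeasure]

theorem not_ae_det_fderiv_eq_zero {P : E → E} {K : ℝ≥0} (hP : LipschitzWith K P) {x₀ : E} {r : ℝ}
    (hr : 0 < r) (hPr : ∀ x ∉ ball x₀ r, P x = x) :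
    ¬ ∀ᵐ x ∂μ.restrict (ball x₀ r), (fderiv ℝ P x).det = 0 := by
  intro hzero
  have hint := integral_det_one_add_fderiv μ (hP.sub LipschitzWith.id) measurableSet_ball
    measure_ball_lt_top.ne fun x hx => sub_eq_zero.2 (hPr x hx)
  have hdet :
      (fun x => (1 + fderiv ℝ (fun y => P y - id y) x).det) =ᵐ[μ.restrict (ball x₀ r)] 0 := by
    filter_upwards [hzero, ae_restrict_of_ae hP.ae_differentiableAt] with x hx hPx
    have hsub : HasFDerivAt (fun y => P y - id y) (fderiv ℝ P x - 1) x :=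
      hPx.hasFDerivAt.sub (hasFDerivAt_id x)
    rw [hsub.fderiv, add_sub_cancel, hx, Pi.zero_apply]
  rw [integral_eq_zero_of_ae hdet] at hint
  exact (ENNReal.toReal_pos (measure_ball_pos μ x₀ hr).ne' measure_ball_lt_top.ne).ne hint

theorem exists_lipschitzWith_not_ae_det_fderiv_comp_eq_zero {g : E → E} {C : ℝ≥0}
    (hg : LipschitzWith C g) {x₀ : E} {r : ℝ} (hr : 0 < r)
    (hgr : ∀ x ∈ ball x₀ r, ‖g x - x‖ ≤ r / 8) :
    ∃ Φ : E → E, (∃ K, LipschitzWith K Φ) ∧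
      ¬ ∀ᵐ x ∂μ, x ∈ ball x₀ (r / 2) → (fderiv ℝ (Φ ∘ g) x).det = 0 := by
  obtain ⟨P, ⟨K, hP⟩, hPout, hPsphere, Φ, hΦ, hPΦ⟩ := exists_lipschitzWith_collapse hg hr hgr
  refine ⟨Φ, hΦ, fun hzero => not_ae_det_fderiv_eq_zero μ hP hr hPout ?_⟩
  rw [ae_restrict_iff' measurableSet_ball]
  filter_upwards [hzero, hP.ae_differentiableAt] with x hx hPx hxr
  by_cases hx2 : x ∈ ball x₀ (r / 2)
  · rw [(hPΦ.eventuallyEq_of_mem (isOpen_ball.mem_nhds hx2)).fderiv_eq]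
    exact hx hx2
  · set S : Set E := ball x₀ r \ closedBall x₀ (3 * r / 8)
    have hxS : S ∈ 𝓝 x := (isOpen_ball.sdiff isClosed_closedBall).mem_nhds
      ⟨hxr, fun h => hx2 (closedBall_subset_ball (by linarith) h)⟩
    have hmax : IsLocalMax (fun y => ‖P y - x₀‖) x := by
      filter_upwards [hxS] with y hy
      rw [hPsphere y hy, hPsphere x (mem_of_mem_nhds hxS)]
    have hne : P x - x₀ ≠ 0 := by
      rw [← norm_pos_iff, hPsphere x (mem_of_mem_nhds hxS)]
      exact hr
    by_contra hdet
    exact not_surjective_of_isLocalMax_norm hmax hne (hPx.hasFDerivAt.sub_const x₀)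
      (ContinuousLinearMap.toContinuousLinearEquivOfDetNeZero _ hdet).surjective

end Measure

variable {F : Type*} [NormedAddCommGroup F] [NormedSpace ℝ F] [FiniteDimensional ℝ F]

theorem exists_hasFDerivAt_injective_of_injOn_closedBall {f : E → F} {L : ℝ≥0}
    (hf : LipschitzWith L f) {x₀ : E} {r : ℝ} (hr : 0 < r) (hinj : InjOn f (closedBall x₀ r)) :
    ∃ x ∈ ball x₀ r, ∃ A : E →L[ℝ] F, HasFDerivAt f A x ∧ Function.Injective A := by
  let _ : MeasurableSpace E := borel E
  have : BorelSpace E := ⟨rfl⟩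
  obtain ⟨G, C, hG, hGf⟩ := exists_lipschitzWith_approx_leftInverse (isCompact_closedBall x₀ r)
    hf.continuous.continuousOn hinj (ε := r / 8) (by positivity)
  obtain ⟨Φ, ⟨K, hΦ⟩, hdet⟩ := exists_lipschitzWith_not_ae_det_fderiv_comp_eq_zero
    Measure.addHaar (hG.comp hf) hr fun x hx => (hGf x (ball_subset_closedBall hx)).le
  contrapose! hdet
  have hΦG : LipschitzWith (K * C) (Φ ∘ G) := hΦ.comp hG
  filter_upwards [hf.ae_differentiableAt, (hΦG.comp hf).ae_differentiableAt] with x hfx hΦx hxr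
  have hker := hdet x (ball_subset_ball (by linarith) hxr) _ hfx.hasFDerivAt
  by_contra hne
  refine hker ((injective_iff_map_eq_zero _).2 fun v hv => ?_)
  have hbound := norm_apply_le_of_hasFDerivAt_comp hΦG hfx.hasFDerivAt hΦx.hasFDerivAt v
  rw [hv, norm_zero, mul_zero] at hbound
  refine (ContinuousLinearMap.toContinuousLinearEquivOfDetNeZero _ hne).injective ?_
  rw [map_zero]
  exact norm_le_zero_iff.1 hbound

theorem exists_hasFDerivAt_injective_of_injOn {f : E → F} {U : Set E} (hU : IsOpen U)
    (hne : U.Nonempty) (hf : LocallyLipschitzOn U f) (hinj : InjOn f U) :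
    ∃ x ∈ U, ∃ A : E →L[ℝ] F, HasFDerivAt f A x ∧ Function.Injective A := by
  obtain ⟨x₀, hx₀⟩ := hne
  obtain ⟨r, hr, hrU⟩ := Metric.nhds_basis_closedBall.mem_iff.1 (hU.mem_nhds hx₀)
  obtain ⟨L, hL⟩ := (hf.mono hrU).exists_lipschitzOnWith_of_compact (isCompact_closedBall x₀ r)
  obtain ⟨f', hf', hff'⟩ := hL.extend_finite_dimension
  obtain ⟨x, hx, A, hA, hAinj⟩ :=
    exists_hasFDerivAt_injective_of_injOn_closedBall hf' hr ((hinj.mono hrU).congr hff')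
  refine ⟨x, hrU (ball_subset_closedBall hx), A, hA.congr_of_eventuallyEq ?_, hAinj⟩
  exact hff'.eventuallyEq_of_mem (closedBall_mem_nhds_of_mem hx)

end InjectiveDifferential

section Isotropic

theorem two_mul_finrank_le_of_le_orthogonal {K V : Type*} [Field K] [AddCommGroup V] [Module K V]
    [FiniteDimensional K V] {B : LinearMap.BilinForm K V} {W : Submodule K V}
    (hW : W ≤ B.orthogonal W) (hker : W ⊓ LinearMap.ker B = ⊥) :
    2 * Module.finrank K W ≤ Module.finrank K V := by
  have hadd := LinearMap.BilinForm.finrank_add_finrank_orthogonal' (B := B) W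
  rw [hker, finrank_bot, add_zero] at hadd
  have hle := Submodule.finrank_mono hW
  omega

variable {E H : Type*} [NormedAddCommGroup E] [NormedSpace ℝ E] [FiniteDimensional ℝ E]
  [NormedAddCommGroup H] [NormedSpace ℝ H] [FiniteDimensional ℝ H]

theorem not_injOn_of_isContactAt {T : H →L[ℝ] ℝ} {ω : H →L[ℝ] H →L[ℝ] ℝ} (hω : ∀ p, ω p p = 0)
    (hnd : ∀ v, T v = 0 → ω v = 0 → v = 0) (hdim : Module.finrank ℝ H < 2 * Module.finrank ℝ E)
    {Ω : Set E} (hΩ : IsOpen Ω) (hne : Ω.Nonempty) {f : E → H} (hlip : LocallyLipschitzOn Ω f)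
    (hcontact : ∀ x ∈ Ω, IsContactAt T ω f x) : ¬ InjOn f Ω := by
  intro hinj
  obtain ⟨x, hx, A, hA, hAinj⟩ := exists_hasFDerivAt_injective_of_injOn hΩ hne hlip hinj
  obtain ⟨L, U, hU, hL⟩ := hlip hx
  rw [hΩ.nhdsWithin_eq hx] at hU
  have hiso : A.range ≤ LinearMap.BilinForm.orthogonal ω.toLinearMap₁₂ A.range := by
    rintro _ ⟨w, rfl⟩ _ ⟨v, rfl⟩
    exact isotropic_of_hasFDerivAt hω (inter_mem hU (hΩ.mem_nhds hx)) (hL.mono inter_subset_left)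
      (fun y hy => hcontact y hy.2) hA v w
  have hker : A.range ⊓ LinearMap.ker ω.toLinearMap₁₂ = ⊥ := by
    refine (Submodule.eq_bot_iff _).2 ?_
    rintro _ ⟨⟨v, rfl⟩, hv⟩
    have hωv : ω (A v) = 0 := by
      ext p
      exact DFunLike.congr_fun hv p
    have hskew : ω (f x) (A v) = 0 := by
      have hsum := hω (f x + A v)
      simpa only [map_add, _root_.add_apply, hω, hωv, _root_.zero_apply, zero_add, add_zero]
        using hsum
    exact hnd _ (by
      simpa [hskew] using apply_eq_neg_two_mul_of_hasFDerivAt hω (hcontact x hx) hA v) hωv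
  have hle := two_mul_finrank_le_of_le_orthogonal hiso hker
  rw [LinearMap.finrank_range_of_inj hAinj] at hle
  exact hdim.not_ge hle

end Isotropic

section Heisenberg

/-- The standard symplectic form on the horizontal coordinates of `ℝ^{2n+1}`, as a continuous
bilinear form for use with `verticalDefect`. -/
noncomputable def heisOmega (n : ℕ) : Heis n →L[ℝ] Heis n →L[ℝ] ℝ :=
  ∑ j : Fin n,
    ((EuclideanSpace.proj (𝕜 := ℝ) (xIdx n j)).smulRight (EuclideanSpace.proj (yIdx n j))
      - (EuclideanSpace.proj (𝕜 := ℝ) (yIdx n j)).smulRight (EuclideanSpace.proj (xIdx n j)))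

theorem heisOmega_apply (n : ℕ) (p q : Heis n) :
    heisOmega n p q =
      ∑ j : Fin n, (p (xIdx n j) * q (yIdx n j) - p (yIdx n j) * q (xIdx n j)) := by
  simp [heisOmega]

theorem heisOmega_self (n : ℕ) (p : Heis n) : heisOmega n p p = 0 := by
  rw [heisOmega_apply]
  exact Finset.sum_eq_zero fun j _ => by ring

theorem heisOmega_single_yIdx (n : ℕ) (v : Heis n) (j : Fin n) :
    heisOmega n v (EuclideanSpace.single (yIdx n j) 1) = v (xIdx n j) := by
  have hxy (i : Fin n) : xIdx n i ≠ yIdx n j := by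
    simp only [xIdx, yIdx, ne_eq, Fin.mk.injEq]; omega
  have hyy (i : Fin n) : yIdx n i = yIdx n j ↔ i = j := by simp [yIdx, Fin.ext_iff]
  simp [heisOmega_apply, hxy, hyy]

theorem heisOmega_single_xIdx (n : ℕ) (v : Heis n) (j : Fin n) :
    heisOmega n v (EuclideanSpace.single (xIdx n j) 1) = -v (yIdx n j) := by
  have hyx (i : Fin n) : yIdx n i ≠ xIdx n j := by
    simp only [xIdx, yIdx, ne_eq, Fin.mk.injEq]; omega
  have hxx (i : Fin n) : xIdx n i = xIdx n j ↔ i = j := by simp [xIdx, Fin.ext_iff]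
  simp [heisOmega_apply, hyx, hxx]

theorem eq_zero_of_heisOmega_eq_zero (n : ℕ) {v : Heis n} (ht : v (tIdx n) = 0)
    (hv : heisOmega n v = 0) : v = 0 := by
  have hx (j : Fin n) : v (xIdx n j) = 0 := by rw [← heisOmega_single_yIdx, hv, _root_.zero_apply]
  have hy (j : Fin n) : v (yIdx n j) = 0 := by
    rw [← neg_eq_zero, ← heisOmega_single_xIdx, hv, _root_.zero_apply]
  ext i
  obtain hi | hi : i.1 < 2 * n ∨ i.1 = 2 * n := by omega
  · obtain ⟨j, hj | hj⟩ := Nat.even_or_odd' i.1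
    · exact (congrArg v (Fin.ext hj)).trans (hx ⟨j, by omega⟩)
    · exact (congrArg v (Fin.ext hj)).trans (hy ⟨j, by omega⟩)
  · exact (congrArg v (Fin.ext hi)).trans ht

theorem abs_verticalDefect_le_dK_sq (n : ℕ) (p q : Heis n) :
    |verticalDefect (EuclideanSpace.proj (tIdx n)) (heisOmega n) p q| ≤ dK n p q ^ 2 := by
  have hdefect : verticalDefect (EuclideanSpace.proj (tIdx n)) (heisOmega n) p q =
      p (tIdx n) - q (tIdx n)
        + 2 * ∑ j : Fin n, (q (xIdx n j) * p (yIdx n j) - p (xIdx n j) * q (yIdx n j)) := by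
    rw [verticalDefect, heisOmega_apply, sub_eq_add_neg, ← mul_neg, ← Finset.sum_neg_distrib]
    simp only [PiLp.proj_apply, neg_sub, mul_comm]
  rw [hdefect, dK]
  set a := ∑ j : Fin n, ((p (xIdx n j) - q (xIdx n j))^2 + (p (yIdx n j) - q (yIdx n j))^2)
  set τ := p (tIdx n) - q (tIdx n)
        + 2 * ∑ j : Fin n, (q (xIdx n j) * p (yIdx n j) - p (xIdx n j) * q (yIdx n j))
  calc |τ| ≤ √(a ^ 2 + τ ^ 2) := Real.abs_le_sqrt (le_add_of_nonneg_left (sq_nonneg a))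
    _ = ((a ^ 2 + τ ^ 2) ^ ((1 : ℝ) / 4)) ^ 2 := by
      rw [← Real.rpow_mul_natCast (by positivity), Real.sqrt_eq_rpow]
      norm_num

theorem isContactAt_of_dK_isLittleO {E : Type*} [NormedAddCommGroup E] [NormedSpace ℝ E] {n : ℕ}
    {f : E → Heis n} {x : E}
    (hf : (fun y => dK n (f x) (f y)) =o[𝓝 x] fun y => dist x y ^ ((1 : ℝ) / 2)) :
    IsContactAt (EuclideanSpace.proj (tIdx n)) (heisOmega n) f x := by
  have hdefect : (fun y => verticalDefect (EuclideanSpace.proj (tIdx n)) (heisOmega n) (f x) (f y))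
      =O[𝓝 x] fun y => dK n (f x) (f y) ^ 2 :=
    .of_norm_le fun y => abs_verticalDefect_le_dK_sq n (f x) (f y)
  refine (hdefect.trans_isLittleO (hf.pow two_pos)).trans_isBigO
    (.of_bound' (.of_forall fun y => ?_))
  rw [← Real.sqrt_eq_rpow, Real.sq_sqrt dist_nonneg, Real.norm_of_nonneg dist_nonneg, dist_comm,
    dist_eq_norm]

theorem isLittleO_of_le_mul_modulus {X : Type*} [PseudoMetricSpace X] {u g : X → ℝ} {β : ℝ → ℝ}
    {x : X} (hβ : ContinuousWithinAt β (Ici 0) 0) (hβ0 : β 0 = 0) (hu : ∀ y, 0 ≤ u y)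
    (hug : ∀ᶠ y in 𝓝 x, u y ≤ g y * β (dist x y)) : u =o[𝓝 x] g := by
  have hdist : Tendsto (fun y => dist x y) (𝓝 x) (𝓝[≥] 0) :=
    tendsto_nhdsWithin_iff.2 ⟨Continuous.tendsto' (by fun_prop) _ _ (dist_self x),
      .of_forall fun _ => dist_nonneg⟩
  have hβdist : (fun y => β (dist x y)) =o[𝓝 x] fun _ => (1 : ℝ) :=
    (isLittleO_one_iff ℝ).2 (by simpa only [hβ0] using! hβ.tendsto.comp hdist)
  have hO : u =O[𝓝 x] fun y => g y * β (dist x y) := by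
    refine .of_bound' (hug.mono fun y hy => ?_)
    rw [Real.norm_of_nonneg (hu y)]
    exact hy.trans (le_abs_self _)
  simpa using hO.trans_isLittleO ((isBigO_refl g (𝓝 x)).mul_isLittleO hβdist)

theorem not_injective_of_locally_lipschitz_holder_general {E : Type*} [NormedAddCommGroup E]
    [NormedSpace ℝ E] [FiniteDimensional ℝ E] {n : ℕ} (hn : n < Module.finrank ℝ E) {Ω : Set E}
    (hΩ : IsOpen Ω) (hne : Ω.Nonempty) {f : E → Heis n} (hlip : LocallyLipschitzOn Ω f)
    (hholder : ∀ x ∈ Ω,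
      (fun y => dK n (f x) (f y)) =o[𝓝 x] fun y => dist x y ^ ((1 : ℝ) / 2)) :
    ¬ InjOn f Ω :=
  not_injOn_of_isContactAt (heisOmega_self n) (fun _ => eq_zero_of_heisOmega_eq_zero n)
    (by rw [finrank_euclideanSpace_fin]; omega) hΩ hne hlip
    fun x hx => isContactAt_of_dK_isLittleO (hholder x hx)

end Heisenberg

/-- For `k > n ≥ 1` and `Ω ⊆ ℝ^k` nonempty open, a map
`f : Ω → ℝ^{2n+1}` which is locally Lipschitz for the Euclidean metrics and of class
`C^{0,(1/2)+}` into `(ℝ^{2n+1}, d_K)` cannot be injective. -/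
theorem not_injective_of_locally_lipschitz_holder (n k : ℕ) (hn : 0 < n) (hk : n < k)
    (Ω : Set (EuclideanSpace ℝ (Fin k))) (hΩ : IsOpen Ω) (hne : Ω.Nonempty)
    (f : EuclideanSpace ℝ (Fin k) → Heis n)
    (hlip : ∀ x ∈ Ω, ∃ ε > (0:ℝ), ∃ L : ℝ≥0, LipschitzOnWith L f (Metric.ball x ε ∩ Ω))
    (β : ℝ → ℝ)
    (hβc : ContinuousOn β (Set.Ici 0)) (hβm : MonotoneOn β (Set.Ici 0))
    (hβ0 : β 0 = 0) (hβnn : ∀ t, 0 ≤ t → 0 ≤ β t)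
    (hHolder : ∀ x ∈ Ω, ∀ y ∈ Ω,
      dK n (f x) (f y) ≤ dist x y ^ ((1:ℝ)/2) * β (dist x y)) :
    ¬ Set.InjOn f Ω := by
  have hlip' : LocallyLipschitzOn Ω f := fun x hx =>
    let ⟨_, hε, L, hL⟩ := hlip x hx
    ⟨L, _, inter_mem (mem_nhdsWithin_of_mem_nhds (ball_mem_nhds x hε)) self_mem_nhdsWithin, hL⟩
  refine not_injective_of_locally_lipschitz_holder_general (by simpa using hk) hΩ hne hlip' ?_
  exact fun x hx => isLittleO_of_le_mul_modulus (hβc 0 self_mem_Ici) hβ0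
    (fun _ => Real.rpow_nonneg (by positivity) _)
    (eventually_of_mem (hΩ.mem_nhds hx) (hHolder x hx))
end

section
/- Let k and n be positive integers, let Ω ⊆ ℝ^k be open, and let f = (f^{x_1}, f^{y_1}, …, f^{x_n}, f^{y_n}, f^t) : Ω → ℝ^{2n+1}. Suppose there exists a continuous non-decreasing function β : [0,∞) → [0,∞) with β(0) = 0 such that d_K(f(x), f(y)) ≤ |x − y|^{1/2} β(|x − y|) for all x, y ∈ Ω. If all the component functions f^{x_i} and f^{y_i}, i = 1, …, n, are differentiable at a point x₀ ∈ Ω, then f^t is also differentiable at x₀ and its derivative is df^t_{x₀} = 2∑_{i=1}^n (f^{y_i}(x₀) df^{x_i}_{x₀} − f^{x_i}(x₀) df^{y_i}_{x₀}); equivalently, the image of the derivative df_{x₀} lies in ker α(f(x₀)). -/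
open MeasureTheory Metric Set
open scoped ENNReal NNReal

/-!
The `t`-coordinate `τ(x)` of `f(x₀)⁻¹ * f(x)` is at most `d_K(f(x), f(x₀))²` in absolute value.
A bound `d_K(f(x), f(x₀)) = o(|x - x₀|^{1/2})` therefore makes `τ(x) = o(|x - x₀|)`, that is, `τ`
has derivative zero at `x₀`. But `f^t - τ` is, up to a constant, a linear combination of the
horizontal components of `f` whose coefficients are read off from `f(x₀)`.
-/

open Asymptotics Filter
open scoped Topology

theorem isLittleO_dist_rpow_of_norm_le_modulus {X F : Type*} [PseudoMetricSpace X] [Norm F]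
    {s : Set X} {u : X → F} {x₀ : X} {a : ℝ} {β : ℝ → ℝ} (hβ : Tendsto β (𝓝[≥] 0) (𝓝 0))
    (hu : ∀ᶠ x in 𝓝[s] x₀, ‖u x‖ ≤ dist x x₀ ^ a * β (dist x x₀)) :
    u =o[𝓝[s] x₀] fun x => dist x x₀ ^ a := by
  have hdist : Tendsto (fun x => dist x x₀) (𝓝[s] x₀) (𝓝[≥] 0) :=
    tendsto_nhdsWithin_iff.2
      ⟨tendsto_iff_dist_tendsto_zero.1 (tendsto_id'.2 nhdsWithin_le_nhds),
        .of_forall fun _ => dist_nonneg⟩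
  have hmul := (isBigO_refl (fun x => dist x x₀ ^ a) (𝓝[s] x₀)).mul_isLittleO
    ((isLittleO_one_iff ℝ).2 (hβ.comp hdist))
  simp only [mul_one] at hmul
  exact (IsBigO.of_norm_eventuallyLE hu).trans_isLittleO hmul

theorem dK_nonneg (n : ℕ) (p q : Heis n) : 0 ≤ dK n p q := by
  unfold dK
  positivity

/-- The `t`-coordinate of `q⁻¹ * p` for the group law of `ℍ^n` that makes `dK` left invariant: the
vertical part of the Korányi distance. -/
def verticalDisplacement (n : ℕ) (p q : Heis n) : ℝ :=
  p (tIdx n) - q (tIdx n)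
    + 2 * ∑ j : Fin n, (q (xIdx n j) * p (yIdx n j) - p (xIdx n j) * q (yIdx n j))

theorem verticalDisplacement_self (n : ℕ) (p : Heis n) : verticalDisplacement n p p = 0 := by
  simp [verticalDisplacement]

theorem t_eq_verticalDisplacement_add (n : ℕ) (p q : Heis n) :
    p (tIdx n) = verticalDisplacement n p q
      + ∑ j : Fin n, (2 * q (yIdx n j) * p (xIdx n j) - 2 * q (xIdx n j) * p (yIdx n j))
      + q (tIdx n) := by
  have hsum : ∑ j : Fin n, (2 * q (yIdx n j) * p (xIdx n j) - 2 * q (xIdx n j) * p (yIdx n j))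
      = -(2 * ∑ j : Fin n, (q (xIdx n j) * p (yIdx n j) - p (xIdx n j) * q (yIdx n j))) := by
    rw [Finset.mul_sum, ← Finset.sum_neg_distrib]
    exact Finset.sum_congr rfl fun j _ => by ring
  rw [hsum, verticalDisplacement]
  ring

theorem abs_verticalDisplacement_le_dK_sq (n : ℕ) (p q : Heis n) :
    |verticalDisplacement n p q| ≤ dK n p q ^ 2 := by
  have hdK : dK n p q ^ 2 =
      √((∑ j : Fin n, ((p (xIdx n j) - q (xIdx n j)) ^ 2 + (p (yIdx n j) - q (yIdx n j)) ^ 2)) ^ 2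
        + verticalDisplacement n p q ^ 2) := by
    rw [dK, ← Real.rpow_mul_natCast (by positivity), Real.sqrt_eq_rpow, verticalDisplacement]
    norm_num
  rw [hdK]
  exact Real.abs_le_sqrt (le_add_of_nonneg_left (sq_nonneg _))

section Differentiability

variable {E : Type*} [NormedAddCommGroup E] [NormedSpace ℝ E] {n : ℕ} {f : E → Heis n}
  {s : Set E} {x₀ : E}

theorem hasFDerivWithinAt_verticalDisplacement_zero
    (hf : (fun x => dK n (f x) (f x₀)) =o[𝓝[s] x₀] fun x => dist x x₀ ^ ((1 : ℝ) / 2)) :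
    HasFDerivWithinAt (fun x => verticalDisplacement n (f x) (f x₀)) (0 : E →L[ℝ] ℝ) s x₀ := by
  have hle : (fun x => verticalDisplacement n (f x) (f x₀)) =O[𝓝[s] x₀]
      fun x => dK n (f x) (f x₀) ^ 2 :=
    .of_norm_le fun x => abs_verticalDisplacement_le_dK_sq n (f x) (f x₀)
  have hsq : (fun x => dK n (f x) (f x₀) ^ 2) =o[𝓝[s] x₀] fun x => ‖x - x₀‖ := by
    simpa only [← Real.sqrt_eq_rpow, Real.sq_sqrt dist_nonneg, ← dist_eq_norm] using
      hf.pow two_pos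
  refine .of_isLittleO ?_
  simpa only [verticalDisplacement_self, sub_zero, zero_apply] using
    (hle.trans_isLittleO hsq).of_norm_right

theorem t_component_differentiable_of_holder_general {dx dy : Fin n → E →L[ℝ] ℝ}
    (hf : (fun x => dK n (f x) (f x₀)) =o[𝓝[s] x₀] fun x => dist x x₀ ^ ((1 : ℝ) / 2))
    (hx : ∀ j, HasFDerivWithinAt (fun x => f x (xIdx n j)) (dx j) s x₀)
    (hy : ∀ j, HasFDerivWithinAt (fun x => f x (yIdx n j)) (dy j) s x₀) :
    HasFDerivWithinAt (fun x => f x (tIdx n))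
      (∑ j : Fin n, ((2 * f x₀ (yIdx n j)) • dx j - (2 * f x₀ (xIdx n j)) • dy j)) s x₀ := by
  have hhoriz : HasFDerivWithinAt
      (fun x => ∑ j : Fin n,
        (2 * f x₀ (yIdx n j) * f x (xIdx n j) - 2 * f x₀ (xIdx n j) * f x (yIdx n j)))
      (∑ j : Fin n, ((2 * f x₀ (yIdx n j)) • dx j - (2 * f x₀ (xIdx n j)) • dy j)) s x₀ :=
    .fun_sum fun j _ => ((hx j).const_mul _).sub ((hy j).const_mul _)
  have hsum := ((hasFDerivWithinAt_verticalDisplacement_zero hf).add hhoriz).add_const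
    (f x₀ (tIdx n))
  rw [zero_add] at hsum
  exact hsum.congr_of_eventuallyEq
    (.of_forall fun x => t_eq_verticalDisplacement_add n (f x) (f x₀))
    (t_eq_verticalDisplacement_add n (f x₀) (f x₀))

end Differentiability

/-- If `f : Ω → ℍ^n` is of class `C^{0,(1/2)+}` into `(ℝ^{2n+1}, d_K)`
and all horizontal components `f^{x_i}, f^{y_i}` are differentiable at `x₀ ∈ Ω`, then
`f^t` is differentiable at `x₀` with derivative
`df^t = 2∑ (f^{y_i}(x₀) df^{x_i} − f^{x_i}(x₀) df^{y_i})`, i.e. the image of `df_{x₀}`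
lies in `ker α(f(x₀))`. -/
theorem t_component_differentiable_of_holder (n k : ℕ) (hn : 0 < n) (hk : 0 < k)
    (Ω : Set (EuclideanSpace ℝ (Fin k))) (hΩ : IsOpen Ω)
    (f : EuclideanSpace ℝ (Fin k) → Heis n)
    (β : ℝ → ℝ)
    (hβc : ContinuousOn β (Set.Ici 0)) (hβm : MonotoneOn β (Set.Ici 0))
    (hβ0 : β 0 = 0) (hβnn : ∀ t, 0 ≤ t → 0 ≤ β t)
    (hHolder : ∀ x ∈ Ω, ∀ y ∈ Ω,
      dK n (f x) (f y) ≤ dist x y ^ ((1:ℝ)/2) * β (dist x y))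
    (x₀ : EuclideanSpace ℝ (Fin k)) (hx₀ : x₀ ∈ Ω)
    (hdiff : ∀ j : Fin n,
      DifferentiableAt ℝ (fun x => f x (xIdx n j)) x₀ ∧
      DifferentiableAt ℝ (fun x => f x (yIdx n j)) x₀) :
    HasFDerivAt (fun x => f x (tIdx n))
      (∑ j : Fin n,
        ((2 * f x₀ (yIdx n j)) • fderiv ℝ (fun x => f x (xIdx n j)) x₀
          - (2 * f x₀ (xIdx n j)) • fderiv ℝ (fun x => f x (yIdx n j)) x₀))
      x₀ := by
  have hβ : Tendsto β (𝓝[≥] 0) (𝓝 0) := by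
    simpa only [hβ0] using (hβc 0 self_mem_Ici).tendsto
  have hdK : (fun x => dK n (f x) (f x₀)) =o[𝓝[Ω] x₀] fun x => dist x x₀ ^ ((1 : ℝ) / 2) := by
    refine isLittleO_dist_rpow_of_norm_le_modulus hβ (eventually_mem_nhdsWithin.mono fun x hx => ?_)
    exact (Real.norm_of_nonneg (dK_nonneg n _ _)).trans_le (hHolder x hx x₀ hx₀)
  exact (t_component_differentiable_of_holder_general hdK
    (fun j => (hdiff j).1.hasFDerivAt.hasFDerivWithinAt)
    (fun j => (hdiff j).2.hasFDerivAt.hasFDerivWithinAt)).hasFDerivAt (hΩ.mem_nhds hx₀)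
end
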